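/- Let n ≥ 3, let F be the free group on x_1, …, x_n, let w ∈ F, and set G = F/⟨⟨w⟩⟩, the quotient of F by the normal closure of w. Suppose that G is residually finite and that every finite-index subgroup of G is a one-relator group. Then G is 2-free: every subgroup of G generated by two elements is a free group. -/

import Mathlib

/-- A group is a one-relator group if it admits a presentation with finitely many generators
and a single relator. -/
def IsOneRelatorGroup (G : Type*) [Group G] : Prop :=
  ∃ (m : ℕ) (r : FreeGroup (Fin m)),
    Nonempty (G ≃* PresentedGroup ({r} : Set (FreeGroup (Fin m))))

/-- A group is residually finite if every nontrivial element avoids some finite-index normal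
subgroup (equivalently, has nontrivial image in some finite quotient). -/
def ResiduallyFinite (G : Type*) [Group G] : Prop :=
  ∀ g : G, g ≠ 1 → ∃ N : Subgroup G, N.Normal ∧ N.FiniteIndex ∧ g ∉ N

/-!
Let `π : F → K` be a presentation of a finite-index subgroup `K` of `G` with `m` generators and one
nontrivial relator `r`. By Hopf's formula, for `L ≤ K` of finite index the dimension of the space of
`π⁻¹(L)`-invariant characters of `⟨⟨r⟩⟩` is determined by `m`, by `[K : L]` and by the number of
generators of a one-relator presentation of `L`. If `L` is the kernel of a mod `p` character of `K`,
this leaves two possibilities: either the Euler characteristic `2 - m` is multiplied by `p`, or `L`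
obeys the Schreier formula of free groups and all invariant characters are `F`-invariant. The second
possibility would persist for all iterated kernels, so that `r` would die in every finite
`p`-quotient of `F`, contradicting that free groups are residually `p`.

Let `A ≤ G` be generated by two elements. If some subgroup `B` of `A`, open in the profinite
topology of `G`, has as many continuous mod `p` characters as a free group of rank `[A : B] + 1`,
then so do all subgroups below it in a chain of kernels, and the map from the free group of rank two
onto `A` is injective. Otherwise all continuous characters of such `B` lift to integral ones, the
number of independent characters does not depend on `p`, and it is congruent to `1` modulo the index
of every such `B`; hence it is at most `1`. As `G` is torsion-free and residually finite, a
finite-index subgroup of `A`, and then `A` itself, embeds in `ℤ`.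
-/

namespace Melnikov

open Module
open scoped commutatorElement

/-! ### Additive characters of a subgroup -/

section HomOn

variable {G k : Type*} [Group G]

/-- The group `Hom(B, k) = H¹(B; k)` of additive characters of a subgroup `B`, each one extended
by zero to a function on all of `G`. In this encoding the characters of all subgroups of `G` live
in the same module `G → k`, so that no coercions between subgroups are needed. -/
def HomOn (k : Type*) [CommRing k] (B : Subgroup G) : Submodule k (G → k) where
  carrier := {f | (∀ x, x ∉ B → f x = 0) ∧ ∀ x ∈ B, ∀ y ∈ B, f (x * y) = f x + f y}
  add_mem' := by
    rintro f g ⟨hf, hf'⟩ ⟨hg, hg'⟩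
    refine ⟨fun x hx => by simp [hf x hx, hg x hx], fun x hx y hy => ?_⟩
    simp only [Pi.add_apply, hf' x hx y hy, hg' x hx y hy]
    ring
  zero_mem' := ⟨fun _ _ => rfl, fun _ _ _ _ => by simp⟩
  smul_mem' := by
    rintro c f ⟨hf, hf'⟩
    refine ⟨fun x hx => by simp [hf x hx], fun x hx y hy => ?_⟩
    simp only [Pi.smul_apply, hf' x hx y hy, smul_add]

variable [CommRing k] {B : Subgroup G} {f g : G → k}

namespace HomOn

lemma apply_of_notMem (hf : f ∈ HomOn k B) {x : G} (hx : x ∉ B) : f x = 0 := hf.1 x hx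

lemma map_mul (hf : f ∈ HomOn k B) {x y : G} (hx : x ∈ B) (hy : y ∈ B) :
    f (x * y) = f x + f y :=
  hf.2 x hx y hy

/-- The homomorphism on `B` underlying an element of `HomOn k B`. -/
def toMonoidHom (hf : f ∈ HomOn k B) : B →* Multiplicative k :=
  MonoidHom.mk' (fun x => Multiplicative.ofAdd (f x)) fun x y => by
    simp [map_mul hf x.2 y.2]

lemma map_one (hf : f ∈ HomOn k B) : f 1 = 0 := (toMonoidHom hf).map_one

lemma map_inv (hf : f ∈ HomOn k B) {x : G} (hx : x ∈ B) : f x⁻¹ = -f x :=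
  (toMonoidHom hf).map_inv ⟨x, hx⟩

lemma map_conj (hf : f ∈ HomOn k B) {x y : G} (hx : x ∈ B) (hy : y ∈ B) :
    f (x * y * x⁻¹) = f y := by
  rw [map_mul hf (B.mul_mem hx hy) (B.inv_mem hx), map_mul hf hx hy, map_inv hf hx]
  ring

lemma map_pow (hf : f ∈ HomOn k B) {x : G} (hx : x ∈ B) (n : ℕ) : f (x ^ n) = n * f x := by
  rw [← nsmul_eq_mul]
  exact (toMonoidHom hf).map_pow ⟨x, hx⟩ n

lemma map_zpow (hf : f ∈ HomOn k B) {x : G} (hx : x ∈ B) (n : ℤ) : f (x ^ n) = n * f x := by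
  rw [← zsmul_eq_mul]
  exact (toMonoidHom hf).map_zpow ⟨x, hx⟩ n

lemma ext (hf : f ∈ HomOn k B) (hg : g ∈ HomOn k B) (h : ∀ x ∈ B, f x = g x) : f = g := by
  funext x
  by_cases hx : x ∈ B
  · exact h x hx
  · rw [apply_of_notMem hf hx, apply_of_notMem hg hx]

lemma eq_zero (hf : f ∈ HomOn k B) (h : ∀ x ∈ B, f x = 0) : f = 0 :=
  ext hf (zero_mem _) h

lemma exists_ne_zero (hf : f ∈ HomOn k B) (h0 : f ≠ 0) : ∃ x ∈ B, f x ≠ 0 := by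
  by_contra! h
  exact h0 (eq_zero hf h)

end HomOn

open Classical in
/-- The element of `HomOn k B` given by a homomorphism on `B`. -/
noncomputable def ofMonoidHom (ψ : B →* Multiplicative k) : G → k :=
  fun x => if hx : x ∈ B then (ψ ⟨x, hx⟩).toAdd else 0

lemma ofMonoidHom_apply (ψ : B →* Multiplicative k) {x : G} (hx : x ∈ B) :
    ofMonoidHom ψ x = (ψ ⟨x, hx⟩).toAdd :=
  dif_pos hx

lemma ofMonoidHom_mem (ψ : B →* Multiplicative k) : ofMonoidHom ψ ∈ HomOn k B := by
  refine ⟨fun x hx => dif_neg hx, fun x hx y hy => ?_⟩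
  rw [ofMonoidHom_apply ψ hx, ofMonoidHom_apply ψ hy, ofMonoidHom_apply ψ (B.mul_mem hx hy),
    ← toAdd_mul, ← map_mul]
  rfl

/-- Restriction of functions to the subgroup `B`, followed by extension by zero. -/
noncomputable def restrict (B : Subgroup G) : (G → k) →ₗ[k] (G → k) where
  toFun := Set.indicator (B : Set G)
  map_add' := Set.indicator_add _
  map_smul' := Set.indicator_const_smul _

lemma restrict_of_mem {x : G} (hx : x ∈ B) : restrict B f x = f x :=
  Set.indicator_of_mem (SetLike.mem_coe.2 hx) f

lemma restrict_of_notMem {x : G} (hx : x ∉ B) : restrict B f x = 0 :=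
  Set.indicator_of_notMem hx f

lemma restrict_mem_homOn (h : ∀ x ∈ B, ∀ y ∈ B, f (x * y) = f x + f y) :
    restrict B f ∈ HomOn k B :=
  ⟨fun _ hx => restrict_of_notMem hx, fun x hx y hy => by
    rw [restrict_of_mem hx, restrict_of_mem hy, restrict_of_mem (B.mul_mem hx hy), h x hx y hy]⟩

lemma restrict_mem_homOn_of_le {B' : Subgroup G} (hB : B' ≤ B) (hf : f ∈ HomOn k B) :
    restrict B' f ∈ HomOn k B' :=
  restrict_mem_homOn fun _ hx _ hy => HomOn.map_mul hf (hB hx) (hB hy)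

/-- The kernel, inside `B`, of a character of `B`. -/
def kerOn (hf : f ∈ HomOn k B) : Subgroup G where
  carrier := {x | x ∈ B ∧ f x = 0}
  mul_mem' := by
    rintro a b ⟨ha, ha'⟩ ⟨hb, hb'⟩
    exact ⟨B.mul_mem ha hb, by rw [HomOn.map_mul hf ha hb, ha', hb', add_zero]⟩
  one_mem' := ⟨B.one_mem, HomOn.map_one hf⟩
  inv_mem' := by
    rintro a ⟨ha, ha'⟩
    exact ⟨B.inv_mem ha, by rw [HomOn.map_inv hf ha, ha', neg_zero]⟩

lemma mem_kerOn {hf : f ∈ HomOn k B} {x : G} : x ∈ kerOn hf ↔ x ∈ B ∧ f x = 0 := Iff.rfl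

lemma kerOn_le (hf : f ∈ HomOn k B) : kerOn hf ≤ B := fun _ hx => hx.1

lemma kerOn_subgroupOf (hf : f ∈ HomOn k B) :
    (kerOn hf).subgroupOf B = (HomOn.toMonoidHom hf).ker := by
  ext x
  exact ⟨fun h => congrArg Multiplicative.ofAdd h.2, fun h => ⟨x.2, h⟩⟩

lemma apply_eq_zero_of_mem_closure (hf : f ∈ HomOn k B) {S : Set G} (hS : S ⊆ B)
    (h : ∀ x ∈ S, f x = 0) {x : G} (hx : x ∈ Subgroup.closure S) : f x = 0 :=
  ((Subgroup.closure_le (kerOn hf)).2 (fun y hy => ⟨hS hy, h y hy⟩) hx).2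

lemma homOn_finite [IsNoetherianRing k] (hB : B.FG) : Module.Finite k (HomOn k B) := by
  obtain ⟨S, rfl⟩ := hB
  let eval : HomOn k (Subgroup.closure (S : Set G)) →ₗ[k] (S → k) :=
    (LinearMap.funLeft k k ((↑) : S → G)).comp (Submodule.subtype _)
  refine Module.Finite.of_injective eval ((injective_iff_map_eq_zero _).2 fun f hf => ?_)
  exact Subtype.ext <| HomOn.eq_zero f.2 fun x =>
    apply_eq_zero_of_mem_closure f.2 Subgroup.subset_closure fun s hs => congrFun hf ⟨s, hs⟩

end HomOn

section ZModCharacters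

variable {G : Type*} [Group G] {p : ℕ} [Fact p.Prime] {B : Subgroup G} {χ : G → ZMod p}

lemma exists_apply_eq_one (hχ : χ ∈ HomOn (ZMod p) B) (h0 : χ ≠ 0) : ∃ t ∈ B, χ t = 1 := by
  obtain ⟨x, hx, hχx⟩ := HomOn.exists_ne_zero hχ h0
  refine ⟨x ^ (χ x)⁻¹.val, B.pow_mem hx _, ?_⟩
  rw [HomOn.map_pow hχ hx, ZMod.natCast_zmod_val, inv_mul_cancel₀ hχx]

lemma relIndex_kerOn (hχ : χ ∈ HomOn (ZMod p) B) (h0 : χ ≠ 0) : (kerOn hχ).relIndex B = p := by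
  obtain ⟨t, ht, hχt⟩ := exists_apply_eq_one hχ h0
  have hsurj : Function.Surjective (HomOn.toMonoidHom hχ) := fun y =>
    ⟨⟨t, ht⟩ ^ y.toAdd.val, Multiplicative.toAdd.injective <| by
      rw [map_pow]
      change y.toAdd.val • χ t = y.toAdd
      rw [hχt, nsmul_one, ZMod.natCast_zmod_val]⟩
  rw [Subgroup.relIndex, kerOn_subgroupOf, Subgroup.index_ker,
    MonoidHom.range_eq_top.2 hsurj, Subgroup.card_top]
  exact Nat.card_zmod p

lemma index_kerOn (hχ : χ ∈ HomOn (ZMod p) B) (h0 : χ ≠ 0) : (kerOn hχ).index = p * B.index := by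
  rw [← Subgroup.relIndex_mul_index (kerOn_le hχ), relIndex_kerOn hχ h0]

instance finiteIndex_kerOn [hB : B.FiniteIndex] (hχ : χ ∈ HomOn (ZMod p) B) :
    (kerOn hχ).FiniteIndex := by
  by_cases h0 : χ = 0
  · exact Subgroup.finiteIndex_of_le (H := B) fun x hx => ⟨hx, congrFun h0 x⟩
  · exact ⟨by rw [index_kerOn hχ h0]
              exact mul_ne_zero (Fact.out : p.Prime).ne_zero hB.index_ne_zero⟩

end ZModCharacters

/-! ### Finite `p`-groups -/

section PGroup

variable {p : ℕ} [hp : Fact p.Prime] {P : Type*} [Group P] [Finite P]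

lemma exists_normal_index_eq_prime (hP : IsPGroup p P) [Nontrivial P] :
    ∃ Q : Subgroup P, Q.Normal ∧ Q.index = p := by
  obtain ⟨n, hn, hcard⟩ := hP.nontrivial_iff_card.1 ‹_›
  obtain ⟨m, rfl⟩ := Nat.exists_eq_succ_of_ne_zero hn.ne'
  obtain ⟨Q, hQ⟩ := Sylow.exists_subgroup_card_pow_prime (G := P) p (n := m)
    (hcard ▸ pow_dvd_pow p m.le_succ)
  have hindex : Q.index = p := by
    have h := Q.card_mul_index
    rw [hQ, hcard, pow_succ] at h
    exact Nat.eq_of_mul_eq_mul_left (pow_pos hp.out.pos m) h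
  refine ⟨Q, Subgroup.normal_of_index_eq_minFac_card ?_, hindex⟩
  rw [hindex, hcard, hp.out.pow_minFac m.succ_ne_zero]

lemma exists_monoidHom_zmod_ne_one (hP : IsPGroup p P) [Nontrivial P] :
    ∃ f : P →* Multiplicative (ZMod p), f ≠ 1 := by
  obtain ⟨Q, hQ, hindex⟩ := exists_normal_index_eq_prime hP
  let e : P ⧸ Q ≃* Multiplicative (ZMod p) := mulEquivOfPrimeCardEq hindex (Nat.card_zmod p)
  refine ⟨e.toMonoidHom.comp (QuotientGroup.mk' Q), fun h => ?_⟩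
  have hQ_top : Q = ⊤ := eq_top_iff.2 fun x _ => (QuotientGroup.eq_one_iff x).1 <|
    e.map_eq_one_iff.1 (DFunLike.congr_fun h x)
  rw [hQ_top, Subgroup.index_top] at hindex
  exact hp.out.one_lt.ne hindex

lemma exists_homOn_of_map_nontrivial {Γ : Type*} [Group Γ] (φ : Γ →* P) (B : Subgroup Γ)
    (hP : IsPGroup p (B.map φ)) [Nontrivial (B.map φ)] :
    ∃ (f : Γ → ZMod p) (hf : f ∈ HomOn (ZMod p) B), f ≠ 0 ∧ B ⊓ φ.ker ≤ kerOn hf := by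
  obtain ⟨f₀, hf₀⟩ := exists_monoidHom_zmod_ne_one hP
  obtain ⟨⟨_, y, hy, rfl⟩, hfy⟩ := DFunLike.ne_iff.1 hf₀
  have hmem := ofMonoidHom_mem (f₀.comp (φ.subgroupMap B))
  have happly {x : Γ} (hx : x ∈ B) := ofMonoidHom_apply (f₀.comp (φ.subgroupMap B)) hx
  refine ⟨_, hmem, fun h => hfy ?_, fun x hx => ⟨hx.1, ?_⟩⟩
  · exact Multiplicative.toAdd.injective ((happly hy).symm.trans (congrFun h y))
  · rw [happly hx.1, MonoidHom.comp_apply,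
      show φ.subgroupMap B ⟨x, hx.1⟩ = 1 from Subtype.ext hx.2, map_one, toAdd_one]

omit [Finite P] in
lemma map_kerOn_lt {Γ : Type*} [Group Γ] {φ : Γ →* P} {B : Subgroup Γ} {f : Γ → ZMod p}
    (hf : f ∈ HomOn (ZMod p) B) (h0 : f ≠ 0) (hker : B ⊓ φ.ker ≤ kerOn hf) :
    (kerOn hf).map φ < B.map φ := by
  refine lt_of_le_of_ne (Subgroup.map_mono (kerOn_le hf)) fun h => h0 (HomOn.eq_zero hf ?_)
  intro y hy
  obtain ⟨z, hz, hzy⟩ : φ y ∈ (kerOn hf).map φ := h.ge (Subgroup.mem_map_of_mem φ hy)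
  have hφ : y * z⁻¹ ∈ φ.ker := by rw [MonoidHom.mem_ker, map_mul, map_inv, hzy, mul_inv_cancel]
  have hquot : y * z⁻¹ ∈ kerOn hf := hker ⟨B.mul_mem hy (B.inv_mem hz.1), hφ⟩
  exact ((Subgroup.mul_mem_cancel_right _ (inv_mem hz)).1 hquot).2

-- A chain of kernels of characters starting at `B` can only end once its image in `P` is
-- trivial, because a nontrivial subgroup of `P` has a nonzero character.
lemma le_ker_of_kerOn_descent (hP : IsPGroup p P) {Γ : Type*} [Group Γ] (φ : Γ →* P)
    (S : Subgroup Γ) (C : Subgroup Γ → Prop)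
    (hC : ∀ B, C B → S ≤ B → ∀ f (hf : f ∈ HomOn (ZMod p) B), f ≠ 0 → S ≤ kerOn hf ∧ C (kerOn hf))
    {B : Subgroup Γ} (hB : C B) (hSB : S ≤ B) : S ≤ φ.ker := by
  induction hc : Nat.card (B.map φ) using Nat.strong_induction_on generalizing B with
  | _ n ih =>
  rcases subsingleton_or_nontrivial (B.map φ) with htriv | hnontriv
  · exact hSB.trans ((Subgroup.map_eq_bot_iff B).1 (Subgroup.eq_bot_of_subsingleton _))
  · obtain ⟨f, hf, hf0, hker⟩ := exists_homOn_of_map_nontrivial φ B (hP.to_subgroup _)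
    obtain ⟨hS, hCker⟩ := hC B hB hSB f hf hf0
    exact ih _ (hc ▸ Set.Finite.card_lt_card (Set.toFinite _) (map_kerOn_lt hf hf0 hker))
      hCker hS rfl

end PGroup

/-! ### Free groups are residually finite `p`-groups -/

section Unitriangular

variable {p L : ℕ}

/-- Endomorphisms of `𝔽_p ^ (L + 1)` given by a strictly lower triangular matrix, characterised by
the fact that they raise the order of vanishing. -/
def IsStrictlyLower (X : Module.End (ZMod p) (Fin (L + 1) → ZMod p)) : Prop :=
  ∀ (d : ℕ) (v : Fin (L + 1) → ZMod p), (∀ j : Fin (L + 1), j.1 < d → v j = 0) →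
    ∀ j : Fin (L + 1), j.1 < d + 1 → X v j = 0

namespace IsStrictlyLower

variable {X Y : Module.End (ZMod p) (Fin (L + 1) → ZMod p)}

lemma add (hX : IsStrictlyLower X) (hY : IsStrictlyLower Y) : IsStrictlyLower (X + Y) :=
  fun d v hv j hj => by simp [hX d v hv j hj, hY d v hv j hj]

lemma mul (hX : IsStrictlyLower X) (hY : IsStrictlyLower Y) : IsStrictlyLower (X * Y) :=
  fun d v hv j hj => hX d (Y v) (fun i hi => hY d v hv i (by omega)) j hj

lemma pow_apply_eq_zero (hX : IsStrictlyLower X) (n : ℕ) (v : Fin (L + 1) → ZMod p)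
    (j : Fin (L + 1)) (hj : j.1 < n) : (X ^ n) v j = 0 := by
  induction n generalizing j with
  | zero => omega
  | succ n ih =>
    rw [pow_succ']
    exact hX n _ ih j hj

lemma pow_eq_zero (hX : IsStrictlyLower X) {n : ℕ} (hn : L + 1 ≤ n) : X ^ n = 0 :=
  LinearMap.ext fun v => funext fun j => hX.pow_apply_eq_zero n v j (by omega)

lemma one_add_pow [hp : Fact p.Prime] (hX : IsStrictlyLower X) : (1 + X) ^ p ^ (L + 1) = 1 := by
  have : CharP (Module.End (ZMod p) (Fin (L + 1) → ZMod p)) p :=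
    charP_of_injective_algebraMap (algebraMap (ZMod p) _).injective p
  rw [add_pow_char_pow_of_commute p (L + 1) (Commute.one_left X), one_pow,
    hX.pow_eq_zero (Nat.lt_pow_self hp.out.one_lt).le, add_zero]

end IsStrictlyLower

variable [hp : Fact p.Prime]

lemma pow_eq_one_of_isStrictlyLower {u : (Module.End (ZMod p) (Fin (L + 1) → ZMod p))ˣ}
    (hu : IsStrictlyLower (u.1 - 1)) : u ^ p ^ (L + 1) = 1 :=
  Units.ext <| by simpa using hu.one_add_pow

variable (p L) in
/-- The finite `p`-group of lower unitriangular automorphisms of `𝔽_p ^ (L + 1)`. -/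
def unitriangular : Subgroup (Module.End (ZMod p) (Fin (L + 1) → ZMod p))ˣ :=
  let M : Submonoid (Module.End (ZMod p) (Fin (L + 1) → ZMod p))ˣ :=
    { carrier := {u | IsStrictlyLower (u.1 - 1)}
      one_mem' := fun d v _ j _ => by simp
      mul_mem' := fun {a b} ha hb => by
        have h : (a * b).1 - 1 = (a.1 - 1) * (b.1 - 1) + (a.1 - 1) + (b.1 - 1) := by
          rw [Units.val_mul]
          simp only [sub_mul, mul_sub, mul_one, one_mul]
          abel
        change IsStrictlyLower _
        rw [h]
        exact ((ha.mul hb).add ha).add hb }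
  { M with
    inv_mem' := fun {u} hu => by
      rw [inv_eq_of_mul_eq_one_left ((pow_sub_one_mul (pow_pos hp.out.pos _).ne' u).trans
        (pow_eq_one_of_isStrictlyLower hu))]
      exact M.pow_mem hu _ }

lemma isPGroup_unitriangular : IsPGroup p (unitriangular p L) := fun u =>
  ⟨L + 1, Subtype.ext (pow_eq_one_of_isStrictlyLower u.2)⟩

instance : Finite (unitriangular p L) :=
  have : Finite (Module.End (ZMod p) (Fin (L + 1) → ZMod p)) := DFunLike.finite _
  inferInstance

end Unitriangular

section LetterOperators

variable {p L : ℕ} {α : Type*} [DecidableEq α] (lab : ℕ → Option (α × Bool))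

/-- The sum of the elementary matrices `E (j + 1) j` over the positions `j` labelled by the
letter `a`. -/
def letterShift (a : α × Bool) : Module.End (ZMod p) (Fin (L + 1) → ZMod p) where
  toFun v := Fin.cons 0 fun j : Fin L => if lab j = some a then v j.castSucc else 0
  map_add' v w := by
    funext j
    cases j using Fin.cases <;> simp [← ite_add_zero]
  map_smul' c v := by
    funext j
    cases j using Fin.cases <;> simp

variable {lab}

lemma letterShift_succ (a : α × Bool) (v : Fin (L + 1) → ZMod p) (j : Fin L) :
    letterShift lab a v j.succ = if lab j = some a then v j.castSucc else 0 := rfl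

lemma isStrictlyLower_letterShift (a : α × Bool) :
    IsStrictlyLower (letterShift lab a : Module.End (ZMod p) (Fin (L + 1) → ZMod p)) := by
  intro d v hv j hj
  cases j using Fin.cases with
  | zero => rfl
  | succ j => rw [letterShift_succ, hv j.castSucc (by simpa using hj), ite_self]

/-- The vectors `e s + (terms of lower index)`. A reduced word acts on `e 0` by producing such
vectors with larger and larger `s`. -/
def HasLeadingOne (s : ℕ) (v : Fin (L + 1) → ZMod p) : Prop :=
  (∀ j : Fin (L + 1), j.1 = s → v j = 1) ∧ ∀ j : Fin (L + 1), s < j.1 → v j = 0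

lemma hasLeadingOne_single : HasLeadingOne 0 (Pi.single (0 : Fin (L + 1)) (1 : ZMod p)) := by
  refine ⟨fun j hj => ?_, fun j hj => Pi.single_eq_of_ne (Fin.pos_iff_ne_zero.1 hj) _⟩
  rw [Fin.ext (b := 0) hj, Pi.single_eq_same]

variable [hp : Fact p.Prime]

variable (p L lab) in
/-- The unitriangular automorphism `1 + letterShift lab a`. -/
def letterUnit (a : α × Bool) : unitriangular p L :=
  ⟨Units.ofPowEqOne (1 + letterShift lab a) (p ^ (L + 1))
    (isStrictlyLower_letterShift a).one_add_pow (pow_pos hp.out.pos _).ne', by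
    change IsStrictlyLower ((1 + letterShift lab a) - 1)
    rw [add_sub_cancel_left]
    exact isStrictlyLower_letterShift a⟩

lemma letterUnit_apply (a : α × Bool) (v : Fin (L + 1) → ZMod p) (j : Fin (L + 1)) :
    (letterUnit p L lab a).1.1 v j = v j + letterShift lab a v j := rfl

variable {a : α × Bool} {s : ℕ} {v : Fin (L + 1) → ZMod p}

lemma HasLeadingOne.letterUnit_succ (hv : HasLeadingOne s v) (hs : lab s = some a) :
    HasLeadingOne (s + 1) ((letterUnit p L lab a).1.1 v) := by
  refine ⟨fun j hj => ?_, fun j hj => ?_⟩ <;> cases j using Fin.cases with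
  | zero => simp at hj
  | succ j =>
    simp only [Fin.val_succ, Nat.add_left_inj, Nat.add_lt_add_iff_right] at hj
    rw [letterUnit_apply, letterShift_succ, hv.2 j.succ (by simp; omega)]
    first
    | rw [hj, if_pos hs, hv.1 j.castSucc hj, zero_add]
    | rw [hv.2 j.castSucc hj, ite_self, add_zero]

lemma HasLeadingOne.letterUnit_of_ne (hv : HasLeadingOne (s + 1) v) (hs : lab s ≠ some a)
    (hs' : lab (s + 1) ≠ some a) : HasLeadingOne (s + 1) ((letterUnit p L lab a).1.1 v) := by
  have hshift (j : Fin (L + 1)) (hj : s + 1 ≤ j.1) : letterShift lab a v j = 0 := by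
    cases j using Fin.cases with
    | zero => rfl
    | succ j =>
      rw [letterShift_succ]
      rcases lt_trichotomy j.1 (s + 1) with hlt | heq | hgt
      · rw [if_neg ((by simp at hj; omega : j.1 = s) ▸ hs)]
      · rw [if_neg (heq ▸ hs')]
      · rw [hv.2 j.castSucc hgt, ite_self]
  refine ⟨fun j hj => ?_, fun j hj => ?_⟩
  · rw [letterUnit_apply, hshift j hj.ge, add_zero, hv.1 j hj]
  · rw [letterUnit_apply, hshift j hj.le, add_zero, hv.2 j hj]

lemma HasLeadingOne.letterUnit_inv_of_ne (hv : HasLeadingOne (s + 1) v) (hs : lab s ≠ some a)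
    (hs' : lab (s + 1) ≠ some a) : HasLeadingOne (s + 1) ((letterUnit p L lab a)⁻¹.1.1 v) := by
  have hpow (n : ℕ) : HasLeadingOne (s + 1) ((letterUnit p L lab a ^ n).1.1 v) := by
    induction n with
    | zero => exact hv
    | succ n ih =>
      rw [pow_succ']
      exact ih.letterUnit_of_ne hs hs'
  rw [inv_eq_of_mul_eq_one_left ((pow_sub_one_mul (pow_pos hp.out.pos (L + 1)).ne' _).trans
    (Subtype.ext (pow_eq_one_of_isStrictlyLower (letterUnit p L lab a).2)))]
  exact hpow _

variable (p L lab) in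
/-- The image of the generator `x` under the representation attached to the labelling `lab`. -/
def generatorImage (x : α) : unitriangular p L :=
  (letterUnit p L lab (x, false))⁻¹ * letterUnit p L lab (x, true)

lemma cond_generatorImage (a : α × Bool) :
    (bif a.2 then generatorImage p L lab a.1 else (generatorImage p L lab a.1)⁻¹) =
      (letterUnit p L lab (a.1, !a.2))⁻¹ * letterUnit p L lab a := by
  rcases a with ⟨x, _ | _⟩ <;> simp [generatorImage]

lemma hasLeadingOne_prod_generatorImage
    (hred : ∀ x ε j, lab j = some (x, ε) → lab (j + 1) ≠ some (x, !ε))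
    {l : List (α × Bool)} (hl : ∀ l₁ a l₂, l = l₁ ++ a :: l₂ → lab l₂.length = some a) :
    HasLeadingOne l.length
      ((l.map fun a => bif a.2 then generatorImage p L lab a.1
        else (generatorImage p L lab a.1)⁻¹).prod.1.1 (Pi.single 0 1)) := by
  induction l with
  | nil => exact hasLeadingOne_single
  | cons a l ih =>
    have ha : lab l.length = some a := hl [] a l rfl
    have htail := ih fun l₁ b l₂ h => hl (a :: l₁) b l₂ (by rw [h, List.cons_append])
    rw [List.map_cons, List.prod_cons, cond_generatorImage, mul_assoc]
    refine (htail.letterUnit_succ ha).letterUnit_inv_of_ne (fun h => ?_) (hred a.1 a.2 _ ha)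
    simpa using congrArg Prod.snd (Option.some.inj (ha.symm.trans h))

end LetterOperators

lemma getElem?_reverse_succ_ne {α : Type*} {l : List (α × Bool)} (hl : FreeGroup.IsReduced l)
    (x : α) (ε : Bool) (j : ℕ) (hj : l.reverse[j]? = some (x, ε)) :
    l.reverse[j + 1]? ≠ some (x, !ε) := by
  intro hj'
  have hchain : l.reverse.IsChain (fun a b => b.1 = a.1 → b.2 = a.2) := List.isChain_reverse.2 hl
  obtain ⟨_, hget⟩ := List.getElem?_eq_some_iff.1 hj
  obtain ⟨h', hget'⟩ := List.getElem?_eq_some_iff.1 hj'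
  have := List.isChain_iff_getElem.1 hchain j h'
  simp [hget, hget'] at this

theorem exists_pGroup_quotient_ne_one (p : ℕ) [Fact p.Prime] {α : Type*} {s : FreeGroup α}
    (hs : s ≠ 1) :
    ∃ (P : Type) (_ : Group P) (_ : Finite P) (φ : FreeGroup α →* P), IsPGroup p P ∧ φ s ≠ 1 := by
  classical
  set L := s.toWord.length
  set lab : ℕ → Option (α × Bool) := fun j => s.toWord.reverse[j]?
  have hL : 0 < L := List.length_pos_iff.2 (FreeGroup.toWord_eq_nil_iff.not.2 hs)
  refine ⟨unitriangular p L, inferInstance, inferInstance,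
    FreeGroup.lift (generatorImage p L lab), isPGroup_unitriangular, fun h => ?_⟩
  have hlead : HasLeadingOne L _ := hasLeadingOne_prod_generatorImage (p := p) (L := L) (lab := lab)
    (getElem?_reverse_succ_ne FreeGroup.isReduced_toWord) (l := s.toWord)
    fun l₁ a l₂ h => by simp [lab, h]
  rw [← FreeGroup.mk_toWord (x := s), FreeGroup.lift_mk] at h
  rw [h] at hlead
  have hlast : (Pi.single 0 1 : Fin (L + 1) → ZMod p) (Fin.last L) = 1 :=
    hlead.1 (Fin.last L) rfl
  rw [Pi.single_eq_of_ne (Fin.ne_of_gt (by exact hL))] at hlast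
  exact zero_ne_one hlast

/-! ### Cocycles of permutation modules and Shapiro's lemma -/

section Cocycles

variable {Γ Ω k : Type*} [Group Γ] [CommRing k]

/-- The 1-cocycles of `Γ` with values in the permutation module `Ω → k`, where `Γ` acts on `Ω`
through `α`. -/
def Cocycles (k : Type*) [CommRing k] (α : Γ →* Equiv.Perm Ω) : Submodule k (Γ → Ω → k) where
  carrier := {D | ∀ g h ω, D (g * h) ω = D g ω + D h ((α g)⁻¹ ω)}
  add_mem' := by
    intro D E hD hE g h ω
    simp only [Pi.add_apply, hD g h ω, hE g h ω]
    ring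
  zero_mem' := fun g h ω => by simp
  smul_mem' := by
    intro c D hD g h ω
    simp only [Pi.smul_apply, hD g h ω, smul_add]

variable {α : Γ →* Equiv.Perm Ω} {D : Γ → Ω → k}

namespace Cocycles

lemma map_mul (hD : D ∈ Cocycles k α) (g h : Γ) (ω : Ω) :
    D (g * h) ω = D g ω + D h ((α g)⁻¹ ω) :=
  hD g h ω

lemma map_one (hD : D ∈ Cocycles k α) (ω : Ω) : D 1 ω = 0 := by
  simpa using hD 1 1 ω

lemma map_inv (hD : D ∈ Cocycles k α) (g : Γ) (ω : Ω) : D g⁻¹ ω = -D g (α g ω) := by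
  have h := hD g⁻¹ g ω
  rw [inv_mul_cancel, map_one hD, _root_.map_inv, inv_inv] at h
  exact eq_neg_of_add_eq_zero_left h.symm

lemma map_conj (hD : D ∈ Cocycles k α) (g : Γ) {r : Γ} (hr : α r = 1) (ω : Ω) :
    D (g * r * g⁻¹) ω = D r ((α g)⁻¹ ω) := by
  rw [map_mul hD, map_mul hD, map_inv hD, _root_.map_mul, hr]
  simp

end Cocycles

lemma perm_inv_mul_apply (g h : Γ) (ω : Ω) : (α (g * h))⁻¹ ω = (α h)⁻¹ ((α g)⁻¹ ω) := by
  rw [map_mul, mul_inv_rev, Equiv.Perm.mul_apply]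

variable (k) in
/-- The coboundary map of the permutation module `Ω → k`. -/
def coboundary (α : Γ →* Equiv.Perm Ω) : (Ω → k) →ₗ[k] (Γ → Ω → k) where
  toFun u g ω := u ω - u ((α g)⁻¹ ω)
  map_add' u v := by
    funext g ω
    simp only [Pi.add_apply]
    ring
  map_smul' c u := by
    funext g ω
    simp only [Pi.smul_apply, smul_eq_mul, RingHom.id_apply]
    ring

lemma coboundary_apply (u : Ω → k) (g : Γ) (ω : Ω) :
    coboundary k α u g ω = u ω - u ((α g)⁻¹ ω) :=
  rfl

lemma coboundary_mem_cocycles (u : Ω → k) : coboundary k α u ∈ Cocycles k α := by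
  intro g h ω
  simp only [coboundary_apply, perm_inv_mul_apply]
  ring

variable (k) in
/-- The map of Shapiro's lemma: evaluation of cocycles at the point `ω₀`, restricted to `B`. It
sends cocycles to characters of `B` when `B` is the stabilizer of `ω₀`. -/
noncomputable def shapiro (B : Subgroup Γ) (ω₀ : Ω) : (Γ → Ω → k) →ₗ[k] (Γ → k) :=
  (restrict B).comp ((LinearMap.proj ω₀).compLeft Γ)

lemma shapiro_of_mem {B : Subgroup Γ} {ω₀ : Ω} {g : Γ} (hg : g ∈ B) :
    shapiro k B ω₀ D g = D g ω₀ :=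
  restrict_of_mem hg

section Stabilizer

variable {B : Subgroup Γ} {ω₀ : Ω} (hB : ∀ g, g ∈ B ↔ α g ω₀ = ω₀)

include hB

lemma perm_inv_apply_eq_of_mem {g : Γ} (hg : g ∈ B) : (α g)⁻¹ ω₀ = ω₀ := by
  rw [← map_inv]
  exact (hB _).1 (B.inv_mem hg)

lemma shapiro_mem_homOn (hD : D ∈ Cocycles k α) : shapiro k B ω₀ D ∈ HomOn k B :=
  restrict_mem_homOn fun x hx y _ => by
    change D (x * y) ω₀ = D x ω₀ + D y ω₀
    rw [Cocycles.map_mul hD, perm_inv_apply_eq_of_mem hB hx]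

lemma inv_mul_mul_mem_of_section {σ : Ω → Γ} (hσ : ∀ ω, α (σ ω) ω₀ = ω) (g : Γ) (ω : Ω) :
    (σ ω)⁻¹ * g * σ ((α g)⁻¹ ω) ∈ B := by
  rw [hB, map_mul, map_mul, Equiv.Perm.mul_apply, Equiv.Perm.mul_apply, hσ,
    Equiv.Perm.coe_inv, Equiv.apply_symm_apply, map_inv, Equiv.Perm.inv_eq_iff_eq, hσ]

variable (htr : ∀ ω, ∃ g, α g ω₀ = ω)

include htr

lemma exists_shapiro_eq {f : Γ → k} (hf : f ∈ HomOn k B) :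
    ∃ D ∈ Cocycles k α, shapiro k B ω₀ D = f := by
  choose σ hσ using htr
  have hmem := inv_mul_mul_mem_of_section hB hσ
  let D : Γ → Ω → k := fun g ω => f ((σ ω)⁻¹ * g * σ ((α g)⁻¹ ω))
  have hD : D ∈ Cocycles k α := fun g h ω => by
    change f _ = f _ + f _
    rw [← HomOn.map_mul hf (hmem g ω) (hmem h _), perm_inv_mul_apply]
    congr 1
    group
  refine ⟨D, hD, HomOn.ext (shapiro_mem_homOn hB hD) hf fun x hx => ?_⟩
  rw [shapiro_of_mem hx]
  change f _ = f x
  rw [perm_inv_apply_eq_of_mem hB hx]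
  simpa using HomOn.map_conj hf (B.inv_mem ((hB _).2 (hσ ω₀))) hx

lemma exists_coboundary_eq_of_shapiro_eq_zero (hD : D ∈ Cocycles k α)
    (h0 : shapiro k B ω₀ D = 0) : ∃ u, coboundary k α u = D := by
  choose σ hσ using htr
  refine ⟨fun ω => D (σ ω) ω, funext₂ fun g ω => ?_⟩
  have hb := inv_mul_mul_mem_of_section hB hσ g ω
  have hDb : D ((σ ω)⁻¹ * g * σ ((α g)⁻¹ ω)) ω₀ = 0 := by
    rw [← shapiro_of_mem (D := D) hb, h0, Pi.zero_apply]
  have hσω : (α (σ ω))⁻¹ ω = ω₀ := by rw [Equiv.Perm.inv_eq_iff_eq, hσ]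
  have h1 : D (g * σ ((α g)⁻¹ ω)) ω = D (σ ω) ω := by
    rw [show g * σ ((α g)⁻¹ ω) = σ ω * ((σ ω)⁻¹ * g * σ ((α g)⁻¹ ω)) by group,
      Cocycles.map_mul hD, hσω, hDb, add_zero]
  rw [Cocycles.map_mul hD] at h1
  exact (eq_sub_of_add_eq h1).symm

lemma map_shapiro_cocycles : (Cocycles k α).map (shapiro k B ω₀) = HomOn k B := by
  ext f
  constructor
  · rintro ⟨D, hD, rfl⟩
    exact shapiro_mem_homOn hB hD
  · exact exists_shapiro_eq hB htr

lemma cocycles_inf_ker_shapiro :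
    Cocycles k α ⊓ LinearMap.ker (shapiro k B ω₀) = LinearMap.range (coboundary k α) := by
  ext D
  constructor
  · rintro ⟨hD, h0⟩
    exact exists_coboundary_eq_of_shapiro_eq_zero hB htr hD h0
  · rintro ⟨u, rfl⟩
    have hu := coboundary_mem_cocycles (k := k) (α := α) u
    refine ⟨hu, HomOn.eq_zero (shapiro_mem_homOn hB hu) fun g hg => ?_⟩
    rw [shapiro_of_mem hg, coboundary_apply, perm_inv_apply_eq_of_mem hB hg, sub_self]

end Stabilizer

end Cocycles

section CocycleDimension

variable {Γ Ω k : Type*} [Group Γ] [Field k]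

lemma finrank_map_add_finrank_inf_ker {V W : Type*} [AddCommGroup V] [Module k V]
    [AddCommGroup W] [Module k W] (f : V →ₗ[k] W) (Y : Submodule k V) [Module.Finite k Y] :
    finrank k (Y.map f) + finrank k ↥(Y ⊓ LinearMap.ker f) = finrank k Y := by
  rw [← LinearMap.finrank_range_add_finrank_ker (f.domRestrict Y), LinearMap.range_domRestrict,
    LinearMap.ker_domRestrict, ← Submodule.map_comap_subtype,
    Submodule.finrank_map_subtype_eq]

variable {α : Γ →* Equiv.Perm Ω} {B : Subgroup Γ} {ω₀ : Ω}
  (hB : ∀ g, g ∈ B ↔ α g ω₀ = ω₀) (htr : ∀ ω, ∃ g, α g ω₀ = ω)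

include htr

lemma ker_coboundary :
    LinearMap.ker (coboundary k α) = Submodule.span k {(fun _ => 1 : Ω → k)} := by
  ext u
  rw [LinearMap.mem_ker, Submodule.mem_span_singleton]
  constructor
  · intro hu
    refine ⟨u ω₀, funext fun ω => ?_⟩
    obtain ⟨g, rfl⟩ := htr ω
    have h := congrFun₂ hu g (α g ω₀)
    rw [coboundary_apply, Equiv.Perm.coe_inv, Equiv.symm_apply_apply] at h
    simp [sub_eq_zero.1 h]
  · rintro ⟨c, rfl⟩
    exact funext₂ fun _ _ => sub_self _

variable [Fintype Ω]

lemma finrank_range_coboundary_add_one :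
    finrank k (LinearMap.range (coboundary k α)) + 1 = Fintype.card Ω := by
  have h := LinearMap.finrank_range_add_finrank_ker (coboundary k α)
  rwa [ker_coboundary htr, finrank_span_singleton fun h => one_ne_zero (congrFun h ω₀),
    finrank_fintype_fun_eq_card] at h

include hB

lemma finrank_add_one_le_of_le_cocycles (Y : Submodule k (Γ → Ω → k)) (hY : Y ≤ Cocycles k α)
    [Module.Finite k Y] :
    finrank k Y + 1 ≤ finrank k (Y.map (shapiro k B ω₀)) + Fintype.card Ω := by
  have hker : finrank k ↥(Y ⊓ LinearMap.ker (shapiro k B ω₀)) ≤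
      finrank k (LinearMap.range (coboundary k α)) :=
    Submodule.finrank_mono <|
      (inf_le_inf_right _ hY).trans (cocycles_inf_ker_shapiro hB htr).le
  have h1 := finrank_map_add_finrank_inf_ker (shapiro k B ω₀) Y
  have h2 := finrank_range_coboundary_add_one (k := k) htr
  lia

lemma finrank_cocycles_add_one [Module.Finite k (Cocycles k α)] :
    finrank k (Cocycles k α) + 1 = finrank k (HomOn k B) + Fintype.card Ω := by
  have h1 := finrank_map_add_finrank_inf_ker (shapiro k B ω₀) (Cocycles k α)
  have h2 := finrank_range_coboundary_add_one (k := k) htr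
  rw [map_shapiro_cocycles hB htr, cocycles_inf_ker_shapiro hB htr] at h1
  lia

end CocycleDimension

/-! ### The Schreier index formula -/

section FreeCocycles

variable {Ω k ι : Type*} [CommRing k] {α : FreeGroup ι →* Equiv.Perm Ω}

lemma mem_of_forall_of_mem (S : Subgroup (FreeGroup ι)) (h : ∀ i, FreeGroup.of i ∈ S)
    (x : FreeGroup ι) : x ∈ S := by
  have hS : (⊤ : Subgroup (FreeGroup ι)) ≤ S := by
    rw [← FreeGroup.closure_range_of, Subgroup.closure_le]
    rintro _ ⟨i, rfl⟩
    exact h i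
  exact hS (Subgroup.mem_top x)

lemma cocycle_eq_zero_of_forall_of {D : FreeGroup ι → Ω → k} (hD : D ∈ Cocycles k α)
    (h : ∀ i ω, D (FreeGroup.of i) ω = 0) : D = 0 := by
  let S : Subgroup (FreeGroup ι) :=
    { carrier := {g | ∀ ω, D g ω = 0}
      one_mem' := Cocycles.map_one hD
      mul_mem' := fun {a b} ha hb ω => by rw [Cocycles.map_mul hD, ha, hb, add_zero]
      inv_mem' := fun {a} ha ω => by rw [Cocycles.map_inv hD, ha, neg_zero] }
  exact funext₂ fun g ω => mem_of_forall_of_mem S h g ω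

/-- A cocycle taking the value `v` at `g` is the same as an affine action in which `g` acts as
translation by `v` composed with the linear action; this is the affine permutation for `v`. -/
def affinePerm (σ : Equiv.Perm Ω) (v : Ω → k) : Equiv.Perm (Ω → k) where
  toFun u ω := v ω + u (σ⁻¹ ω)
  invFun u ω := u (σ ω) - v (σ ω)
  left_inv u := by
    funext ω
    simp
  right_inv u := by
    funext ω
    simp

lemma affinePerm_mul_affinePerm (σ τ : Equiv.Perm Ω) (v w : Ω → k) :
    affinePerm σ v * affinePerm τ w = affinePerm (σ * τ) (fun ω => v ω + w (σ⁻¹ ω)) := by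
  ext u ω
  change v ω + (w _ + u _) = v ω + w _ + u _
  rw [mul_inv_rev, add_assoc, Equiv.Perm.mul_apply]

lemma affinePerm_apply_zero (σ : Equiv.Perm Ω) (v : Ω → k) : affinePerm σ v 0 = v := by
  funext ω
  exact add_zero _

lemma affinePerm_inv (σ : Equiv.Perm Ω) (v : Ω → k) :
    (affinePerm σ v)⁻¹ = affinePerm σ⁻¹ (fun ω => -v (σ ω)) := by
  ext u ω
  change u (σ ω) - v (σ ω) = -v (σ ω) + u (σ⁻¹⁻¹ ω)
  rw [inv_inv]
  ring

lemma exists_cocycle_of_eq (α : FreeGroup ι →* Equiv.Perm Ω) (c : ι → Ω → k) :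
    ∃ D ∈ Cocycles k α, ∀ i, D (FreeGroup.of i) = c i := by
  let A : FreeGroup ι →* Equiv.Perm (Ω → k) :=
    FreeGroup.lift fun i => affinePerm (α (FreeGroup.of i)) (c i)
  let S : Subgroup (FreeGroup ι) :=
    { carrier := {g | ∃ v, A g = affinePerm (α g) v}
      one_mem' := ⟨0, by
        ext u ω
        simp [affinePerm]⟩
      mul_mem' := by
        rintro a b ⟨v, hv⟩ ⟨w, hw⟩
        exact ⟨_, by rw [map_mul, map_mul, hv, hw, affinePerm_mul_affinePerm]⟩
      inv_mem' := by
        rintro a ⟨v, hv⟩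
        exact ⟨_, by rw [map_inv, map_inv, hv, affinePerm_inv]⟩ }
  have hA : ∀ i, A (FreeGroup.of i) = affinePerm (α (FreeGroup.of i)) (c i) := fun i =>
    FreeGroup.lift_apply_of
  choose D hD using mem_of_forall_of_mem S fun i => ⟨c i, hA i⟩
  have hD0 : ∀ g, A g 0 = D g := fun g => by rw [hD, affinePerm_apply_zero]
  refine ⟨D, fun g h ω => ?_, fun i => by rw [← hD0, hA, affinePerm_apply_zero]⟩
  rw [← hD0 (g * h), map_mul, hD g, hD h, affinePerm_mul_affinePerm, affinePerm_apply_zero]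

variable (k) in
/-- Cocycles on a free group correspond to arbitrary values on the generators. -/
noncomputable def cocyclesEquiv (α : FreeGroup ι →* Equiv.Perm Ω) :
    Cocycles k α ≃ₗ[k] (ι → Ω → k) :=
  LinearEquiv.ofBijective
    ((LinearMap.funLeft k (Ω → k) FreeGroup.of).comp (Cocycles k α).subtype)
    ⟨(injective_iff_map_eq_zero _).2 fun D h =>
      Subtype.ext (cocycle_eq_zero_of_forall_of D.2 fun i ω => congrFun₂ h i ω),
    fun c => by
      obtain ⟨D, hD, h⟩ := exists_cocycle_of_eq α c
      exact ⟨⟨D, hD⟩, funext h⟩⟩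

end FreeCocycles

section Schreier

variable {k ι : Type*} [Field k]

instance cocycles_finite {Ω : Type*} [Finite ι] [Finite Ω] (α : FreeGroup ι →* Equiv.Perm Ω) :
    Module.Finite k (Cocycles k α) :=
  Module.Finite.equiv (cocyclesEquiv k α).symm

variable [Fintype ι]

lemma finrank_cocycles {Ω : Type*} [Fintype Ω] (α : FreeGroup ι →* Equiv.Perm Ω) :
    finrank k (Cocycles k α) = Fintype.card ι * Fintype.card Ω := by
  rw [(cocyclesEquiv k α).finrank_eq, Module.finrank_pi_fintype]
  simp

lemma finrank_homOn_add_index (B : Subgroup (FreeGroup ι)) [B.FiniteIndex] :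
    finrank k (HomOn k B) + B.index = Fintype.card ι * B.index + 1 := by
  classical
  have := B.fintypeQuotientOfFiniteIndex
  let α := MulAction.toPermHom (FreeGroup ι) (FreeGroup ι ⧸ B)
  have hα : ∀ g, α g ((1 : FreeGroup ι) : FreeGroup ι ⧸ B) = (g : FreeGroup ι ⧸ B) := fun g =>
    congrArg _ (mul_one g)
  have hstab : ∀ g, g ∈ B ↔ α g ((1 : FreeGroup ι) : FreeGroup ι ⧸ B) = (1 : FreeGroup ι) :=
    fun g => by rw [hα, QuotientGroup.eq, mul_one, inv_mem_iff]
  have htr : ∀ ω, ∃ g, α g ((1 : FreeGroup ι) : FreeGroup ι ⧸ B) = ω := fun ω =>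
    (QuotientGroup.mk_surjective ω).imp fun g hg => (hα g).trans hg
  have h := finrank_cocycles_add_one (k := k) hstab htr
  rw [finrank_cocycles, ← Nat.card_eq_fintype_card (α := FreeGroup ι ⧸ B)] at h
  exact h.symm

lemma finrank_homOn_top : finrank k (HomOn k (⊤ : Subgroup (FreeGroup ι))) = Fintype.card ι := by
  simpa using finrank_homOn_add_index (k := k) (⊤ : Subgroup (FreeGroup ι))

end Schreier

/-! ### Hopf's formula: comparing two presentations -/

section InvHom

variable {Γ G k : Type*} [Group Γ] [Group G] [CommRing k]

/-- The characters of `B` vanishing on `R`, i.e. the image of the inflation map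
`H¹(B/R; k) → H¹(B; k)` when `R ≤ B` is normal. -/
def HomVanishing (k : Type*) [CommRing k] (B R : Subgroup Γ) : Submodule k (Γ → k) where
  carrier := {f | f ∈ HomOn k B ∧ ∀ x ∈ R, f x = 0}
  add_mem' := fun ⟨h1, h2⟩ ⟨h3, h4⟩ => ⟨add_mem h1 h3, fun x hx => by simp [h2 x hx, h4 x hx]⟩
  zero_mem' := ⟨zero_mem _, fun _ _ => rfl⟩
  smul_mem' := fun c _ ⟨h1, h2⟩ => ⟨Submodule.smul_mem _ c h1, fun x hx => by simp [h2 x hx]⟩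

/-- The characters of `R` invariant under conjugation by `B`, i.e. `H¹(R; k)^B`. -/
def InvHom (k : Type*) [CommRing k] (B R : Subgroup Γ) : Submodule k (Γ → k) where
  carrier := {f | f ∈ HomOn k R ∧ ∀ b ∈ B, ∀ x ∈ R, f (b * x * b⁻¹) = f x}
  add_mem' := fun ⟨h1, h2⟩ ⟨h3, h4⟩ => ⟨add_mem h1 h3, fun b hb x hx => by
    simp [h2 b hb x hx, h4 b hb x hx]⟩
  zero_mem' := ⟨zero_mem _, fun _ _ _ _ => rfl⟩
  smul_mem' := fun c _ ⟨h1, h2⟩ => ⟨Submodule.smul_mem _ c h1, fun b hb x hx => by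
    simp [h2 b hb x hx]⟩

lemma invHom_anti {B B' R : Subgroup Γ} (h : B' ≤ B) : InvHom k B R ≤ InvHom k B' R :=
  fun _ hf => ⟨hf.1, fun b hb x hx => hf.2 b (h hb) x hx⟩

lemma homOn_inf_ker_restrict (B R : Subgroup Γ) :
    HomOn k B ⊓ LinearMap.ker (restrict R) = HomVanishing k B R := by
  ext f
  refine and_congr_right fun _ => ⟨fun h x hx => ?_, fun h => funext fun x => ?_⟩
  · rw [← restrict_of_mem (f := f) hx, LinearMap.mem_ker.1 h, Pi.zero_apply]
  · by_cases hx : x ∈ R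
    · rw [restrict_of_mem hx, h x hx, Pi.zero_apply]
    · rw [restrict_of_notMem hx, Pi.zero_apply]

lemma map_restrict_homOn_le_invHom {B R : Subgroup Γ} (hRB : R ≤ B) [R.Normal] :
    (HomOn k B).map (restrict R) ≤ InvHom k B R := by
  rintro _ ⟨f, hf, rfl⟩
  refine ⟨restrict_mem_homOn_of_le hRB hf, fun b hb x hx => ?_⟩
  rw [restrict_of_mem hx, restrict_of_mem (Subgroup.Normal.conj_mem ‹_› x hx b)]
  exact HomOn.map_conj hf hb (hRB hx)

lemma comp_mem_homVanishing (π : Γ →* G) {N : Subgroup G} {f : G → k} (hf : f ∈ HomOn k N) :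
    f ∘ π ∈ HomVanishing k (N.comap π) π.ker := by
  refine ⟨⟨fun x hx => HomOn.apply_of_notMem hf hx, fun x hx y hy => ?_⟩, fun x hx => ?_⟩
  · simp only [Function.comp_apply, map_mul]
    exact HomOn.map_mul hf hx hy
  · simp only [Function.comp_apply, MonoidHom.mem_ker.1 hx]
    exact HomOn.map_one hf

lemma exists_comp_eq_of_mem_homVanishing (π : Γ →* G) {N : Subgroup G} (hN : N ≤ π.range)
    {f : Γ → k} (hf : f ∈ HomVanishing k (N.comap π) π.ker) :
    ∃ g ∈ HomOn k N, g ∘ π = f := by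
  let q : N.comap π →* N := π.subgroupComap N
  have hq : Function.Surjective q := fun y => by
    obtain ⟨x, hx⟩ := hN y.2
    exact ⟨⟨x, Subgroup.mem_comap.2 (hx ▸ y.2)⟩, Subtype.ext hx⟩
  have hker : q.ker ≤ (HomOn.toMonoidHom hf.1).ker := fun x hx =>
    congrArg Multiplicative.ofAdd (hf.2 x (congrArg Subtype.val (MonoidHom.mem_ker.1 hx)))
  let ψ : N →* Multiplicative k := q.liftOfSurjective hq ⟨HomOn.toMonoidHom hf.1, hker⟩
  refine ⟨ofMonoidHom ψ, ofMonoidHom_mem ψ, HomOn.ext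
    (comp_mem_homVanishing π (ofMonoidHom_mem ψ)).1 hf.1 fun x hx => ?_⟩
  rw [Function.comp_apply, ofMonoidHom_apply ψ hx]
  exact congrArg Multiplicative.toAdd
    (q.liftOfRightInverse_comp_apply _ _ ⟨HomOn.toMonoidHom hf.1, hker⟩ ⟨x, hx⟩)

lemma finrank_homVanishing_comap (π : Γ →* G) {N : Subgroup G} (hN : N ≤ π.range) :
    finrank k (HomVanishing k (N.comap π) π.ker) = finrank k (HomOn k N) := by
  let comp : HomOn k N →ₗ[k] HomVanishing k (N.comap π) π.ker :=
    { toFun := fun f => ⟨f.1 ∘ π, comp_mem_homVanishing π f.2⟩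
      map_add' := fun _ _ => rfl
      map_smul' := fun _ _ => rfl }
  refine (LinearEquiv.ofBijective comp ⟨?_, ?_⟩).finrank_eq.symm
  · rintro ⟨f, hf⟩ ⟨g, hg⟩ h
    refine Subtype.ext (HomOn.ext hf hg fun y hy => ?_)
    obtain ⟨x, rfl⟩ := hN hy
    exact congrFun (congrArg Subtype.val h) x
  · rintro ⟨f, hf⟩
    obtain ⟨g, hg, h⟩ := exists_comp_eq_of_mem_homVanishing π hN hf
    exact ⟨⟨g, hg⟩, Subtype.ext h⟩

end InvHom

section LiftOver

variable {Γ₁ Γ₂ G : Type*} [Group Γ₁] [Group Γ₂] [Group G] {π₁ : Γ₁ →* G} {π₂ : Γ₂ →* G}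
  {N : Subgroup G}

/-- `φ` restricts to a homomorphism from the preimage of `N` under `π₁` to the preimage of `N`
under `π₂` which lies over the identity of `N`. -/
structure IsLiftOver (N : Subgroup G) (π₁ : Γ₁ →* G) (π₂ : Γ₂ →* G) (φ : Γ₁ → Γ₂) : Prop where
  map_mul : ∀ x ∈ N.comap π₁, ∀ y ∈ N.comap π₁, φ (x * y) = φ x * φ y
  comp_apply : ∀ x ∈ N.comap π₁, π₂ (φ x) = π₁ x

lemma exists_isLiftOver [IsFreeGroup Γ₁] (hN : N ≤ π₂.range) : ∃ φ, IsLiftOver N π₁ π₂ φ := by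
  classical
  choose s hs using fun y : N.comap π₁ => hN y.2
  let φ : N.comap π₁ →* Γ₂ := IsFreeGroup.lift fun i => s (IsFreeGroup.of i)
  have hφ : π₂.comp φ = π₁.comp (N.comap π₁).subtype := by
    apply IsFreeGroup.ext_hom
    intro i
    simp [φ, hs]
  refine ⟨fun x => if hx : x ∈ N.comap π₁ then φ ⟨x, hx⟩ else 1, fun x hx y hy => ?_,
    fun x hx => ?_⟩
  · rw [dif_pos hx, dif_pos hy, dif_pos (mul_mem hx hy), ← map_mul]
    rfl
  · rw [dif_pos hx]
    exact DFunLike.congr_fun hφ ⟨x, hx⟩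

namespace IsLiftOver

variable {φ : Γ₁ → Γ₂} (hφ : IsLiftOver N π₁ π₂ φ)

include hφ

lemma map_one : φ 1 = 1 := by
  simpa using hφ.map_mul 1 (one_mem _) 1 (one_mem _)

lemma map_inv {x : Γ₁} (hx : x ∈ N.comap π₁) : φ x⁻¹ = (φ x)⁻¹ := by
  have h := hφ.map_mul x hx x⁻¹ (inv_mem hx)
  rw [mul_inv_cancel, hφ.map_one] at h
  exact (inv_eq_of_mul_eq_one_right h.symm).symm

lemma mem_comap {x : Γ₁} (hx : x ∈ N.comap π₁) : φ x ∈ N.comap π₂ := by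
  rw [Subgroup.mem_comap, hφ.comp_apply x hx]
  exact hx

lemma mem_ker {x : Γ₁} (hx : x ∈ π₁.ker) : φ x ∈ π₂.ker := by
  rw [MonoidHom.mem_ker, hφ.comp_apply x (π₁.ker_le_comap N hx)]
  exact hx

lemma comp_mul_inv_mem_ker {ψ : Γ₂ → Γ₁} (hψ : IsLiftOver N π₂ π₁ ψ) {x : Γ₁}
    (hx : x ∈ N.comap π₁) : ψ (φ x) * x⁻¹ ∈ π₁.ker := by
  rw [MonoidHom.mem_ker, _root_.map_mul, hψ.comp_apply _ (hφ.mem_comap hx), hφ.comp_apply x hx,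
    _root_.map_inv, mul_inv_cancel]

end IsLiftOver

section Pullback

variable {k : Type*} [CommRing k] {φ : Γ₁ → Γ₂} {ψ : Γ₂ → Γ₁} {f : Γ₁ → k}

lemma restrict_comp_mem_invHom (hψ : IsLiftOver N π₂ π₁ ψ)
    (hf : f ∈ InvHom k (N.comap π₁) π₁.ker) :
    restrict π₂.ker (f ∘ ψ) ∈ InvHom k (N.comap π₂) π₂.ker := by
  have hle : π₂.ker ≤ N.comap π₂ := π₂.ker_le_comap N
  refine ⟨restrict_mem_homOn fun x hx y hy => ?_, fun b hb x hx => ?_⟩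
  · rw [Function.comp_apply, hψ.map_mul x (hle hx) y (hle hy)]
    exact HomOn.map_mul hf.1 (hψ.mem_ker hx) (hψ.mem_ker hy)
  · rw [restrict_of_mem hx, restrict_of_mem (π₂.normal_ker.conj_mem x hx b), Function.comp_apply,
      Function.comp_apply, hψ.map_mul _ (mul_mem hb (hle hx)) _ (inv_mem hb),
      hψ.map_mul _ hb _ (hle hx), hψ.map_inv hb, hf.2 _ (hψ.mem_comap hb) _ (hψ.mem_ker hx)]

-- If `f ∘ ψ` extends to the character `g`, then `f` extends to `x ↦ g (φ x) - f (ψ (φ x) x⁻¹)`.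
lemma mem_map_restrict_of_restrict_comp_mem (hφ : IsLiftOver N π₁ π₂ φ)
    (hψ : IsLiftOver N π₂ π₁ ψ) (hf : f ∈ InvHom k (N.comap π₁) π₁.ker)
    (h : restrict π₂.ker (f ∘ ψ) ∈ (HomOn k (N.comap π₂)).map (restrict π₂.ker)) :
    f ∈ (HomOn k (N.comap π₁)).map (restrict π₁.ker) := by
  obtain ⟨g, hg, hgf⟩ := h
  have hle : π₁.ker ≤ N.comap π₁ := π₁.ker_le_comap N
  let e : Γ₁ → k := fun x => g (φ x) - f (ψ (φ x) * x⁻¹)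
  have he : restrict (N.comap π₁) e ∈ HomOn k (N.comap π₁) := restrict_mem_homOn fun x hx y hy => by
    have hxy : ψ (φ (x * y)) * (x * y)⁻¹ =
        ψ (φ x) * (ψ (φ y) * y⁻¹) * (ψ (φ x))⁻¹ * (ψ (φ x) * x⁻¹) := by
      rw [hφ.map_mul x hx y hy, hψ.map_mul _ (hφ.mem_comap hx) _ (hφ.mem_comap hy)]
      group
    have hb := hψ.mem_comap (hφ.mem_comap hx)
    have hy' := hφ.comp_mul_inv_mem_ker hψ hy
    simp only [e]
    rw [hxy, HomOn.map_mul hf.1 (π₁.normal_ker.conj_mem _ hy' _) (hφ.comp_mul_inv_mem_ker hψ hx),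
      hf.2 _ hb _ hy', hφ.map_mul x hx y hy, HomOn.map_mul hg (hφ.mem_comap hx) (hφ.mem_comap hy)]
    ring
  refine ⟨_, he, HomOn.ext (restrict_mem_homOn_of_le hle he) hf.1 fun x hx => ?_⟩
  have hgx : g (φ x) = f (ψ (φ x)) := by
    have := congrFun hgf (φ x)
    rwa [restrict_of_mem (hφ.mem_ker hx), restrict_of_mem (hφ.mem_ker hx)] at this
  rw [restrict_of_mem hx, restrict_of_mem (hle hx)]
  simp only [e]
  rw [hgx, HomOn.map_mul hf.1 (hψ.mem_ker (hφ.mem_ker hx)) (inv_mem hx), HomOn.map_inv hf.1 hx]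
  ring

end Pullback

end LiftOver

section Hopf

variable {k : Type*} [Field k]

lemma finrank_add_finrank_le_of_map {V W : Type*} [AddCommGroup V] [Module k V] [AddCommGroup W]
    [Module k W] (A : V →ₗ[k] W) {V₁ V₀ : Submodule k V} {W₁ W₀ : Submodule k W}
    [Module.Finite k V₁] [Module.Finite k W₁] (hV : V₀ ≤ V₁) (hW : W₀ ≤ W₁)
    (hA : ∀ v ∈ V₁, A v ∈ W₁) (hA₀ : ∀ v ∈ V₁, A v ∈ W₀ → v ∈ V₀) :
    finrank k V₁ + finrank k W₀ ≤ finrank k W₁ + finrank k V₀ := by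
  have h1 := finrank_map_add_finrank_inf_ker (W₀.mkQ.comp A) V₁
  have h2 := finrank_map_add_finrank_inf_ker W₀.mkQ W₁
  rw [Submodule.ker_mkQ, inf_eq_right.2 hW] at h2
  have h3 : finrank k (V₁.map (W₀.mkQ.comp A)) ≤ finrank k (W₁.map W₀.mkQ) :=
    Submodule.finrank_mono <| by
      rintro _ ⟨v, hv, rfl⟩
      exact ⟨A v, hA v hv, rfl⟩
  have : Module.Finite k V₀ := Submodule.finiteDimensional_of_le hV
  have h4 : finrank k ↥(V₁ ⊓ LinearMap.ker (W₀.mkQ.comp A)) ≤ finrank k V₀ :=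
    Submodule.finrank_mono fun v hv => hA₀ v hv.1 ((Submodule.Quotient.mk_eq_zero W₀).1 hv.2)
  lia

variable {Γ₁ Γ₂ G : Type*} [Group Γ₁] [Group Γ₂] [Group G] [IsFreeGroup Γ₁] [IsFreeGroup Γ₂]
  {π₁ : Γ₁ →* G} {π₂ : Γ₂ →* G} {N : Subgroup G} (h₁ : N ≤ π₁.range) (h₂ : N ≤ π₂.range)
  [Module.Finite k (InvHom k (N.comap π₁) π₁.ker)]
  [Module.Finite k (InvHom k (N.comap π₂) π₂.ker)]

include h₁ h₂

lemma finrank_invHom_add_finrank_map_restrict_le :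
    finrank k (InvHom k (N.comap π₁) π₁.ker) +
        finrank k ((HomOn k (N.comap π₂)).map (restrict π₂.ker)) ≤
      finrank k (InvHom k (N.comap π₂) π₂.ker) +
        finrank k ((HomOn k (N.comap π₁)).map (restrict π₁.ker)) := by
  obtain ⟨φ, hφ⟩ := exists_isLiftOver (π₁ := π₁) h₂
  obtain ⟨ψ, hψ⟩ := exists_isLiftOver (π₁ := π₂) h₁
  exact finrank_add_finrank_le_of_map ((restrict π₂.ker).comp (LinearMap.funLeft k k ψ))
    (map_restrict_homOn_le_invHom (π₁.ker_le_comap N))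
    (map_restrict_homOn_le_invHom (π₂.ker_le_comap N))
    (fun f hf => restrict_comp_mem_invHom (f := f) hψ hf)
    fun _ hf h => mem_map_restrict_of_restrict_comp_mem hφ hψ hf h

-- The five-term exact sequence identifies `dim InvHom - dim HomOn + dim Hom(N, k)` with the
-- dimension of `H²(N; k)`, which does not depend on the presentation.
lemma finrank_invHom_add_finrank_homOn [Module.Finite k (HomOn k (N.comap π₁))]
    [Module.Finite k (HomOn k (N.comap π₂))] :
    finrank k (InvHom k (N.comap π₁) π₁.ker) + finrank k (HomOn k (N.comap π₂)) =
      finrank k (InvHom k (N.comap π₂) π₂.ker) + finrank k (HomOn k (N.comap π₁)) := by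
  have hle := finrank_invHom_add_finrank_map_restrict_le (k := k) h₁ h₂
  have hge := finrank_invHom_add_finrank_map_restrict_le (k := k) h₂ h₁
  have e₁ := finrank_map_add_finrank_inf_ker (restrict π₁.ker) (HomOn k (N.comap π₁))
  have e₂ := finrank_map_add_finrank_inf_ker (restrict π₂.ker) (HomOn k (N.comap π₂))
  rw [homOn_inf_ker_restrict, finrank_homVanishing_comap _ ‹_›] at e₁ e₂
  lia

end Hopf

/-! ### Invariant characters of the relation subgroup -/

section NormalClosure

variable {Γ k : Type*} [Group Γ] {r : Γ} {B R : Subgroup Γ} {f : Γ → k}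

lemma conj_mem_of_eq_normalClosure (hR : R = Subgroup.normalClosure {r}) (g : Γ) :
    g * r * g⁻¹ ∈ R :=
  hR ▸ Subgroup.normalClosure_normal.conj_mem r
    (Subgroup.subset_normalClosure (Set.mem_singleton r)) g

lemma mem_of_eq_normalClosure (hR : R = Subgroup.normalClosure {r}) : r ∈ R := by
  simpa using conj_mem_of_eq_normalClosure hR 1

section CommRing

variable [CommRing k]

lemma apply_eq_zero_of_mem_normalClosure (hR : R = Subgroup.normalClosure {r}) (hRB : R ≤ B)
    (hf : f ∈ HomOn k B) (h : ∀ g, f (g * r * g⁻¹) = 0) {x : Γ} (hx : x ∈ R) : f x = 0 := by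
  subst hR
  refine apply_eq_zero_of_mem_closure hf (Subgroup.subset_closure.trans hRB) (fun y hy => ?_) hx
  obtain ⟨_, rfl, hc⟩ := Group.mem_conjugatesOfSet_iff.1 hy
  obtain ⟨g, rfl⟩ := isConj_iff.1 hc
  exact h g

lemma invHom_eq_zero (hR : R = Subgroup.normalClosure {r}) (hf : f ∈ InvHom k B R)
    (h : ∀ ω : Γ ⧸ B, f (ω.out⁻¹ * r * ω.out) = 0) : f = 0 := by
  refine HomOn.eq_zero hf.1 fun x => apply_eq_zero_of_mem_normalClosure hR le_rfl hf.1 fun g => ?_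
  obtain ⟨b, hb⟩ := QuotientGroup.mk_out_eq_mul B g⁻¹
  rw [← hf.2 _ (inv_mem b.2) _ (conj_mem_of_eq_normalClosure hR g), ← h (g⁻¹ : Γ), hb]
  congr 1
  group

lemma apply_ne_zero_of_mem_invHom_top (hR : R = Subgroup.normalClosure {r})
    (hf : f ∈ InvHom k ⊤ R) (h0 : f ≠ 0) : f r ≠ 0 := fun hr => h0 <|
  invHom_eq_zero hR hf fun ω => by
    rw [← hr, ← hf.2 ω.out⁻¹ (Subgroup.mem_top _) r (mem_of_eq_normalClosure hR), inv_inv]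

end CommRing

variable [Field k]

variable (k r B R) in
/-- Evaluation of `B`-invariant characters of `R` on the conjugates of `r` by coset
representatives of `B`. -/
noncomputable def evalConj : InvHom k B R →ₗ[k] (Γ ⧸ B → k) :=
  (LinearMap.funLeft k k fun ω : Γ ⧸ B => ω.out⁻¹ * r * ω.out).comp (Submodule.subtype _)

lemma evalConj_injective (hR : R = Subgroup.normalClosure {r}) :
    Function.Injective (evalConj k r B R) :=
  (injective_iff_map_eq_zero _).2 fun f h => Subtype.ext (invHom_eq_zero hR f.2 (congrFun h))

variable [B.FiniteIndex]

lemma invHom_finite (hR : R = Subgroup.normalClosure {r}) : Module.Finite k (InvHom k B R) :=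
  Module.Finite.of_injective _ (evalConj_injective hR)

lemma finrank_invHom_le_index (hR : R = Subgroup.normalClosure {r}) :
    finrank k (InvHom k B R) ≤ B.index := by
  have := B.fintypeQuotientOfFiniteIndex
  have h := LinearMap.finrank_le_finrank_of_injective (evalConj_injective (k := k) (B := B) hR)
  rwa [Module.finrank_fintype_fun_eq_card, ← Nat.card_eq_fintype_card] at h

end NormalClosure

section InvariantCharacter

lemma eq_bot_of_commutator_top_eq {P : Type*} [Group P] [hP : Group.IsNilpotent P]
    {Q : Subgroup P} (h : ⁅Q, (⊤ : Subgroup P)⁆ = Q) : Q = ⊥ := by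
  have hle : ∀ n, Q ≤ Subgroup.lowerCentralSeries ⊤ n := by
    intro n
    induction n with
    | zero => simp
    | succ n ih =>
      rw [← h, Subgroup.lowerCentralSeries_succ]
      exact Subgroup.commutator_mono ih le_rfl
  obtain ⟨n, hn⟩ := (Subgroup.isNilpotent_iff_lowerCentralSeries (⊤ : Subgroup P)).1
    (Group.isNilpotent_top.2 hP)
  exact le_bot_iff.1 (hn ▸ hle n)

lemma conj_mul_inv_mem_commutator_top {Γ : Type*} [Group Γ] {R : Subgroup Γ} (b : Γ) {x : Γ}
    (hx : x ∈ R) : b * x * b⁻¹ * x⁻¹ ∈ ⁅R, (⊤ : Subgroup Γ)⁆ := by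
  rw [Subgroup.commutator_comm]
  exact Subgroup.commutator_mem_commutator (Subgroup.mem_top b) hx

lemma exists_invHom_ne_zero_of_isPGroup {p : ℕ} [Fact p.Prime] {P : Type*} [Group P] [Finite P]
    (hP : IsPGroup p P) (Q : Subgroup P) [Q.Normal] (hQ : Q ≠ ⊥) :
    ∃ f ∈ InvHom (ZMod p) ⊤ Q, f ≠ 0 := by
  have : Group.IsNilpotent P := hP.isNilpotent
  have hCQ : ⁅Q, (⊤ : Subgroup P)⁆ ≤ Q := Subgroup.commutator_le_left _ _
  let C := ⁅Q, (⊤ : Subgroup P)⁆.subgroupOf Q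
  have : Nontrivial (Q ⧸ C) := by
    rw [← not_subsingleton_iff_nontrivial, QuotientGroup.subsingleton_iff,
      Subgroup.subgroupOf_eq_top]
    exact fun h => hQ (eq_bot_of_commutator_top_eq (le_antisymm hCQ h))
  obtain ⟨f₀, hf₀⟩ := exists_monoidHom_zmod_ne_one ((hP.to_subgroup Q).to_quotient C)
  let ψ := f₀.comp (QuotientGroup.mk' C)
  have hψ := ofMonoidHom_mem ψ
  refine ⟨ofMonoidHom ψ, ⟨hψ, fun b _ x hx => ?_⟩, fun h0 => hf₀ ?_⟩
  · have hconj : b * x * b⁻¹ ∈ Q := Subgroup.Normal.conj_mem ‹_› x hx b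
    have hC : ofMonoidHom ψ (b * x * b⁻¹ * x⁻¹) = 0 := by
      have hmem := conj_mul_inv_mem_commutator_top b hx
      have h1 : QuotientGroup.mk' C ⟨_, hCQ hmem⟩ = 1 := (QuotientGroup.eq_one_iff _).2 hmem
      rw [ofMonoidHom_apply ψ (hCQ hmem), MonoidHom.comp_apply, h1, map_one, toAdd_one]
    rwa [HomOn.map_mul hψ hconj (inv_mem hx), HomOn.map_inv hψ hx, add_neg_eq_zero] at hC
  · refine QuotientGroup.monoidHom_ext C (MonoidHom.ext fun y => ?_)
    have hy := congrFun h0 y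
    rw [ofMonoidHom_apply ψ y.2] at hy
    exact Multiplicative.toAdd.injective hy

lemma restrict_comp_mem_invHom_top {Γ P k : Type*} [Group Γ] [Group P] [CommRing k] (φ : Γ →* P)
    {R : Subgroup Γ} [R.Normal] {f : P → k} (hf : f ∈ InvHom k ⊤ (R.map φ)) :
    restrict R (f ∘ φ) ∈ InvHom k ⊤ R := by
  refine ⟨restrict_mem_homOn fun x hx y hy => ?_, fun b _ x hx => ?_⟩
  · rw [Function.comp_apply, map_mul]
    exact HomOn.map_mul hf.1 (Subgroup.mem_map_of_mem φ hx) (Subgroup.mem_map_of_mem φ hy)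
  · rw [restrict_of_mem hx, restrict_of_mem (Subgroup.Normal.conj_mem ‹_› x hx b),
      Function.comp_apply, map_mul, map_mul, map_inv]
    exact hf.2 _ (Subgroup.mem_top _) _ (Subgroup.mem_map_of_mem φ hx)

variable {α : Type*} {r : FreeGroup α} {R : Subgroup (FreeGroup α)}

lemma exists_invHom_zmod_ne_zero (p : ℕ) [Fact p.Prime] (hr : r ≠ 1)
    (hR : R = Subgroup.normalClosure {r}) : ∃ f ∈ InvHom (ZMod p) ⊤ R, f ≠ 0 := by
  obtain ⟨P, _, _, φ₀, hP, hφ₀⟩ := exists_pGroup_quotient_ne_one p hr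
  let φ := φ₀.rangeRestrict
  have hRn : R.Normal := hR ▸ Subgroup.normalClosure_normal
  have : (R.map φ).Normal := hRn.map φ φ₀.rangeRestrict_surjective
  have hne : R.map φ ≠ ⊥ := fun h => by
    have hφr : φ r ∈ R.map φ := Subgroup.mem_map_of_mem φ (mem_of_eq_normalClosure hR)
    rw [h, Subgroup.mem_bot] at hφr
    exact hφ₀ (congrArg Subtype.val hφr)
  obtain ⟨f, hf, hf0⟩ := exists_invHom_ne_zero_of_isPGroup (hP.to_subgroup _) _ hne
  obtain ⟨_, ⟨x, hx, rfl⟩, hfx⟩ := HomOn.exists_ne_zero hf.1 hf0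
  refine ⟨_, restrict_comp_mem_invHom_top φ hf, fun h0 => hfx ?_⟩
  have h := congrFun h0 x
  rwa [restrict_of_mem hx] at h

lemma commutator_top_le_kerOn {Γ k : Type*} [Group Γ] [CommRing k] {R : Subgroup Γ} [R.Normal]
    {f : Γ → k} (hf : f ∈ InvHom k ⊤ R) : ⁅R, (⊤ : Subgroup Γ)⁆ ≤ kerOn hf.1 := by
  rw [Subgroup.commutator_le]
  intro a ha b _
  have hconj := Subgroup.Normal.conj_mem ‹_› _ (inv_mem ha) b
  rw [show ⁅a, b⁆ = a * (b * a⁻¹ * b⁻¹) by rw [commutatorElement_def]; group]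
  refine ⟨mul_mem ha hconj, ?_⟩
  rw [HomOn.map_mul hf.1 ha hconj, hf.2 b (Subgroup.mem_top b) _ (inv_mem ha),
    HomOn.map_inv hf.1 ha, add_neg_cancel]

lemma eq_zero_of_zpow_mem_commutator_top (hr : r ≠ 1) (hR : R = Subgroup.normalClosure {r}) {n : ℤ}
    (hn : r ^ n ∈ ⁅R, (⊤ : Subgroup (FreeGroup α))⁆) : n = 0 := by
  by_contra hn0
  obtain ⟨p, hpn, hp⟩ := Nat.exists_infinite_primes (n.natAbs + 1)
  have : Fact p.Prime := ⟨hp⟩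
  have : R.Normal := hR ▸ Subgroup.normalClosure_normal
  obtain ⟨f, hf, hf0⟩ := exists_invHom_zmod_ne_zero p hr hR
  have hfn : (n : ZMod p) * f r = 0 := by
    rw [← HomOn.map_zpow hf.1 (mem_of_eq_normalClosure hR)]
    exact (commutator_top_le_kerOn hf hn).2
  have hn' := (mul_eq_zero.1 hfn).resolve_right (apply_ne_zero_of_mem_invHom_top hR hf hf0)
  rw [ZMod.intCast_zmod_eq_zero_iff_dvd, Int.natCast_dvd] at hn'
  have := Nat.le_of_dvd (Int.natAbs_pos.2 hn0) hn'
  lia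

-- The quotient `R / [R, F]` is infinite cyclic, generated by the image of `r`, and `F` acts
-- trivially on it by conjugation.
lemma exists_invHom_int_apply_eq_one (hr : r ≠ 1) (hR : R = Subgroup.normalClosure {r}) :
    ∃ f ∈ InvHom ℤ ⊤ R, f r = 1 := by
  have hRn : R.Normal := hR ▸ Subgroup.normalClosure_normal
  have hrR := mem_of_eq_normalClosure hR
  let q := QuotientGroup.mk' ⁅R, (⊤ : Subgroup (FreeGroup α))⁆
  have hconj : ∀ b, ∀ x ∈ R, q (b * x * b⁻¹) = q x := fun b x hx => mul_inv_eq_one.1 <| by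
    rw [← map_inv, ← map_mul]
    exact (QuotientGroup.eq_one_iff _).2 (conj_mul_inv_mem_commutator_top b hx)
  have hinj : Function.Injective fun n : ℤ => q r ^ n := fun n n' h => by
    refine sub_eq_zero.1 (eq_zero_of_zpow_mem_commutator_top hr hR ?_)
    refine (QuotientGroup.eq_one_iff _).1 ((map_zpow q r _).trans ?_)
    rw [zpow_sub, mul_inv_eq_one]
    exact h
  have hz : (Subgroup.zpowers (q r)).Normal := ⟨by
    rintro _ ⟨n, rfl⟩ g
    obtain ⟨b, rfl⟩ := QuotientGroup.mk'_surjective _ g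
    refine ⟨n, ?_⟩
    change q r ^ n = q b * q r ^ n * (q b)⁻¹
    rw [← conj_zpow, ← map_inv, ← map_mul, ← map_mul, hconj b r hrR]⟩
  have hle : R ≤ (Subgroup.zpowers (q r)).comap q := hR.le.trans <|
    Subgroup.normalClosure_le_normal <| Set.singleton_subset_iff.2 (Subgroup.mem_zpowers _)
  have hexp : ∀ x ∈ R, ∃ n : ℤ, q r ^ n = q x := fun x hx => hle hx
  choose! e he using hexp
  have he' : ∀ x ∈ R, ∀ n : ℤ, q x = q r ^ n → e x = n := fun x hx n hn =>
    hinj ((he x hx).trans hn)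
  have hres : ∀ x ∈ R, restrict R e x = e x := fun x hx => restrict_of_mem hx
  refine ⟨restrict R e, ⟨restrict_mem_homOn fun x hx y hy => ?_, fun b _ x hx => ?_⟩, ?_⟩
  · exact he' _ (mul_mem hx hy) _ (by rw [map_mul, zpow_add, he x hx, he y hy])
  · rw [hres x hx, hres _ (hRn.conj_mem x hx b)]
    exact he' _ (hRn.conj_mem x hx b) _ ((hconj b x hx).trans (he x hx).symm)
  · rw [hres r hrR]
    exact he' r hrR 1 (zpow_one _).symm

lemma finrank_invHom_top {k : Type*} [Field k] (hr : r ≠ 1)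
    (hR : R = Subgroup.normalClosure {r}) : finrank k (InvHom k ⊤ R) = 1 := by
  have := invHom_finite (k := k) (B := ⊤) hR
  have hle := finrank_invHom_le_index (k := k) (B := ⊤) hR
  rw [Subgroup.index_top] at hle
  obtain ⟨f, hf, hfr⟩ := exists_invHom_int_apply_eq_one hr hR
  let g : FreeGroup α → k := fun x => f x
  have hg : g ∈ InvHom k ⊤ R :=
    ⟨⟨fun x hx => by simp [g, HomOn.apply_of_notMem hf.1 hx], fun x hx y hy => by
      simp [g, HomOn.map_mul hf.1 hx hy]⟩, fun b hb x hx => by simp [g, hf.2 b hb x hx]⟩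
  have : Nontrivial (InvHom k ⊤ R) := ⟨⟨g, hg⟩, 0, fun h => by
    simpa [g, hfr] using congrFun (congrArg Subtype.val h) r⟩
  exact le_antisymm hle finrank_pos

end InvariantCharacter

/-! ### One-relator presentations -/

section Presentation

variable {G : Type*} [Group G]

/-- `π` and `r` are a one-relator presentation with `m` generators and nontrivial relator of the
subgroup `K`. -/
structure IsOneRelatorPresentation (K : Subgroup G) {m : ℕ} (r : FreeGroup (Fin m))
    (π : FreeGroup (Fin m) →* G) : Prop where
  range_eq : π.range = K
  ker_eq : π.ker = Subgroup.normalClosure {r}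
  relator_ne_one : r ≠ 1

/-- `K` has a presentation with `m` generators and one nontrivial relator. -/
def HasOneRelatorPresentation (K : Subgroup G) (m : ℕ) : Prop :=
  ∃ (r : FreeGroup (Fin m)) (π : FreeGroup (Fin m) →* G), IsOneRelatorPresentation K r π

lemma homOn_finite_of_finiteIndex {Γ k : Type*} [Group Γ] [Group.FG Γ] [Field k] (B : Subgroup Γ)
    [B.FiniteIndex] : Module.Finite k (HomOn k B) :=
  homOn_finite ((Group.fg_iff_subgroup_fg B).1 (Subgroup.fg_of_index_ne_zero B))

theorem finrank_invHom_comap {k : Type*} [Field k] {K N : Subgroup G} {m m' : ℕ}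
    {r : FreeGroup (Fin m)} {π : FreeGroup (Fin m) →* G} (h : IsOneRelatorPresentation K r π)
    (hN : N ≤ K) [(N.comap π).FiniteIndex] (h' : HasOneRelatorPresentation N m') :
    finrank k (InvHom k (N.comap π) π.ker) + m' + (N.comap π).index =
      m * (N.comap π).index + 2 := by
  obtain ⟨r', π', h'⟩ := h'
  have htop : N.comap π' = ⊤ := eq_top_iff.2 fun x _ => h'.range_eq.le ⟨x, rfl⟩
  have : (N.comap π').FiniteIndex := htop ▸ inferInstance
  have := invHom_finite (k := k) (B := N.comap π) h.ker_eq
  have := invHom_finite (k := k) (B := N.comap π') h'.ker_eq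
  have := homOn_finite_of_finiteIndex (k := k) (N.comap π)
  have := homOn_finite_of_finiteIndex (k := k) (N.comap π')
  have hhopf := finrank_invHom_add_finrank_homOn (k := k) (hN.trans h.range_eq.ge) h'.range_eq.ge
  have hschreier := finrank_homOn_add_index (k := k) (N.comap π)
  rw [htop, finrank_homOn_top, finrank_invHom_top h'.relator_ne_one h'.ker_eq] at hhopf
  rw [Fintype.card_fin] at hhopf hschreier
  lia

end Presentation

/-! ### Operators of prime order -/

section LinearAlgebra

variable {k V : Type*} [Field k] [AddCommGroup V] [Module k V]

lemma natDegree_le_finrank_ker_aeval [Module.Finite k V] (T : Module.End k V) {P : Polynomial k}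
    (hP : Irreducible P) {w : V} (hw : w ≠ 0) (hPw : Polynomial.aeval T P w = 0) :
    P.natDegree ≤ finrank k (LinearMap.ker (Polynomial.aeval T P)) := by
  let orbit : Polynomial.degreeLT k P.natDegree →ₗ[k] LinearMap.ker (Polynomial.aeval T P) :=
    LinearMap.codRestrict _ ((LinearMap.applyₗ w ∘ₗ (Polynomial.aeval T).toLinearMap) ∘ₗ
      (Polynomial.degreeLT k P.natDegree).subtype) fun q => by
        change Polynomial.aeval T P (Polynomial.aeval T q.1 w) = 0
        rw [← Module.End.mul_apply, ← map_mul, mul_comm, map_mul, Module.End.mul_apply, hPw,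
          map_zero]
  have horbit : Function.Injective orbit := by
    refine (injective_iff_map_eq_zero _).2 fun ⟨q, hq⟩ hqw => Subtype.ext ?_
    have hqw : Polynomial.aeval T q w = 0 := congrArg Subtype.val hqw
    by_contra hq0
    have hcop : IsCoprime P q := hP.coprime_iff_not_dvd.2 fun hdvd =>
      (Polynomial.degree_le_of_dvd hdvd hq0).not_gt <| by
        rwa [Polynomial.degree_eq_natDegree hP.ne_zero, ← Polynomial.mem_degreeLT]
    obtain ⟨a, b, hab⟩ := hcop
    have : Polynomial.aeval T (a * P + b * q) w = 0 := by simp [hPw, hqw]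
    exact hw (by simpa [hab] using this)
  have := LinearMap.finrank_le_finrank_of_injective horbit
  rwa [(Polynomial.degreeLTEquiv k P.natDegree).finrank_eq, finrank_fin_fun] at this

lemma disjoint_ker_aeval_cyclotomic [CharZero k] {p : ℕ} [hp : Fact p.Prime]
    (T : Module.End k V) :
    Disjoint (LinearMap.ker (Polynomial.aeval T (Polynomial.cyclotomic p k)))
      (LinearMap.ker (T - 1)) := by
  rw [Submodule.disjoint_def]
  intro x hx hTx
  by_contra hx0
  have heigen : T.HasEigenvector 1 x :=
    ⟨by simpa [sub_eq_zero, Module.End.mem_eigenspace_iff] using hTx, hx0⟩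
  have heval := Module.End.aeval_apply_of_hasEigenvector (p := Polynomial.cyclotomic p k) heigen
  rw [LinearMap.mem_ker.1 hx, Polynomial.eval_one_cyclotomic_prime, eq_comm] at heval
  exact (smul_eq_zero.1 heval).elim (Nat.cast_ne_zero.2 hp.out.ne_zero) hx0

lemma finrank_eq_one_or_eq_prime {V : Type*} [AddCommGroup V] [Module ℚ V] [Module.Finite ℚ V]
    {p : ℕ} [hp : Fact p.Prime] (T : Module.End ℚ V) (hT : T ^ p = 1)
    (hfix : finrank ℚ (LinearMap.ker (T - 1)) = 1) (hle : finrank ℚ V ≤ p) :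
    finrank ℚ V = 1 ∨ finrank ℚ V = p := by
  rcases eq_or_ne (LinearMap.ker (T - 1)) ⊤ with htop | htop
  · rw [htop, finrank_top] at hfix
    exact Or.inl hfix
  refine Or.inr (le_antisymm hle ?_)
  obtain ⟨v, hv⟩ : ∃ v, (T - 1) v ≠ 0 := by
    by_contra! h
    exact htop (eq_top_iff.2 fun v _ => h v)
  have hcycl : Polynomial.aeval T (Polynomial.cyclotomic p ℚ) ((T - 1) v) = 0 := by
    have := congrArg (Polynomial.aeval T) (Polynomial.cyclotomic_prime_mul_X_sub_one ℚ p)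
    simpa [hT] using congrArg (fun S : Module.End ℚ V => S v) this
  have hdeg := natDegree_le_finrank_ker_aeval T
    (Polynomial.cyclotomic.irreducible_rat hp.out.pos) hv hcycl
  rw [Polynomial.natDegree_cyclotomic, Nat.totient_prime hp.out] at hdeg
  have := Submodule.finrank_add_finrank_le_of_disjoint
    (disjoint_ker_aeval_cyclotomic (p := p) T)
  lia

lemma finrank_ker_pow_le [Module.Finite k V] (S : Module.End k V) (n : ℕ) :
    finrank k (LinearMap.ker (S ^ n)) ≤ n * finrank k (LinearMap.ker S) := by
  induction n with
  | zero => simp [Module.End.one_eq_id]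
  | succ n ih =>
    have hsplit := finrank_map_add_finrank_inf_ker S (LinearMap.ker (S ^ (n + 1)))
    have himage : finrank k ((LinearMap.ker (S ^ (n + 1))).map S) ≤
        finrank k (LinearMap.ker (S ^ n)) := Submodule.finrank_mono <| by
      rintro _ ⟨x, hx, rfl⟩
      rwa [LinearMap.mem_ker, ← Module.End.mul_apply, ← pow_succ]
    have hker : finrank k ↥(LinearMap.ker (S ^ (n + 1)) ⊓ LinearMap.ker S) ≤
        finrank k (LinearMap.ker S) := Submodule.finrank_mono inf_le_right
    lia

lemma mul_finrank_range_pow_le [Module.Finite k V] (S : Module.End k V) {n : ℕ}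
    (hS : S ^ (n + 1) = 0) : (n + 1) * finrank k (LinearMap.range (S ^ n)) ≤ finrank k V := by
  suffices key : ∀ i j, i + j = n →
      (i + 1) * finrank k (LinearMap.range (S ^ n)) ≤ finrank k (LinearMap.range (S ^ j)) from
    (key n 0 (add_zero n)).trans (Submodule.finrank_le _)
  intro i
  induction i with
  | zero =>
    rintro j rfl
    rw [zero_add, one_mul, zero_add]
  | succ i ih =>
    intro j hij
    have hsplit := finrank_map_add_finrank_inf_ker S (LinearMap.range (S ^ j))
    have himage : (LinearMap.range (S ^ j)).map S = LinearMap.range (S ^ (j + 1)) := by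
      rw [pow_succ', Module.End.mul_eq_comp, LinearMap.range_comp]
    have hker : finrank k (LinearMap.range (S ^ n)) ≤
        finrank k ↥(LinearMap.range (S ^ j) ⊓ LinearMap.ker S) := Submodule.finrank_mono <| by
      rintro _ ⟨x, rfl⟩
      refine ⟨⟨(S ^ (i + 1)) x, ?_⟩, ?_⟩
      · rw [← Module.End.mul_apply, ← pow_add, add_comm, hij]
      · rw [SetLike.mem_coe, LinearMap.mem_ker, ← Module.End.mul_apply, ← pow_succ', hS,
          LinearMap.zero_apply]
    have := ih (j + 1) (by lia)
    rw [himage] at hsplit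
    lia

lemma sub_one_pow_eq_zero {p : ℕ} [Fact p.Prime] {V : Type*} [AddCommGroup V] [Module (ZMod p) V]
    {T : Module.End (ZMod p) V} (hT : T ^ p = 1) : (T - 1) ^ p = 0 := by
  rcases subsingleton_or_nontrivial V with _ | _
  · exact Subsingleton.elim _ _
  · have : CharP (Module.End (ZMod p) V) p := charP_of_injective_algebraMap
      (algebraMap (ZMod p) (Module.End (ZMod p) V)).injective p
    rw [sub_pow_char_of_commute _ (Commute.one_right T), hT, one_pow, sub_self]

lemma finrank_le_mul_finrank_ker_sub_one {p : ℕ} [Fact p.Prime] {V : Type*} [AddCommGroup V]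
    [Module (ZMod p) V] [Module.Finite (ZMod p) V] {T : Module.End (ZMod p) V} (hT : T ^ p = 1) :
    finrank (ZMod p) V ≤ p * finrank (ZMod p) (LinearMap.ker (T - 1)) := by
  have := finrank_ker_pow_le (T - 1) p
  rwa [sub_one_pow_eq_zero hT, LinearMap.ker_zero, finrank_top] at this

lemma finrank_le_finrank_inf_ker_add_one (Y : Submodule k V) [Module.Finite k Y] (l : V →ₗ[k] k) :
    finrank k Y ≤ finrank k ↥(Y ⊓ LinearMap.ker l) + 1 := by
  have hsplit := finrank_map_add_finrank_inf_ker l Y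
  have := (Submodule.finrank_le (Y.map l)).trans_eq (finrank_self k)
  lia

lemma finrank_eq_finrank_inf_ker_add_one (Y : Submodule k V) [Module.Finite k Y] (l : V →ₗ[k] k)
    {y : V} (hy : y ∈ Y) (hly : l y ≠ 0) :
    finrank k Y = finrank k ↥(Y ⊓ LinearMap.ker l) + 1 :=
  le_antisymm (finrank_le_finrank_inf_ker_add_one Y l) <|
    Submodule.finrank_lt_finrank_of_lt <| inf_le_left.lt_of_ne fun h => hly (h.ge hy).2

lemma apply_mem_of_pow_eq_zero_of_finrank_le [Module.Finite k V] {S : Module.End k V} {n : ℕ}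
    (hn : S ^ n = 0) {J : Submodule k V} (hS : J ≤ J.comap S) (hJ : finrank k V ≤ finrank k J + 1)
    (v : V) : S v ∈ J := by
  let f : Module.End k (V ⧸ J) := J.mapQ J S hS
  have hker : finrank k (V ⧸ J) ≤ n * finrank k (LinearMap.ker f) := by
    have := finrank_ker_pow_le f n
    rwa [← J.mapQ_pow hS, LinearMap.ker_eq_top.2, finrank_top] at this
    ext x
    simp [hn]
  have hf : LinearMap.ker f = ⊤ := by
    refine Submodule.eq_top_of_finrank_eq (le_antisymm (Submodule.finrank_le _) ?_)
    have := J.finrank_quotient_add_finrank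
    rcases (finrank k (LinearMap.ker f)).eq_zero_or_pos with h0 | hpos
    · simpa [h0] using hker
    · lia
  exact (Submodule.Quotient.mk_eq_zero J).1 (LinearMap.mem_ker.1 (hf ▸ Submodule.mem_top :
    Submodule.Quotient.mk v ∈ LinearMap.ker f))

lemma sub_one_pow_sub_one_eq_geom_sum {p : ℕ} [hp : Fact p.Prime] {V : Type*} [AddCommGroup V]
    [Module (ZMod p) V] (T : Module.End (ZMod p) V) :
    (T - 1) ^ (p - 1) = ∑ i ∈ Finset.range p, T ^ i := by
  have h : (Polynomial.X - 1 : Polynomial (ZMod p)) ^ (p - 1) =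
      ∑ i ∈ Finset.range p, Polynomial.X ^ i := by
    apply mul_right_cancel₀ (Polynomial.X_sub_C_ne_zero (1 : ZMod p))
    rw [map_one, geom_sum_mul, ← pow_succ, Nat.sub_add_cancel hp.out.one_le, sub_pow_char, one_pow]
  simpa using congrArg (Polynomial.aeval T) h

-- A finite `p`-group acting on the nonzero `𝔽_p`-space `V ⧸ W` fixes a nonzero vector.
lemma exists_notMem_forall_sub_mem {p : ℕ} [hp : Fact p.Prime] {Γ V : Type*} [Group Γ]
    [AddCommGroup V] [Module (ZMod p) V] [Module.Finite (ZMod p) V]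
    (ρ : Γ →* Module.End (ZMod p) V) (hρ : ∀ g, ∃ n : ℕ, ρ g ^ p ^ n = 1)
    {W : Submodule (ZMod p) V} (hW : W ≠ ⊤) (hρW : ∀ g, W ≤ W.comap (ρ g)) :
    ∃ u ∉ W, ∀ g, ρ g u - u ∈ W := by
  let σ : Γ →* Module.End (ZMod p) (V ⧸ W) :=
    { toFun := fun g => W.mapQ W (ρ g) (hρW g)
      map_one' := by
        ext x
        simp
      map_mul' := fun g h => by
        ext x
        simp }
  have hσ : IsPGroup p σ.toHomUnits.range := by
    rintro ⟨_, g, rfl⟩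
    obtain ⟨n, hn⟩ := hρ g
    refine ⟨n, Subtype.ext (Units.ext ?_)⟩
    ext x
    have : (σ g ^ p ^ n) (W.mkQ x) = W.mkQ x := by
      rw [← map_pow]
      change W.mkQ (ρ (g ^ p ^ n) x) = W.mkQ x
      rw [map_pow, hn, Module.End.one_apply]
    exact this
  have : Nontrivial (V ⧸ W) := Submodule.Quotient.nontrivial_iff.2 hW
  have : Finite (V ⧸ W) := Module.finite_of_finite (ZMod p)
  have hcard : p ∣ Nat.card (V ⧸ W) := by
    rw [Module.natCard_eq_pow_finrank (K := ZMod p), Nat.card_zmod]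
    exact dvd_pow_self p finrank_pos.ne'
  obtain ⟨b, hb, hb0⟩ := hσ.exists_fixed_point_of_prime_dvd_card_of_fixed_point (V ⧸ W) hcard
    (a := 0) fun g => smul_zero g
  obtain ⟨u, rfl⟩ := W.mkQ_surjective b
  refine ⟨u, fun hu => hb0 ((Submodule.Quotient.mk_eq_zero W).2 hu).symm, fun g => ?_⟩
  exact (Submodule.Quotient.eq W).1 (hb ⟨σ.toHomUnits g, g, rfl⟩)

end LinearAlgebra

/-! ### The conjugation action on characters -/

section Conjugation

variable {Γ k : Type*} [Group Γ] [CommRing k] {B R : Subgroup Γ} {f : Γ → k} {t : Γ}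

/-- The conjugation action of `Γ` on functions, `(t • f) x = f (t⁻¹ * x * t)`. -/
def conjRep (k Γ : Type*) [Group Γ] [CommRing k] : Γ →* Module.End k (Γ → k) where
  toFun t := LinearMap.funLeft k k fun x => t⁻¹ * x * t
  map_one' := LinearMap.ext fun f => funext fun x => congrArg f (by group)
  map_mul' s t := LinearMap.ext fun f => funext fun x => congrArg f (by group)

lemma conjRep_apply (t : Γ) (f : Γ → k) (x : Γ) : conjRep k Γ t f x = f (t⁻¹ * x * t) := rfl

lemma conjRep_mem_homOn (ht : t ∈ Subgroup.normalizer (B : Set Γ)) (hf : f ∈ HomOn k B) :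
    conjRep k Γ t f ∈ HomOn k B := by
  have ht : ∀ x, x ∈ B ↔ t⁻¹ * x * t ∈ B := Subgroup.mem_normalizer_iff''.1 ht
  refine ⟨fun x hx => HomOn.apply_of_notMem hf (mt (ht x).2 hx), fun x hx y hy => ?_⟩
  simp only [conjRep_apply, ← HomOn.map_mul hf ((ht x).1 hx) ((ht y).1 hy)]
  congr 1
  group

lemma conjRep_eq_self (hf : f ∈ HomOn k B) (ht : t ∈ B) : conjRep k Γ t f = f :=
  HomOn.ext (conjRep_mem_homOn (Subgroup.le_normalizer ht) hf) hf fun x hx => by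
    simpa [conjRep_apply] using HomOn.map_conj hf (inv_mem ht) hx

lemma mem_invHom_iff_conjRep [R.Normal] :
    f ∈ InvHom k B R ↔ f ∈ HomOn k R ∧ ∀ b ∈ B, conjRep k Γ b f = f := by
  refine ⟨fun hf => ⟨hf.1, fun b hb => ?_⟩, fun hf => ⟨hf.1, fun b hb x _ => ?_⟩⟩
  · refine HomOn.ext (conjRep_mem_homOn (Subgroup.normalizer_eq_top R ▸ Subgroup.mem_top b) hf.1)
      hf.1 fun x hx => ?_
    simpa [conjRep_apply] using hf.2 b⁻¹ (inv_mem hb) x hx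
  · simpa [conjRep_apply] using congrFun (hf.2 b⁻¹ (inv_mem hb)) x

lemma conjRep_mem_invHom [hB : B.Normal] [R.Normal] (t : Γ) (hf : f ∈ InvHom k B R) :
    conjRep k Γ t f ∈ InvHom k B R := by
  rw [mem_invHom_iff_conjRep] at hf ⊢
  refine ⟨conjRep_mem_homOn (Subgroup.normalizer_eq_top R ▸ Subgroup.mem_top t) hf.1,
    fun b hb => ?_⟩
  have hcomm : b * t = t * (t⁻¹ * b * t) := by group
  rw [← Module.End.mul_apply, ← map_mul, hcomm, map_mul, Module.End.mul_apply,
    hf.2 _ (by simpa using hB.conj_mem b hb t⁻¹)]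

/-- The conjugation action of `Γ` on `InvHom k B R`, for normal `B` and `R`. -/
def conjInvHom (k : Type*) [CommRing k] (B R : Subgroup Γ) [B.Normal] [R.Normal] :
    Γ →* Module.End k (InvHom k B R) where
  toFun t := (conjRep k Γ t).restrict fun _ hf => conjRep_mem_invHom t hf
  map_one' := LinearMap.ext fun f => Subtype.ext (by simp)
  map_mul' s t := LinearMap.ext fun f => Subtype.ext (by simp)

lemma conjInvHom_eq_one [B.Normal] [R.Normal] (ht : t ∈ B) : conjInvHom k B R t = 1 :=
  LinearMap.ext fun f => Subtype.ext ((mem_invHom_iff_conjRep.1 f.2).2 t ht)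

lemma conjRep_restrict_pow_eq_one {Y : Submodule k (Γ → k)} (hY : Y ≤ HomOn k B)
    (hYt : ∀ f ∈ Y, conjRep k Γ t f ∈ Y) {n : ℕ} (hn : t ^ n ∈ B) :
    (conjRep k Γ t).restrict hYt ^ n = 1 := by
  ext1 f
  rw [Module.End.pow_restrict]
  refine Subtype.ext ?_
  rw [LinearMap.coe_restrict_apply, ← map_pow, conjRep_eq_self (hY f.2) hn, Module.End.one_apply]

end Conjugation

section Dichotomy

variable {Γ : Type*} [Group Γ] {p : ℕ} [hp : Fact p.Prime] {B R : Subgroup Γ} {t : Γ}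

lemma exists_notMem_of_index_eq_prime (hB : B.index = p) : ∃ t, t ∉ B := by
  by_contra! h
  rw [(Subgroup.eq_top_iff' B).2 h, Subgroup.index_top] at hB
  exact hp.out.one_lt.ne hB

lemma eq_top_of_index_eq_prime (hB : B.index = p) {S : Subgroup Γ} (hBS : B ≤ S) (htB : t ∉ B)
    (htS : t ∈ S) : S = ⊤ := by
  have hmul := Subgroup.relIndex_mul_index hBS
  rcases (Nat.dvd_prime hp.out).1 (Dvd.intro _ (hmul.trans hB)) with hrel | hrel
  · exact absurd (Subgroup.relIndex_eq_one.1 hrel htS) htB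
  · rw [hrel, hB] at hmul
    exact Subgroup.index_eq_one.1 ((Nat.mul_eq_left hp.out.ne_zero).1 hmul)

lemma map_subtype_ker_conjInvHom_sub_one {k : Type*} [CommRing k] [B.Normal] [R.Normal]
    (hB : B.index = p) (ht : t ∉ B) :
    (LinearMap.ker (conjInvHom k B R t - 1)).map (InvHom k B R).subtype = InvHom k ⊤ R := by
  ext f
  constructor
  · rintro ⟨⟨f, hf⟩, hker, rfl⟩
    have htf : conjRep k Γ t f = f := sub_eq_zero.1 (congrArg Subtype.val hker)
    let stab : Subgroup Γ :=
      (MulAction.stabilizer (Module.End k (Γ → k))ˣ f).comap (conjRep k Γ).toHomUnits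
    have hstab : stab = ⊤ := eq_top_of_index_eq_prime hB
      (fun b hb => (mem_invHom_iff_conjRep.1 hf).2 b hb) ht htf
    exact mem_invHom_iff_conjRep.2 ⟨hf.1, fun b _ => hstab.ge (Subgroup.mem_top b)⟩
  · intro hf
    refine ⟨⟨f, invHom_anti le_top hf⟩, Subtype.ext ?_, rfl⟩
    exact sub_eq_zero.2 ((mem_invHom_iff_conjRep.1 hf).2 t (Subgroup.mem_top t))

lemma finrank_invHom_eq_one_or_eq_prime {r : Γ} (hR : R = Subgroup.normalClosure {r}) [B.Normal]
    (hB : B.index = p) (htop : finrank ℚ (InvHom ℚ ⊤ R) = 1) :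
    finrank ℚ (InvHom ℚ B R) = 1 ∨ finrank ℚ (InvHom ℚ B R) = p := by
  have : R.Normal := hR ▸ Subgroup.normalClosure_normal
  have : B.FiniteIndex := ⟨hB.trans_ne hp.out.ne_zero⟩
  have := invHom_finite (k := ℚ) (B := B) hR
  obtain ⟨t, ht⟩ := exists_notMem_of_index_eq_prime hB
  refine finrank_eq_one_or_eq_prime (conjInvHom ℚ B R t) ?_ ?_
    ((finrank_invHom_le_index hR).trans_eq hB)
  · rw [← map_pow, conjInvHom_eq_one (hB ▸ B.pow_index_mem t)]
  · rw [← htop, ← map_subtype_ker_conjInvHom_sub_one hB ht, Submodule.finrank_map_subtype_eq]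

-- If the inclusion is strict, there is `u` outside `InvHom ⊤ R` such that all `g • u - u` lie
-- in `InvHom ⊤ R`; then `g ↦ (g • u - u) r` is a character `c` with `u ∈ InvHom (ker c) R`.
lemma invHom_le_invHom_top {r : Γ} (hR : R = Subgroup.normalClosure {r}) [B.Normal]
    [B.FiniteIndex] (hRB : R ≤ B) (hB : ∀ x, ∃ n : ℕ, x ^ p ^ n ∈ B)
    (hker : ∀ c (hc : c ∈ HomVanishing (ZMod p) ⊤ R),
      InvHom (ZMod p) (kerOn hc.1) R ≤ InvHom (ZMod p) ⊤ R) :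
    InvHom (ZMod p) B R ≤ InvHom (ZMod p) ⊤ R := by
  have : R.Normal := hR ▸ Subgroup.normalClosure_normal
  have := invHom_finite (k := ZMod p) (B := B) hR
  let W := (InvHom (ZMod p) ⊤ R).submoduleOf (InvHom (ZMod p) B R)
  have hWfix {w : Γ → ZMod p} (hw : w ∈ InvHom (ZMod p) ⊤ R) (g : Γ) : conjRep _ Γ g w = w :=
    (mem_invHom_iff_conjRep.1 hw).2 g (Subgroup.mem_top g)
  by_contra hne
  obtain ⟨u, huW, hu⟩ := exists_notMem_forall_sub_mem (W := W) (conjInvHom (ZMod p) B R)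
    (fun g => (hB g).imp fun n hn => by rw [← map_pow, conjInvHom_eq_one hn])
    (mt Submodule.submoduleOf_eq_top.1 hne) fun g w hw =>
      show conjRep _ Γ g w.1 ∈ InvHom (ZMod p) ⊤ R from (hWfix hw g).symm ▸ hw
  replace hu : ∀ g, conjRep _ Γ g u.1 - u.1 ∈ InvHom (ZMod p) ⊤ R := hu
  let c : Γ → ZMod p := fun g => (conjRep _ Γ g u.1 - u.1) r
  have hc : c ∈ HomVanishing (ZMod p) ⊤ R := by
    refine ⟨⟨fun x hx => absurd (Subgroup.mem_top x) hx, fun x _ y _ => ?_⟩, fun x hx => ?_⟩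
    · have hsum : conjRep _ Γ (x * y) u.1 - u.1 =
          conjRep _ Γ x (conjRep _ Γ y u.1 - u.1) + (conjRep _ Γ x u.1 - u.1) := by
        rw [map_mul, Module.End.mul_apply, map_sub, sub_add_sub_cancel]
      simp only [c, hsum, hWfix (hu y), Pi.add_apply, add_comm]
    · simp only [c, (mem_invHom_iff_conjRep.1 u.2).2 x (hRB hx), sub_self, Pi.zero_apply]
  refine huW (hker c hc (mem_invHom_iff_conjRep.2 ⟨u.2.1, fun b hb => sub_eq_zero.1 ?_⟩))
  refine HomOn.eq_zero (hu b).1 fun x hx => ?_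
  refine apply_eq_zero_of_mem_normalClosure hR le_rfl (hu b).1 (fun g => ?_) hx
  rw [(hu b).2 g (Subgroup.mem_top g) r (mem_of_eq_normalClosure hR)]
  exact hb.2

end Dichotomy

/-! ### Characters of the kernel of a mod `p` character -/

section KernelCharacter

variable {G : Type*} [Group G] {p : ℕ} [hp : Fact p.Prime] {B : Subgroup G} {t : G}

lemma le_normalizer_kerOn {k : Type*} [CommRing k] {χ : G → k} (hχ : χ ∈ HomOn k B) :
    B ≤ Subgroup.normalizer (kerOn hχ : Set G) := fun t ht =>
  Subgroup.mem_normalizer_iff.2 fun x => by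
    have hB : t * x * t⁻¹ ∈ B ↔ x ∈ B := by
      rw [B.mul_mem_cancel_right (B.inv_mem ht), B.mul_mem_cancel_left ht]
    rw [mem_kerOn, mem_kerOn, hB]
    exact and_congr_right fun hx => by rw [HomOn.map_conj hχ ht hx]

lemma kerOn_restrict_kerOn {k : Type*} [CommRing k] {χ₁ χ₂ : G → k} (h₁ : χ₁ ∈ HomOn k B)
    (h₂ : χ₂ ∈ HomOn k B) :
    kerOn (restrict_mem_homOn_of_le (kerOn_le h₁) h₂) = kerOn h₁ ⊓ kerOn h₂ := by
  ext x
  exact ⟨fun hx => ⟨hx.1, hx.1.1, restrict_of_mem (f := χ₂) hx.1 ▸ hx.2⟩,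
    fun hx => ⟨hx.1, (restrict_of_mem hx.1).trans hx.2.2⟩⟩

section CharacterOfKernel

variable {χ : G → ZMod p} (hχ : χ ∈ HomOn (ZMod p) B)

include hχ

lemma pow_prime_mem_kerOn (ht : t ∈ B) : t ^ p ∈ kerOn hχ :=
  ⟨pow_mem ht p, by rw [HomOn.map_pow hχ ht, CharP.cast_eq_zero, zero_mul]⟩

variable (ht : t ∈ B) (hχt : χ t = 1)

include ht hχt

lemma zpow_mem_kerOn_iff {n : ℤ} : t ^ n ∈ kerOn hχ ↔ (p : ℤ) ∣ n := by
  rw [mem_kerOn, HomOn.map_zpow hχ ht, hχt, mul_one, ZMod.intCast_zmod_eq_zero_iff_dvd]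
  exact and_iff_right (zpow_mem ht n)

lemma mul_zpow_neg_val_mem_kerOn {x : G} (hx : x ∈ B) : x * t ^ (-((χ x).val : ℤ)) ∈ kerOn hχ := by
  refine ⟨mul_mem hx (zpow_mem ht _), ?_⟩
  rw [HomOn.map_mul hχ hx (zpow_mem ht _), HomOn.map_zpow hχ ht, hχt]
  simp

lemma le_of_kerOn_le {A : Subgroup G} (hA : kerOn hχ ≤ A) (htA : t ∈ A) : B ≤ A := fun x hx => by
  simpa [mul_assoc] using
    mul_mem (hA (mul_zpow_neg_val_mem_kerOn hχ ht hχt hx)) (zpow_mem htA ((χ x).val : ℤ))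

section Extension

variable {k : Type*} [CommRing k] {f : G → k} (hf : f ∈ HomOn k (kerOn hχ))
  (htp : f (t ^ p) = 0)

include hf htp

lemma apply_mul_zpow_eq {x : G} {m n : ℤ} (hm : x * t ^ m ∈ kerOn hχ) (hn : x * t ^ n ∈ kerOn hχ) :
    f (x * t ^ m) = f (x * t ^ n) := by
  have hmn : t ^ (m - n) ∈ kerOn hχ := by
    have : (x * t ^ n)⁻¹ * (x * t ^ m) = t ^ (m - n) := by group
    exact this ▸ mul_mem (inv_mem hn) hm
  obtain ⟨c, hc⟩ := (zpow_mem_kerOn_iff hχ ht hχt).1 hmn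
  have hsplit : x * t ^ m = x * t ^ n * (t ^ p) ^ c := by
    rw [← zpow_natCast, ← zpow_mul, ← hc]
    group
  have htpB := pow_prime_mem_kerOn hχ ht
  rw [hsplit, HomOn.map_mul hf hn (zpow_mem htpB c), HomOn.map_zpow hf htpB, htp, mul_zero,
    add_zero]

-- The extension sends `x` to `f (x * t ^ n)` for any `n` with `x * t ^ n ∈ kerOn hχ`.
lemma exists_restrict_kerOn_eq (hinv : conjRep k G t f = f) :
    ∃ z ∈ HomOn k B, restrict (kerOn hχ) z = f ∧ z t = 0 := by
  let e : G → ℤ := fun x => -((χ x).val : ℤ)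
  let z : G → k := fun x => f (x * t ^ e x)
  have he : ∀ x ∈ B, x * t ^ e x ∈ kerOn hχ := fun x => mul_zpow_neg_val_mem_kerOn hχ ht hχt
  have hz : ∀ x ∈ B, ∀ n : ℤ, x * t ^ n ∈ kerOn hχ → z x = f (x * t ^ n) := fun x hx n =>
    apply_mul_zpow_eq hχ ht hχt hf htp (he x hx)
  have hconj : ∀ (n : ℤ) x, f (t ^ (-n) * x * t ^ n) = f x := fun n x => by
    have hstab : (conjRep k G).toHomUnits t ∈ MulAction.stabilizer (Module.End k (G → k))ˣ f :=
      hinv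
    have hpow := zpow_mem hstab n
    rw [← map_zpow] at hpow
    rw [zpow_neg]
    exact congrFun (MulAction.mem_stabilizer_iff.1 hpow) x
  have hadd : ∀ x ∈ B, ∀ y ∈ B, z (x * y) = z x + z y := by
    intro x hx y hy
    have hy' : t ^ (-e x) * (y * t ^ e y) * t ^ e x ∈ kerOn hχ := by
      rw [zpow_neg]
      exact (Subgroup.mem_normalizer_iff''.1
        (le_normalizer_kerOn hχ (zpow_mem ht (e x))) _).1 (he y hy)
    have hsplit : x * y * t ^ (e y + e x) =
        x * t ^ e x * (t ^ (-e x) * (y * t ^ e y) * t ^ e x) := by group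
    rw [hz _ (mul_mem hx hy) (e y + e x) (hsplit ▸ mul_mem (he x hx) hy'), hsplit,
      HomOn.map_mul hf (he x hx) hy', hconj]
  have hzB := restrict_mem_homOn hadd
  refine ⟨restrict B z, hzB, ?_, ?_⟩
  · refine HomOn.ext (restrict_mem_homOn_of_le (kerOn_le hχ) hzB) hf fun x hx => ?_
    rw [restrict_of_mem hx, restrict_of_mem hx.1, hz x hx.1 0 (by simpa using hx), zpow_zero,
      mul_one]
  · rw [restrict_of_mem ht, hz t ht (-1) (by simp [one_mem]), zpow_neg_one, mul_inv_cancel,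
      HomOn.map_one hf]

end Extension

lemma finrank_add_prime_le (Y Z : Submodule (ZMod p) (G → ZMod p)) [Module.Finite (ZMod p) Y]
    [Module.Finite (ZMod p) Z] (hY : Y ≤ HomOn (ZMod p) (kerOn hχ))
    (hYt : ∀ f ∈ Y, conjRep (ZMod p) G t f ∈ Y)
    (hYZ : ∀ z ∈ HomOn (ZMod p) B, restrict (kerOn hχ) z ∈ Y → z ∈ Z) (hχZ : χ ∈ Z) :
    finrank (ZMod p) Y + p ≤ p * finrank (ZMod p) Z + 1 := by
  let Y₀ := Y ⊓ LinearMap.ker (LinearMap.proj (R := ZMod p) (φ := fun _ : G => ZMod p) (t ^ p))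
  let Z₀ := Z ⊓ LinearMap.ker (LinearMap.proj (R := ZMod p) (φ := fun _ : G => ZMod p) t)
  have hYdim : finrank (ZMod p) Y ≤ finrank (ZMod p) Y₀ + 1 :=
    finrank_le_finrank_inf_ker_add_one Y _
  have hZdim : finrank (ZMod p) Z = finrank (ZMod p) Z₀ + 1 :=
    finrank_eq_finrank_inf_ker_add_one Z _ hχZ (hχt.trans_ne one_ne_zero)
  have : Module.Finite (ZMod p) Y₀ := Submodule.finiteDimensional_of_le (inf_le_left : Y₀ ≤ Y)
  have : Module.Finite (ZMod p) Z₀ := Submodule.finiteDimensional_of_le (inf_le_left : Z₀ ≤ Z)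
  have hY₀t : ∀ f ∈ Y₀, conjRep (ZMod p) G t f ∈ Y₀ := fun f hf =>
    ⟨hYt f hf.1, (congrArg f (by group : t⁻¹ * t ^ p * t = t ^ p)).trans hf.2⟩
  have hT := conjRep_restrict_pow_eq_one (inf_le_left.trans hY) hY₀t (pow_prime_mem_kerOn hχ ht)
  have hfixed : finrank (ZMod p) (LinearMap.ker ((conjRep (ZMod p) G t).restrict hY₀t - 1)) ≤
      finrank (ZMod p) Z₀ := by
    rw [← Submodule.finrank_map_subtype_eq Y₀]
    refine (Submodule.finrank_mono (t := Z₀.map (restrict (kerOn hχ))) ?_).trans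
      (Submodule.finrank_map_le _ _)
    rintro _ ⟨f, hf, rfl⟩
    obtain ⟨z, hz, hzf, hzt⟩ := exists_restrict_kerOn_eq hχ ht hχt (hY f.2.1) f.2.2
      (sub_eq_zero.1 (congrArg Subtype.val hf))
    exact ⟨z, ⟨hYZ z hz (hzf ▸ f.2.1), hzt⟩, hzf⟩
  have hle : finrank (ZMod p) Y₀ ≤ p * finrank (ZMod p) Z₀ :=
    (finrank_le_mul_finrank_ker_sub_one hT).trans (Nat.mul_le_mul_left p hfixed)
  rw [hZdim, mul_add]
  lia

end CharacterOfKernel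

lemma exists_eq_smul_of_restrict_kerOn_eq_zero {χ₁ χ₂ : G → ZMod p} (h₁ : χ₁ ∈ HomOn (ZMod p) B)
    (h₂ : χ₂ ∈ HomOn (ZMod p) B) (h0 : χ₁ ≠ 0) (h : restrict (kerOn h₁) χ₂ = 0) :
    ∃ a : ZMod p, χ₂ = a • χ₁ := by
  obtain ⟨t, ht, hχt⟩ := exists_apply_eq_one h₁ h0
  refine ⟨χ₂ t, HomOn.ext h₂ (Submodule.smul_mem _ _ h₁) fun x hx => ?_⟩
  have hker := mul_zpow_neg_val_mem_kerOn h₁ ht hχt hx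
  have hx0 : χ₂ (x * t ^ (-((χ₁ x).val : ℤ))) = 0 :=
    (restrict_of_mem hker).symm.trans (congrFun h _)
  rw [HomOn.map_mul h₂ hx (zpow_mem ht _), HomOn.map_zpow h₂ ht, Int.cast_neg, Int.cast_natCast,
    ZMod.natCast_zmod_val] at hx0
  rw [Pi.smul_apply, smul_eq_mul]
  linear_combination hx0

lemma kerOn_eq_of_restrict_kerOn_eq_zero {χ₁ χ₂ : G → ZMod p} (h₁ : χ₁ ∈ HomOn (ZMod p) B)
    (h₂ : χ₂ ∈ HomOn (ZMod p) B) (h0₁ : χ₁ ≠ 0) (h0₂ : χ₂ ≠ 0) (h : restrict (kerOn h₁) χ₂ = 0) :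
    kerOn h₁ = kerOn h₂ := by
  obtain ⟨a, rfl⟩ := exists_eq_smul_of_restrict_kerOn_eq_zero h₁ h₂ h0₁ h
  have ha : a ≠ 0 := fun ha => h0₂ (by rw [ha, zero_smul])
  ext x
  simp [mem_kerOn, ha]

end KernelCharacter

/-! ### Groups whose finite-index subgroups are one-relator -/

section LargeMelnikov

variable {G : Type*} [Group G]

/-- Every finite-index subgroup of `G` has a one-relator presentation with nontrivial relator, and
the number of generators in such a presentation exceeds the index by at least two. -/
structure IsLargeMelnikov (G : Type*) [Group G] : Prop where
  exists_presentation (K : Subgroup G) [K.FiniteIndex] : ∃ m, HasOneRelatorPresentation K m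
  index_add_two_le (K : Subgroup G) [K.FiniteIndex] {m : ℕ} :
    HasOneRelatorPresentation K m → K.index + 2 ≤ m

/-- The least number of generators in a one-relator presentation of `K` with nontrivial relator;
the junk value `0` if there is none. -/
noncomputable def presRank (K : Subgroup G) : ℕ := sInf {m | HasOneRelatorPresentation K m}

instance finiteIndex_comap {Γ : Type*} [Group Γ] (π : Γ →* G) (N : Subgroup G) [N.FiniteIndex] :
    (N.comap π).FiniteIndex :=
  ⟨by rw [Subgroup.index_comap]
      exact (Subgroup.isFiniteRelIndex_of_finiteIndex (H := N)).relIndex_ne_zero⟩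

section Presentation

variable {K N : Subgroup G} {m : ℕ} {r : FreeGroup (Fin m)} {π : FreeGroup (Fin m) →* G}

lemma IsOneRelatorPresentation.apply_mem (h : IsOneRelatorPresentation K r π)
    (x : FreeGroup (Fin m)) : π x ∈ K := h.range_eq.le ⟨x, rfl⟩

lemma IsOneRelatorPresentation.comap_eq_top (h : IsOneRelatorPresentation K r π) :
    K.comap π = ⊤ := eq_top_iff.2 fun x _ => h.apply_mem x

lemma IsOneRelatorPresentation.index_comap (h : IsOneRelatorPresentation K r π) (N : Subgroup G) :
    (N.comap π).index = N.relIndex K := by rw [Subgroup.index_comap, h.range_eq]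

lemma IsOneRelatorPresentation.normal_comap (h : IsOneRelatorPresentation K r π)
    (hN : K ≤ Subgroup.normalizer (N : Set G)) : (N.comap π).Normal :=
  ⟨fun x hx g => by
    simpa only [Subgroup.mem_comap, map_mul, map_inv] using
      (Subgroup.mem_normalizer_iff.1 (hN (h.apply_mem g)) _).1 hx⟩

variable (k : Type*) [Field k]

lemma IsOneRelatorPresentation.finrank_homOn_add_finrank_map_restrict
    (h : IsOneRelatorPresentation K r π) :
    finrank k ((HomOn k ⊤).map (restrict π.ker)) + finrank k (HomOn k K) = m := by
  have := homOn_finite_of_finiteIndex (k := k) (⊤ : Subgroup (FreeGroup (Fin m)))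
  have hcomap := finrank_homVanishing_comap (k := k) π h.range_eq.ge
  rw [h.comap_eq_top] at hcomap
  rw [← hcomap, ← homOn_inf_ker_restrict, finrank_map_add_finrank_inf_ker, finrank_homOn_top,
    Fintype.card_fin]

lemma HasOneRelatorPresentation.finrank_homOn_le (h : HasOneRelatorPresentation K m) :
    finrank k (HomOn k K) ≤ m := by
  obtain ⟨r, π, h⟩ := h
  exact (h.finrank_homOn_add_finrank_map_restrict k).symm ▸ Nat.le_add_left _ _

lemma HasOneRelatorPresentation.le_finrank_homOn_add_one (h : HasOneRelatorPresentation K m) :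
    m ≤ finrank k (HomOn k K) + 1 := by
  obtain ⟨r, π, h⟩ := h
  have := invHom_finite (k := k) (B := ⊤) h.ker_eq
  have hle := (Submodule.finrank_mono (map_restrict_homOn_le_invHom (k := k) (R := π.ker)
    le_top)).trans (finrank_invHom_le_index h.ker_eq)
  have hsum := h.finrank_homOn_add_finrank_map_restrict k
  rw [Subgroup.index_top] at hle
  lia

end Presentation

lemma not_schreier_of_two_step {p l a b m : ℕ} (hp2 : 2 ≤ p)
    (hla : l + p = p * a + 1 ∨ l + 2 * p = p * a + 2)
    (hlb : l + p = p * b + 1 ∨ l + 2 * p = p * b + 2)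
    (ha : a + p = p * m + 1) : b + 2 * p ≠ p * m + 2 := by
  intro hb
  zify at *
  have ha' : (a : ℤ) = p * m + 1 - p := by linarith
  have hb' : (b : ℤ) = p * m + 2 - 2 * p := by linarith
  rw [ha'] at hla
  rw [hb'] at hlb
  rcases hla with hla | hla <;> rcases hlb with hlb | hlb <;> nlinarith

variable (H : IsLargeMelnikov G) {K : Subgroup G} [K.FiniteIndex] {p : ℕ} [hp : Fact p.Prime]
  {χ : G → ZMod p}

include H

namespace IsLargeMelnikov

lemma hasOneRelatorPresentation (K : Subgroup G) [K.FiniteIndex] :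
    HasOneRelatorPresentation K (presRank K) := Nat.sInf_mem (H.exists_presentation K)

lemma index_add_two_le_presRank (K : Subgroup G) [K.FiniteIndex] : K.index + 2 ≤ presRank K :=
  H.index_add_two_le K (H.hasOneRelatorPresentation K)

lemma three_le_presRank (K : Subgroup G) [K.FiniteIndex] : 3 ≤ presRank K := by
  have := H.index_add_two_le_presRank K
  have := Nat.pos_of_ne_zero (Subgroup.FiniteIndex.index_ne_zero (H := K))
  lia

lemma finite_homOn (k : Type*) [Field k] (K : Subgroup G) [K.FiniteIndex] :
    Module.Finite k (HomOn k K) := by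
  obtain ⟨r, π, h⟩ := H.hasOneRelatorPresentation K
  exact homOn_finite (h.range_eq ▸ (Group.fg_iff_subgroup_fg _).1 (Group.fg_range π))

lemma finrank_invHom_add_presRank (k : Type*) [Field k] {M : Subgroup G}
    {r : FreeGroup (Fin (presRank M))} {π : FreeGroup (Fin (presRank M)) →* G}
    (h : IsOneRelatorPresentation M r π) (hK : K ≤ M) :
    finrank k (InvHom k (K.comap π) π.ker) + presRank K + K.relIndex M =
      presRank M * K.relIndex M + 2 :=
  h.index_comap K ▸ finrank_invHom_comap h hK (H.hasOneRelatorPresentation K)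

lemma presRank_kerOn_eq_or (hχ : χ ∈ HomOn (ZMod p) K) (h0 : χ ≠ 0) :
    presRank (kerOn hχ) + p = p * presRank K + 1 ∨
      presRank (kerOn hχ) + 2 * p = p * presRank K + 2 := by
  obtain ⟨r, π, h⟩ := H.hasOneRelatorPresentation K
  have hdim := H.finrank_invHom_add_presRank ℚ h (kerOn_le hχ)
  have := h.normal_comap (le_normalizer_kerOn hχ)
  have hdichotomy := finrank_invHom_eq_one_or_eq_prime h.ker_eq
    ((h.index_comap _).trans (relIndex_kerOn hχ h0))
    (finrank_invHom_top h.relator_ne_one h.ker_eq)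
  rw [relIndex_kerOn hχ h0, mul_comm (presRank K)] at hdim
  lia

lemma exists_restrict_kerOn_ne_zero (hχ : χ ∈ HomOn (ZMod p) K) (h0 : χ ≠ 0) :
    ∃ χ₂ ∈ HomOn (ZMod p) K, restrict (kerOn hχ) χ₂ ≠ 0 := by
  by_contra! hcon
  have hspan : HomOn (ZMod p) K ≤ Submodule.span (ZMod p) {χ} := fun χ₂ h₂ => by
    obtain ⟨a, rfl⟩ := exists_eq_smul_of_restrict_kerOn_eq_zero hχ h₂ h0 (hcon χ₂ h₂)
    exact Submodule.smul_mem _ _ (Submodule.mem_span_singleton_self χ)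
  have hle := Submodule.finrank_mono hspan
  rw [finrank_span_singleton h0] at hle
  have := (H.hasOneRelatorPresentation K).le_finrank_homOn_add_one (ZMod p)
  have := H.three_le_presRank K
  lia

end IsLargeMelnikov

/-- Some index-`p` subgroup of `K` satisfies the Schreier index formula of free groups. The aim is
to show that this never happens under `IsLargeMelnikov G`. -/
def HasSchreierKernel (p : ℕ) [Fact p.Prime] (K : Subgroup G) : Prop :=
  ∃ (χ : G → ZMod p) (hχ : χ ∈ HomOn (ZMod p) K),
    χ ≠ 0 ∧ presRank (kerOn hχ) + p = p * presRank K + 1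

namespace HasSchreierKernel

variable (hK : HasSchreierKernel p K)

include hK

lemma presRank_kerOn (hχ : χ ∈ HomOn (ZMod p) K) (h0 : χ ≠ 0) :
    presRank (kerOn hχ) + p = p * presRank K + 1 := by
  obtain ⟨χ₁, h₁, h0₁, hrank⟩ := hK
  by_cases heq : kerOn h₁ = kerOn hχ
  · rwa [← heq]
  have hχ' := mt (kerOn_eq_of_restrict_kerOn_eq_zero h₁ hχ h0₁ h0) heq
  have h₁' := mt (kerOn_eq_of_restrict_kerOn_eq_zero hχ h₁ h0 h0₁) (Ne.symm heq)
  have hstep₁ := H.presRank_kerOn_eq_or (restrict_mem_homOn_of_le (kerOn_le h₁) hχ) hχ'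
  have hstep := H.presRank_kerOn_eq_or (restrict_mem_homOn_of_le (kerOn_le hχ) h₁) h₁'
  rw [kerOn_restrict_kerOn h₁ hχ] at hstep₁
  rw [kerOn_restrict_kerOn hχ h₁, inf_comm] at hstep
  exact (H.presRank_kerOn_eq_or hχ h0).resolve_right
    (not_schreier_of_two_step hp.out.two_le hstep₁ hstep hrank)

lemma invHom_kerOn_le {r : FreeGroup (Fin (presRank K))} {π : FreeGroup (Fin (presRank K)) →* G}
    (h : IsOneRelatorPresentation K r π) {c : FreeGroup (Fin (presRank K)) → ZMod p}
    (hc : c ∈ HomVanishing (ZMod p) ⊤ π.ker) :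
    InvHom (ZMod p) (kerOn hc.1) π.ker ≤ InvHom (ZMod p) ⊤ π.ker := by
  obtain ⟨χ, hχ, rfl⟩ := exists_comp_eq_of_mem_homVanishing π h.range_eq.ge
    (h.comap_eq_top.symm ▸ hc)
  have hker : kerOn hc.1 = (kerOn hχ).comap π := by
    ext x
    exact ⟨fun hx => ⟨h.apply_mem x, hx.2⟩, fun hx => ⟨trivial, hx.2⟩⟩
  rw [hker]
  by_cases h0 : χ = 0
  · rw [(eq_top_iff.2 fun x _ => ⟨h.apply_mem x, congrFun h0 _⟩ : (kerOn hχ).comap π = ⊤)]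
  have hdim := H.finrank_invHom_add_presRank (ZMod p) h (kerOn_le hχ)
  have hrank := hK.presRank_kerOn H hχ h0
  rw [relIndex_kerOn hχ h0, mul_comm (presRank K)] at hdim
  have := invHom_finite (k := ZMod p) (B := (kerOn hχ).comap π) h.ker_eq
  refine (Submodule.eq_of_le_of_finrank_eq (invHom_anti le_top) ?_).ge
  rw [finrank_invHom_top h.relator_ne_one h.ker_eq]
  lia

lemma hasSchreierKernel_kerOn (hχ : χ ∈ HomOn (ZMod p) K) (h0 : χ ≠ 0) :
    HasSchreierKernel p (kerOn hχ) := by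
  obtain ⟨χ₂, h₂, h0₂⟩ := H.exists_restrict_kerOn_ne_zero hχ h0
  have h₂' := restrict_mem_homOn_of_le (kerOn_le hχ) h₂
  refine ⟨_, h₂', h0₂, ?_⟩
  obtain ⟨r, π, h⟩ := H.hasOneRelatorPresentation K
  have hnormal : ((kerOn h₂').comap π).Normal := h.normal_comap <| by
    rw [kerOn_restrict_kerOn hχ h₂]
    exact (le_inf (le_normalizer_kerOn hχ) (le_normalizer_kerOn h₂)).trans
      (Subgroup.inf_normalizer_le_normalizer_inf)
  have hpow (x : FreeGroup (Fin (presRank K))) :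
      x ^ p ^ 1 ∈ (kerOn h₂').comap π := by
    rw [kerOn_restrict_kerOn hχ h₂, pow_one, Subgroup.mem_comap, map_pow]
    exact ⟨pow_prime_mem_kerOn hχ (h.apply_mem x), pow_prime_mem_kerOn h₂ (h.apply_mem x)⟩
  have hinv := invHom_le_invHom_top h.ker_eq (MonoidHom.ker_le_comap π _) (fun x => ⟨1, hpow x⟩)
    fun c hc => hK.invHom_kerOn_le H h hc
  have hdim := H.finrank_invHom_add_presRank (ZMod p) h ((kerOn_le h₂').trans (kerOn_le hχ))
  have hrank := congrArg (p * ·) (hK.presRank_kerOn H hχ h0)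
  rw [hinv.antisymm (invHom_anti le_top), finrank_invHom_top h.relator_ne_one h.ker_eq,
    ← Subgroup.relIndex_mul_relIndex _ _ _ (kerOn_le h₂') (kerOn_le hχ), relIndex_kerOn hχ h0,
    relIndex_kerOn h₂' h0₂] at hdim
  simp only [mul_add] at hrank
  lia

lemma finrank_homOn : finrank (ZMod p) (HomOn (ZMod p) K) = presRank K := by
  refine le_antisymm ((H.hasOneRelatorPresentation K).finrank_homOn_le _) ?_
  obtain ⟨χ, hχ, h0, hrank⟩ := hK
  obtain ⟨t, ht, hχt⟩ := exists_apply_eq_one hχ h0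
  have := H.finite_homOn (ZMod p) K
  have := H.finite_homOn (ZMod p) (kerOn hχ)
  have hupper := finrank_add_prime_le hχ ht hχt _ (HomOn (ZMod p) K) le_rfl
    (fun f => conjRep_mem_homOn (le_normalizer_kerOn hχ ht)) (fun z hz _ => hz) hχ
  have hlower :=
    (H.hasOneRelatorPresentation (kerOn hχ)).le_finrank_homOn_add_one (ZMod p)
  have := hp.out.two_le
  by_contra! hlt
  have := Nat.mul_le_mul_left p hlt
  rw [Nat.succ_eq_add_one, mul_add] at this
  omega

lemma homVanishing_comap_eq_homOn {M : Subgroup G} (hKM : K ≤ M)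
    {r : FreeGroup (Fin (presRank M))} {π : FreeGroup (Fin (presRank M)) →* G}
    (h : IsOneRelatorPresentation M r π)
    (hrank : presRank K + (K.comap π).index = presRank M * (K.comap π).index + 1) :
    HomVanishing (ZMod p) (K.comap π) π.ker = HomOn (ZMod p) (K.comap π) := by
  have := homOn_finite_of_finiteIndex (k := ZMod p) (K.comap π)
  refine Submodule.eq_of_le_of_finrank_eq (fun f hf => hf.1) ?_
  have hschreier := finrank_homOn_add_index (k := ZMod p) (K.comap π)
  rw [finrank_homVanishing_comap π (hKM.trans_eq h.range_eq.symm), hK.finrank_homOn H]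
  rw [Fintype.card_fin] at hschreier
  lia

end HasSchreierKernel

-- Otherwise all finite-index subgroups obtained from `K` by iterated index-`p` kernels have as many
-- mod `p` characters as their preimages in the free group, so the relator is in the kernel of every
-- map from the free group to a finite `p`-group.
lemma IsLargeMelnikov.not_hasSchreierKernel (K : Subgroup G) [K.FiniteIndex] :
    ¬ HasSchreierKernel p K := by
  intro hK
  obtain ⟨r, π, h⟩ := H.hasOneRelatorPresentation K
  obtain ⟨P, _, _, φ, hP, hφ⟩ := exists_pGroup_quotient_ne_one p h.relator_ne_one
  refine hφ (le_ker_of_kerOn_descent hP φ π.ker (fun B => ∃ N : Subgroup G, N ≤ K ∧ N.FiniteIndex ∧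
    HasSchreierKernel p N ∧ B = N.comap π ∧ presRank N + B.index = presRank K * B.index + 1) ?_
    ⟨K, le_rfl, ‹_›, hK, h.comap_eq_top.symm, by simp⟩ le_top (mem_of_eq_normalClosure h.ker_eq))
  rintro _ ⟨N, hNK, _, hN, rfl, hrank⟩ - f hf hf0
  have hf' := hf
  rw [← hN.homVanishing_comap_eq_homOn H hNK h hrank] at hf'
  refine ⟨fun x hx => ⟨MonoidHom.ker_le_comap π N hx, hf'.2 x hx⟩, ?_⟩
  obtain ⟨χ, hχ, rfl⟩ := exists_comp_eq_of_mem_homVanishing π (hNK.trans_eq h.range_eq.symm) hf'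
  have h0 : χ ≠ 0 := by
    rintro rfl
    exact hf0 rfl
  refine ⟨kerOn hχ, (kerOn_le hχ).trans hNK, inferInstance, hN.hasSchreierKernel_kerOn H hχ h0,
    rfl, ?_⟩
  have hstep := hN.presRank_kerOn H hχ h0
  have hrank' := congrArg (p * ·) hrank
  rw [index_kerOn hf hf0]
  simp only [mul_add] at hrank'
  linarith

theorem IsLargeMelnikov.presRank_kerOn (hχ : χ ∈ HomOn (ZMod p) K) (h0 : χ ≠ 0) :
    presRank (kerOn hχ) + 2 * p = p * presRank K + 2 :=
  (H.presRank_kerOn_eq_or hχ h0).resolve_left fun h => H.not_hasSchreierKernel K ⟨χ, hχ, h0, h⟩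

end LargeMelnikov

/-! ### Corestriction along a cyclic quotient -/

section CyclicSums

variable {A : Type*} {n : ℕ} [NeZero n]

lemma sum_range_natCast_zmod [AddCommMonoid A] (g : ZMod n → A) :
    ∑ i ∈ Finset.range n, g i = ∑ y, g y :=
  Finset.sum_bij' (fun i _ => (i : ZMod n)) (fun y _ => y.val) (fun _ _ => Finset.mem_univ _)
    (fun y _ => Finset.mem_range.2 (ZMod.val_lt y))
    (fun _ hi => ZMod.val_cast_of_lt (Finset.mem_range.1 hi))
    (fun y _ => ZMod.natCast_zmod_val y) (fun _ _ => rfl)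

lemma exists_sub_sub_one_eq [AddCommGroup A] {e : ZMod n → A} (he : ∑ y, e y = 0) :
    ∃ e' : ZMod n → A, ∀ y, e' y - e' (y - 1) = e y := by
  refine ⟨fun y => ∑ i ∈ Finset.range (y.val + 1), e i, fun y => ?_⟩
  change ∑ i ∈ Finset.range (y.val + 1), e i - ∑ i ∈ Finset.range ((y - 1).val + 1), e i = e y
  have hy : (((y - 1).val + 1 : ℕ) : ZMod n) = y := by
    rw [Nat.cast_add, ZMod.natCast_zmod_val, Nat.cast_one, sub_add_cancel]
  rcases lt_or_eq_of_le (Nat.add_one_le_of_lt (ZMod.val_lt (y - 1))) with hlt | heq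
  · have hval : y.val = (y - 1).val + 1 := by
      rw [← ZMod.val_cast_of_lt hlt, hy]
    rw [← hval, Finset.sum_range_succ, ZMod.natCast_zmod_val, add_sub_cancel_left]
  · have hy0 : y = 0 := by rw [← hy, heq, ZMod.natCast_self]
    rw [heq, sum_range_natCast_zmod, he, hy0]
    simp

end CyclicSums

section CyclicOrbits

variable {A P : Type*} [AddCommGroup A] [AddCommGroup P] {n : ℕ}

lemma sum_range_shift_sub_eq_zero {a : P} (ha : n • a = 0)
    (η : P → A) : ∑ i ∈ Finset.range n, (η (i • a - a) - η (i • a)) = 0 := by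
  have htel : ∀ i : ℕ, η (i • a - a) - η (i • a) =
      η (i • a - a) - η ((i + 1) • a - a) := fun i => by rw [succ_nsmul, add_sub_cancel_right]
  rw [Finset.sum_congr rfl fun i _ => htel i,
    Finset.sum_range_sub' fun i : ℕ => η (i • a - a), ha, zero_nsmul, sub_self]

lemma sum_range_neg_nsmul_eq {a : P} (ha : n • a = 0) (η : P → A) :
    ∑ i ∈ Finset.range n, η (-(i • a)) = ∑ i ∈ Finset.range n, η (i • a) := by
  rw [← Finset.sum_range_reflect]
  have hreflect : ∀ i ∈ Finset.range n, -((n - 1 - i) • a) = i • a + a := fun i hi => by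
    have hi : n - 1 - i + (i + 1) = n := by have := Finset.mem_range.1 hi; lia
    rw [neg_eq_iff_add_eq_zero, ← succ_nsmul, ← add_nsmul, hi, ha]
  rw [Finset.sum_congr rfl fun i hi => congrArg η (hreflect i hi), eq_comm, ← sub_eq_zero,
    ← Finset.sum_sub_distrib]
  simpa using sum_range_shift_sub_eq_zero ha fun x => η (x + a)

end CyclicOrbits

section Translation

variable {Γ P P' k : Type*} [Group Γ] [AddCommGroup P] [AddCommGroup P'] [CommRing k]

/-- The action of `Γ` on the abelian group `P` by translations through `l`. -/
def translation (l : Γ →* Multiplicative P) : Γ →* Equiv.Perm P :=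
  (MulAction.toPermHom (Multiplicative P) P).comp l

variable {l : Γ →* Multiplicative P} {D : Γ → P → k} {g : Γ}

lemma translation_apply (g : Γ) (x : P) : translation l g x = (l g).toAdd + x := rfl

lemma translation_inv_apply (g : Γ) (x : P) : (translation l g)⁻¹ x = x - (l g).toAdd := by
  rw [Equiv.Perm.inv_eq_iff_eq, translation_apply, add_sub_cancel]

lemma translation_eq_one (hg : l g = 1) : translation l g = 1 := by
  rw [translation, MonoidHom.comp_apply, hg, map_one]

lemma mem_iff_translation_zero_eq_zero {B : Subgroup Γ} (hB : B = l.ker) (g : Γ) :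
    g ∈ B ↔ translation l g 0 = 0 := by
  rw [hB, MonoidHom.mem_ker, translation_apply, add_zero, toAdd_eq_zero]

lemma exists_translation_zero_eq (hl : Function.Surjective l) (x : P) :
    ∃ g, translation l g 0 = x := by
  obtain ⟨g, hg⟩ := hl (Multiplicative.ofAdd x)
  exact ⟨g, by rw [translation_apply, hg, toAdd_ofAdd, add_zero]⟩

lemma comp_mem_cocycles_translation {β : P →+ P'} {E : Γ → P' → k}
    (hE : E ∈ Cocycles k (translation (β.toMultiplicative.comp l))) :
    (fun g x => E g (β x)) ∈ Cocycles k (translation l) := fun g h x => by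
  simp only [Cocycles.map_mul hE, translation_inv_apply, map_sub]
  rfl

lemma shift_mem_cocycles_translation (hD : D ∈ Cocycles k (translation l)) (a : P) :
    (fun g x => D g (x - a)) ∈ Cocycles k (translation l) := fun g h x => by
  simp only [Cocycles.map_mul hD, translation_inv_apply, sub_right_comm]

lemma cocycle_apply_pow (hD : D ∈ Cocycles k (translation l)) (g : Γ) (n : ℕ) (x : P) :
    D (g ^ n) x = ∑ i ∈ Finset.range n, D g (x - i • (l g).toAdd) := by
  induction n with
  | zero => simp [Cocycles.map_one hD]
  | succ n ih =>
    rw [pow_succ, Cocycles.map_mul hD, ih, Finset.sum_range_succ, translation_inv_apply, map_pow,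
      toAdd_pow]

lemma sum_mem_homOn_of_mem_cocycles {Ω : Type*} [Fintype Ω] {α : Γ →* Equiv.Perm Ω}
    {D : Γ → Ω → k} (hD : D ∈ Cocycles k α) :
    (fun g => ∑ ω, D g ω) ∈ HomOn k (⊤ : Subgroup Γ) :=
  ⟨fun g hg => absurd (Subgroup.mem_top g) hg, fun g _ h _ => by
    beta_reduce
    rw [← Equiv.sum_comp (α g)⁻¹ (D h), ← Finset.sum_add_distrib]
    exact Finset.sum_congr rfl fun ω _ => hD g h ω⟩

lemma exists_cocycle_sum_eq {ι Ω : Type*} [Fintype Ω] [Nonempty Ω]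
    (α : FreeGroup ι →* Equiv.Perm Ω) {c : FreeGroup ι → k} (hc : c ∈ HomOn k ⊤) :
    ∃ E ∈ Cocycles k α, ∀ g, ∑ ω, E g ω = c g := by
  classical
  let ω₀ : Ω := Classical.arbitrary Ω
  obtain ⟨E, hE, hEc⟩ := exists_cocycle_of_eq α fun i => Pi.single ω₀ (c (FreeGroup.of i))
  refine ⟨E, hE, fun g => ?_⟩
  refine sub_eq_zero.1 (mem_of_forall_of_mem
    (kerOn (sub_mem (sum_mem_homOn_of_mem_cocycles hE) hc)) (fun i => ⟨Subgroup.mem_top _, ?_⟩) g).2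
  rw [Pi.sub_apply, hEc, Finset.sum_pi_single', if_pos (Finset.mem_univ _), sub_self]

variable (k l) in
/-- The values at `r` of the cocycles of `Γ` in the functions on `P`, on which `Γ` acts through
translations by `l`. -/
def relatorValues (r : Γ) : Submodule k (P → k) :=
  (Cocycles k (translation l)).map (LinearMap.proj r)

variable (k) in
/-- Translation by `a` as an operator on functions. -/
def shift (a : P) : Module.End k (P → k) := LinearMap.funLeft k k fun x => x - a

lemma shift_apply (a : P) (η : P → k) (x : P) : shift k a η x = η (x - a) := rfl

lemma shift_pow_apply (a : P) (n : ℕ) (η : P → k) (x : P) :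
    (shift k a ^ n) η x = η (x - n • a) := by
  induction n generalizing η with
  | zero => simp
  | succ n ih => rw [pow_succ, Module.End.mul_apply, ih, shift_apply, succ_nsmul, sub_sub]

lemma shift_mem_relatorValues {r : Γ} {η : P → k} (hη : η ∈ relatorValues k l r) (a : P) :
    shift k a η ∈ relatorValues k l r := by
  obtain ⟨D, hD, rfl⟩ := hη
  exact ⟨_, shift_mem_cocycles_translation hD a, rfl⟩

lemma shift_sub_mem_relatorValues {p : ℕ} [Fact p.Prime] [Fintype P] {r : Γ}
    (hd : Fintype.card P ≤ finrank (ZMod p) (relatorValues (ZMod p) l r) + 1)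
    (η : P → ZMod p) {a : P} (ha : p • a = 0) :
    shift (ZMod p) a η - η ∈ relatorValues (ZMod p) l r := by
  have hpow : shift (ZMod p) a ^ p = 1 := LinearMap.ext fun η => funext fun x => by
    rw [shift_pow_apply, ha, sub_zero, Module.End.one_apply]
  exact apply_mem_of_pow_eq_zero_of_finrank_le (S := shift (ZMod p) a - 1)
    (sub_one_pow_eq_zero hpow) (fun η hη => sub_mem (shift_mem_relatorValues hη a) hη)
    (by simpa using hd) η

end Translation

section Descent

variable {G P : Type*} [Group G] [AddCommGroup P] {K L : Subgroup G} {m : ℕ}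
  {r : FreeGroup (Fin m)} {π : FreeGroup (Fin m) →* G} (h : IsOneRelatorPresentation K r π)
  {l : FreeGroup (Fin m) →* Multiplicative P} (hLK : L ≤ K) (hL : L.comap π = l.ker)

include h hL

lemma shapiro_mem_homVanishing {k : Type*} [CommRing k] {D : FreeGroup (Fin m) → P → k}
    (hD : D ∈ Cocycles k (translation l)) (hDr : D r = 0) :
    shapiro k (L.comap π) 0 D ∈ HomVanishing k (L.comap π) π.ker := by
  have hmem := shapiro_mem_homOn (mem_iff_translation_zero_eq_zero hL) hD
  have hker : π.ker ≤ L.comap π := MonoidHom.ker_le_comap π L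
  refine ⟨hmem, fun x hx => apply_eq_zero_of_mem_normalClosure h.ker_eq hker hmem (fun g => ?_) hx⟩
  have hr : r ∈ π.ker := mem_of_eq_normalClosure h.ker_eq
  have hlr : l r = 1 := by rw [← MonoidHom.mem_ker, ← hL]; exact hker hr
  rw [shapiro_of_mem (hker (π.normal_ker.conj_mem r hr g)),
    Cocycles.map_conj hD g (translation_eq_one hlr), hDr, Pi.zero_apply]

include hLK

lemma exists_homOn_apply_eq_cocycle {k : Type*} [CommRing k] {D : FreeGroup (Fin m) → P → k}
    (hD : D ∈ Cocycles k (translation l)) (hDr : D r = 0) :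
    ∃ f ∈ HomOn k L, ∀ g ∈ l.ker, f (π g) = D g 0 := by
  obtain ⟨f, hf, hfD⟩ := exists_comp_eq_of_mem_homVanishing π (hLK.trans_eq h.range_eq.symm)
    (shapiro_mem_homVanishing h hL hD hDr)
  refine ⟨f, hf, fun g hg => ?_⟩
  rw [← Function.comp_apply (f := f), hfD, shapiro_of_mem (hL ▸ hg)]

lemma card_le_finrank_relatorValues_add_one (k : Type*) [Field k] [Fintype P]
    (hl : Function.Surjective l) {m' : ℕ} (hm' : HasOneRelatorPresentation L m')
    (hdim : m' + 2 * Fintype.card P = m * Fintype.card P + 2) :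
    Fintype.card P ≤ finrank k (relatorValues k l r) + 1 := by
  let Y := Cocycles k (translation l) ⊓ LinearMap.ker (LinearMap.proj r)
  have : Module.Finite k Y := Submodule.finiteDimensional_of_le inf_le_left
  have hsplit := finrank_map_add_finrank_inf_ker (LinearMap.proj r) (Cocycles k (translation l))
  have hY := finrank_add_one_le_of_le_cocycles (mem_iff_translation_zero_eq_zero hL)
    (exists_translation_zero_eq hl) Y inf_le_left
  have : (L.comap π).FiniteIndex := by
    rw [hL]
    have := Finite.of_equiv P Multiplicative.ofAdd
    infer_instance
  have := homOn_finite_of_finiteIndex (k := k) (L.comap π)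
  have : Module.Finite k (HomVanishing k (L.comap π) π.ker) :=
    Submodule.finiteDimensional_of_le fun f hf => (hf.1 : f ∈ HomOn k (L.comap π))
  have hmap : finrank k (Y.map (shapiro k (L.comap π) 0)) ≤ finrank k (HomOn k L) := by
    rw [← finrank_homVanishing_comap π (hLK.trans_eq h.range_eq.symm)]
    refine Submodule.finrank_mono ?_
    rintro _ ⟨D, ⟨hD, hDr⟩, rfl⟩
    exact shapiro_mem_homVanishing h hL hD hDr
  have hm := hm'.finrank_homOn_le k
  rw [finrank_cocycles, Fintype.card_fin] at hsplit
  change finrank k (relatorValues k l r) + finrank k Y = _ at hsplit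
  lia

end Descent

section Corestriction

variable {G k : Type*} [Group G] [CommRing k]

variable (k) in
/-- The sum of the conjugates of a function by `1, t, …, t ^ (n - 1)`. -/
def conjTrace (n : ℕ) (t : G) : Module.End k (G → k) := ∑ i ∈ Finset.range n, conjRep k G t ^ i

lemma conjTrace_apply (n : ℕ) (t : G) (f : G → k) (x : G) :
    conjTrace k n t f x = ∑ i ∈ Finset.range n, f ((t ^ i)⁻¹ * x * t ^ i) := by
  simp only [conjTrace, ← map_pow, LinearMap.sum_apply, Finset.sum_apply, conjRep_apply]

lemma conjTrace_mem_homOn {B : Subgroup G} {t : G} (ht : t ∈ Subgroup.normalizer (B : Set G))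
    {f : G → k} (hf : f ∈ HomOn k B) (n : ℕ) : conjTrace k n t f ∈ HomOn k B := by
  rw [conjTrace, LinearMap.sum_apply]
  refine sum_mem fun i _ => ?_
  rw [← map_pow]
  exact conjRep_mem_homOn (pow_mem ht i) hf

lemma coe_geom_sum_conjRep_restrict {Y : Submodule k (G → k)} {t : G}
    (hY : ∀ f ∈ Y, conjRep k G t f ∈ Y) (n : ℕ) (f : Y) :
    ((∑ i ∈ Finset.range n, (conjRep k G t).restrict hY ^ i) f : Y) = conjTrace k n t f := by
  rw [conjTrace, LinearMap.sum_apply, LinearMap.sum_apply, Submodule.coe_sum]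
  refine Finset.sum_congr rfl fun i _ => ?_
  rw [Module.End.pow_restrict]
  rfl

/-- The character `χ` is the corestriction of the character `f` of `L` to the subgroup generated
by `L` and `t`, where `t` normalizes `L` and has order `n` modulo `L`. -/
structure IsCorestriction (n : ℕ) (t : G) (L : Subgroup G) (f χ : G → k) : Prop where
  mem_homOn : f ∈ HomOn k L
  conjTrace_eq : ∀ x ∈ L, conjTrace k n t f x = χ x
  apply_pow : f (t ^ n) = χ t

variable {P : Type*} [AddCommGroup P] {K L : Subgroup G} {m n : ℕ} [NeZero n]
  {r : FreeGroup (Fin m)} {π : FreeGroup (Fin m) →* G}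
  {l : FreeGroup (Fin m) →* Multiplicative P} {β : P →+ ZMod n}

-- Spreading `c` evenly over `ZMod n` gives a cocycle `E`; its value at the relator has sum zero,
-- so it is a difference `e' - shift e'`, which is cancelled by a cocycle with value `e'`.
lemma exists_cocycle_apply_relator_eq_zero {c : FreeGroup (Fin m) → k} (hc : c ∈ HomOn k ⊤)
    (hcr : c r = 0) (hβ : ∀ e : ZMod n → k, (fun x => e (β x)) ∈ relatorValues k l r)
    {a : P} (ha : n • a = 0) (hβa : β a = 1) :
    ∃ D ∈ Cocycles k (translation l), D r = 0 ∧
      ∀ g, ∑ i ∈ Finset.range n, D g (i • a) = c g := by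
  obtain ⟨E, hE, hEc⟩ := exists_cocycle_sum_eq (translation (β.toMultiplicative.comp l)) hc
  obtain ⟨e', he'⟩ := exists_sub_sub_one_eq ((hEc r).trans hcr)
  obtain ⟨D', hD', hD'r⟩ := hβ e'
  refine ⟨_, add_mem (comp_mem_cocycles_translation hE)
    (sub_mem (shift_mem_cocycles_translation hD' a) hD'), funext fun x => ?_, fun g => ?_⟩
  · have hr : ∀ x, D' r x = e' (β x) := congrFun hD'r
    simp only [Pi.add_apply, Pi.sub_apply, Pi.zero_apply, hr, map_sub, hβa, ← he']
    ring
  · simp only [Pi.add_apply, Pi.sub_apply, Finset.sum_add_distrib,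
      sum_range_shift_sub_eq_zero ha (D' g), map_nsmul, hβa, nsmul_one, add_zero]
    rw [sum_range_natCast_zmod (E g), hEc]

lemma exists_isCorestriction (h : IsOneRelatorPresentation K r π) (hLK : L ≤ K)
    (hL : L.comap π = l.ker) (hβ : ∀ e : ZMod n → k, (fun x => e (β x)) ∈ relatorValues k l r)
    {t : FreeGroup (Fin m)} (ht : l t ^ n = 1) (hβt : β (l t).toAdd = 1) {χ : G → k}
    (hχ : χ ∈ HomOn k K) : ∃ f, IsCorestriction n (π t) L f χ := by
  have hχπ := comp_mem_homVanishing π hχ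
  rw [h.comap_eq_top] at hχπ
  have ht' : n • (l t).toAdd = 0 := by rw [← toAdd_pow, ht, toAdd_one]
  obtain ⟨D, hD, hDr, hDχ⟩ := exists_cocycle_apply_relator_eq_zero hχπ.1
    (hχπ.2 r (mem_of_eq_normalClosure h.ker_eq)) hβ ht' hβt
  obtain ⟨f, hf, hfD⟩ := exists_homOn_apply_eq_cocycle h hLK hL hD hDr
  refine ⟨f, hf, fun x hx => ?_, ?_⟩
  · obtain ⟨g, rfl⟩ : x ∈ π.range := h.range_eq ▸ hLK hx
    have hg : g ∈ l.ker := hL ▸ hx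
    rw [conjTrace_apply, ← Function.comp_apply (f := χ), ← hDχ g]
    refine Finset.sum_congr rfl fun i _ => ?_
    have hconj := Cocycles.map_conj hD (t ^ i)⁻¹ (translation_eq_one hg) 0
    rw [inv_inv] at hconj
    rw [← map_pow, ← map_inv, ← map_mul, ← map_mul, hfD _ (by
      simpa using (MonoidHom.normal_ker l).conj_mem g hg (t ^ i)⁻¹), hconj, translation_inv_apply,
      map_inv, map_pow, toAdd_inv, toAdd_pow, zero_sub, neg_neg]
  · rw [← map_pow, hfD _ (by rw [MonoidHom.mem_ker, map_pow, ht]), cocycle_apply_pow hD,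
      ← Function.comp_apply (f := χ), ← hDχ t]
    simpa using sum_range_neg_nsmul_eq ht' (D t)

end Corestriction

/-! ### Corestriction of mod `p` characters -/

section RelatorValues

variable {Γ : Type*} [Group Γ] {p : ℕ} [hp : Fact p.Prime] {r : Γ}

lemma comp_snd_mem_relatorValues {l : Γ →* Multiplicative (ZMod p × ZMod p)}
    (hd : Fintype.card (ZMod p × ZMod p) ≤ finrank (ZMod p) (relatorValues (ZMod p) l r) + 1)
    (e : ZMod p → ZMod p) : (fun x => e x.2) ∈ relatorValues (ZMod p) l r := by
  let η : ZMod p × ZMod p → ZMod p := fun x => Pi.single (M := fun _ => ZMod p) 0 (e x.2) x.1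
  have hmem : ∑ u : ZMod p, (shift (ZMod p) ((u, 0) : ZMod p × ZMod p) η - η) ∈
      relatorValues (ZMod p) l r :=
    sum_mem fun u _ => shift_sub_mem_relatorValues hd η (by ext <;> simp)
  convert hmem using 1
  funext x
  simp [Finset.sum_sub_distrib, shift_apply, η, Pi.single_apply, sub_eq_zero]

lemma mem_relatorValues_of_sum_eq_zero {l : Γ →* Multiplicative (ZMod p)}
    (hd : Fintype.card (ZMod p) ≤ finrank (ZMod p) (relatorValues (ZMod p) l r) + 1)
    {e : ZMod p → ZMod p} (he : ∑ y, e y = 0) : e ∈ relatorValues (ZMod p) l r := by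
  obtain ⟨e', he'⟩ := exists_sub_sub_one_eq he
  rw [(funext fun y => by rw [← he', neg_sub]; rfl : e = -(shift (ZMod p) 1 e' - e'))]
  exact neg_mem (shift_sub_mem_relatorValues hd e' (by simp))

lemma mem_relatorValues_of_apply_ne_zero {ι : Type*} {r : FreeGroup ι}
    {l : FreeGroup ι →* Multiplicative (ZMod p)}
    (hd : Fintype.card (ZMod p) ≤ finrank (ZMod p) (relatorValues (ZMod p) l r) + 1)
    {c : FreeGroup ι → ZMod p} (hc : c ∈ HomOn (ZMod p) ⊤) (hcr : c r ≠ 0)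
    (e : ZMod p → ZMod p) : e ∈ relatorValues (ZMod p) l r := by
  obtain ⟨E, hE, hEc⟩ := exists_cocycle_sum_eq (translation l) hc
  have hEr : ((∑ y, e y) / c r) • E r ∈ relatorValues (ZMod p) l r :=
    Submodule.smul_mem _ _ ⟨E, hE, rfl⟩
  refine (Submodule.sub_mem_iff_left _ hEr).1 (mem_relatorValues_of_sum_eq_zero hd ?_)
  simp only [Pi.sub_apply, Pi.smul_apply, Finset.sum_sub_distrib, smul_eq_mul, ← Finset.mul_sum,
    hEc, div_mul_cancel₀ _ hcr, sub_self]

end RelatorValues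

section Pullback

variable {G : Type*} [Group G] {K : Subgroup G} {m : ℕ} {r : FreeGroup (Fin m)}
  {π : FreeGroup (Fin m) →* G} (h : IsOneRelatorPresentation K r π)
  {k : Type*} [CommRing k] {χ χ₁ χ₂ : G → k}

/-- The character of the free group induced by a character of the presented subgroup. -/
def IsOneRelatorPresentation.pullback (hχ : χ ∈ HomOn k K) :
    FreeGroup (Fin m) →* Multiplicative k :=
  (HomOn.toMonoidHom hχ).comp (π.codRestrict K h.apply_mem)

/-- The homomorphism from the free group to `k × k` induced by a pair of characters of the
presented subgroup. -/
def IsOneRelatorPresentation.pullbackProd (h₁ : χ₁ ∈ HomOn k K) (h₂ : χ₂ ∈ HomOn k K) :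
    FreeGroup (Fin m) →* Multiplicative (k × k) :=
  (MulEquiv.prodMultiplicative k k).symm.toMonoidHom.comp ((h.pullback h₁).prod (h.pullback h₂))

include h

lemma IsOneRelatorPresentation.comap_kerOn (hχ : χ ∈ HomOn k K) :
    (kerOn hχ).comap π = (h.pullback hχ).ker := by
  ext g
  exact ⟨fun hg => hg.2, fun hg => ⟨h.apply_mem g, hg⟩⟩

lemma IsOneRelatorPresentation.pullbackProd_apply (h₁ : χ₁ ∈ HomOn k K) (h₂ : χ₂ ∈ HomOn k K)
    (g : FreeGroup (Fin m)) :
    h.pullbackProd h₁ h₂ g = Multiplicative.ofAdd (χ₁ (π g), χ₂ (π g)) := rfl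

lemma IsOneRelatorPresentation.comap_kerOn_inf_kerOn (h₁ : χ₁ ∈ HomOn k K) (h₂ : χ₂ ∈ HomOn k K) :
    (kerOn h₁ ⊓ kerOn h₂).comap π = (h.pullbackProd h₁ h₂).ker := by
  ext g
  rw [MonoidHom.mem_ker, h.pullbackProd_apply, ofAdd_eq_one, Prod.mk_eq_zero]
  exact ⟨fun hg => ⟨hg.1.2, hg.2.2⟩, fun hg => ⟨⟨h.apply_mem g, hg.1⟩, h.apply_mem g, hg.2⟩⟩

lemma IsOneRelatorPresentation.pullbackProd_surjective {n : ℕ} [NeZero n] {χ₁ χ₂ : G → ZMod n}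
    (h₁ : χ₁ ∈ HomOn (ZMod n) K) (h₂ : χ₂ ∈ HomOn (ZMod n) K) {s t : FreeGroup (Fin m)}
    (hχ₁s : χ₁ (π s) = 1) (hχ₁t : χ₁ (π t) = 0) (hχ₂t : χ₂ (π t) = 1) :
    Function.Surjective (h.pullbackProd h₁ h₂) :=
  Multiplicative.forall.2 fun ⟨a, b⟩ => ⟨s ^ a.val * t ^ (b - a * χ₂ (π s)).val, by
    rw [map_mul, map_pow, map_pow, h.pullbackProd_apply, h.pullbackProd_apply, hχ₁s, hχ₁t, hχ₂t,
      ← ofAdd_nsmul, ← ofAdd_nsmul, ← ofAdd_add]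
    exact congrArg Multiplicative.ofAdd (Prod.ext (by simp) (by simp))⟩

lemma IsOneRelatorPresentation.exists_apply_relator_ne_zero {k : Type*} [Field k]
    (hlt : finrank k (HomOn k K) < m) :
    ∃ c ∈ HomOn k (⊤ : Subgroup (FreeGroup (Fin m))), c r ≠ 0 := by
  by_contra! hcon
  have hbot : (HomOn k ⊤).map (restrict π.ker) = (⊥ : Submodule k (FreeGroup (Fin m) → k)) := by
    rw [eq_bot_iff]
    rintro _ ⟨c, hc, rfl⟩
    refine funext fun x => ?_
    by_cases hx : x ∈ π.ker
    · rw [restrict_of_mem hx]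
      refine apply_eq_zero_of_mem_normalClosure h.ker_eq le_top hc (fun g => ?_) hx
      rw [HomOn.map_conj hc trivial trivial, hcon c hc]
    · exact restrict_of_notMem hx
  have hsum := h.finrank_homOn_add_finrank_map_restrict k
  rw [hbot, finrank_bot] at hsum
  lia

end Pullback

section Kill

variable {G k : Type*} [Group G] [Field k] {K B : Subgroup G}

lemma exists_ne_zero_forall_eq_zero_of_finrank_lt [Module.Finite k (HomOn k K)]
    (hlt : finrank k ((HomOn k K).map (restrict B)) < finrank k (HomOn k K)) :
    ∃ χ ∈ HomOn k K, χ ≠ 0 ∧ ∀ x ∈ B, χ x = 0 := by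
  have hsum := finrank_map_add_finrank_inf_ker (restrict B) (HomOn k K)
  have hne : HomVanishing k K B ≠ ⊥ := by
    rw [← homOn_inf_ker_restrict]
    intro hbot
    rw [hbot, finrank_bot] at hsum
    lia
  obtain ⟨χ, hχ, h0⟩ := Submodule.exists_mem_ne_zero_of_ne_bot hne
  exact ⟨χ, hχ.1, h0, hχ.2⟩

end Kill

section Corestriction

variable {G : Type*} [Group G] (H : IsLargeMelnikov G) {p : ℕ} [hp : Fact p.Prime]
  {K B : Subgroup G} [K.FiniteIndex] {χ χ₁ χ₂ : G → ZMod p} {s t : G}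

namespace IsLargeMelnikov

include H

lemma exists_isCorestriction_kerOn (hlt : finrank (ZMod p) (HomOn (ZMod p) K) < presRank K)
    (hχ₂ : χ₂ ∈ HomOn (ZMod p) K) (ht : t ∈ K) (hχ₂t : χ₂ t = 1) (hχ : χ ∈ HomOn (ZMod p) K) :
    ∃ f, IsCorestriction p t (kerOn hχ₂) f χ := by
  obtain ⟨r, π, h⟩ := H.hasOneRelatorPresentation K
  obtain ⟨t, rfl⟩ : t ∈ π.range := h.range_eq.ge ht
  have h0 : χ₂ ≠ 0 := fun h0 => one_ne_zero (hχ₂t.symm.trans (congrFun h0 _))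
  have hlt' : h.pullback hχ₂ t = Multiplicative.ofAdd 1 := congrArg Multiplicative.ofAdd hχ₂t
  have hsurj : Function.Surjective (h.pullback hχ₂) := fun a => ⟨t ^ a.toAdd.val, by
    rw [map_pow, hlt', ← ofAdd_nsmul, nsmul_one, ZMod.natCast_zmod_val, ofAdd_toAdd]⟩
  have hrank := H.presRank_kerOn hχ₂ h0
  have hd := card_le_finrank_relatorValues_add_one h (kerOn_le hχ₂) (h.comap_kerOn hχ₂) (ZMod p)
    hsurj (H.hasOneRelatorPresentation (kerOn hχ₂)) (by rw [ZMod.card]; linarith)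
  obtain ⟨c, hc, hcr⟩ := h.exists_apply_relator_ne_zero hlt
  refine exists_isCorestriction (β := AddMonoidHom.id _) h (kerOn_le hχ₂) (h.comap_kerOn hχ₂)
    (mem_relatorValues_of_apply_ne_zero hd hc hcr) ?_ (congrArg Multiplicative.toAdd hlt') hχ
  rw [hlt', ← ofAdd_nsmul, nsmul_one, ZMod.natCast_self, ofAdd_zero]

lemma presRank_kerOn_inf_kerOn (h₁ : χ₁ ∈ HomOn (ZMod p) K) (h₂ : χ₂ ∈ HomOn (ZMod p) K)
    (h0 : χ₁ ≠ 0) (h0' : restrict (kerOn h₁) χ₂ ≠ 0) :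
    presRank (kerOn h₁ ⊓ kerOn h₂) + 2 * (p * p) = presRank K * (p * p) + 2 := by
  have hrank₁ := congrArg (p * ·) (H.presRank_kerOn h₁ h0)
  have hrank₂ := H.presRank_kerOn (restrict_mem_homOn_of_le (kerOn_le h₁) h₂) h0'
  rw [kerOn_restrict_kerOn h₁ h₂] at hrank₂
  simp only [mul_add] at hrank₁
  linarith

lemma exists_isCorestriction_kerOn_inf_kerOn (h₁ : χ₁ ∈ HomOn (ZMod p) K)
    (h₂ : χ₂ ∈ HomOn (ZMod p) K) (hs : s ∈ K) (ht : t ∈ K) (hχ₁s : χ₁ s = 1) (hχ₁t : χ₁ t = 0)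
    (hχ₂t : χ₂ t = 1) (hχ : χ ∈ HomOn (ZMod p) K) :
    ∃ f, IsCorestriction p t (kerOn h₁ ⊓ kerOn h₂) f χ := by
  obtain ⟨r, π, h⟩ := H.hasOneRelatorPresentation K
  obtain ⟨s, rfl⟩ : s ∈ π.range := h.range_eq.ge hs
  obtain ⟨t, rfl⟩ : t ∈ π.range := h.range_eq.ge ht
  have h0 : χ₁ ≠ 0 := fun h0 => one_ne_zero (hχ₁s.symm.trans (congrFun h0 _))
  have h0' : restrict (kerOn h₁) χ₂ ≠ 0 := fun h0' => by
    have hmem : π t ∈ kerOn h₁ := ⟨ht, hχ₁t⟩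
    exact one_ne_zero (hχ₂t.symm.trans ((restrict_of_mem hmem).symm.trans (congrFun h0' _)))
  have hker := h.comap_kerOn_inf_kerOn h₁ h₂
  have hle : kerOn h₁ ⊓ kerOn h₂ ≤ K := inf_le_left.trans (kerOn_le h₁)
  have hd := card_le_finrank_relatorValues_add_one h hle hker (ZMod p)
    (h.pullbackProd_surjective h₁ h₂ hχ₁s hχ₁t hχ₂t) (H.hasOneRelatorPresentation _) (by
      rw [Fintype.card_prod, ZMod.card]
      exact H.presRank_kerOn_inf_kerOn h₁ h₂ h0 h0')
  refine exists_isCorestriction (β := AddMonoidHom.snd _ _) h hle hker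
    (comp_snd_mem_relatorValues hd) ?_ ?_ hχ
  · rw [h.pullbackProd_apply, ← ofAdd_nsmul, ofAdd_eq_one]
    ext <;> simp
  · rw [h.pullbackProd_apply, toAdd_ofAdd]
    exact hχ₂t

lemma exists_forall_isCorestriction (hBK : B ≤ K)
    (hlt : finrank (ZMod p) ((HomOn (ZMod p) K).map (restrict B)) < presRank K)
    (hχ₂ : χ₂ ∈ HomOn (ZMod p) K) (ht : t ∈ B) (hχ₂t : χ₂ t = 1) :
    ∃ L : Subgroup G, L.FiniteIndex ∧ L ≤ kerOn hχ₂ ∧ B ⊓ kerOn hχ₂ ≤ L ∧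
      ∀ χ ∈ HomOn (ZMod p) K, ∃ f, IsCorestriction p t L f χ := by
  by_cases hr : finrank (ZMod p) (HomOn (ZMod p) K) < presRank K
  · exact ⟨kerOn hχ₂, inferInstance, le_rfl, inf_le_right, fun χ hχ =>
      H.exists_isCorestriction_kerOn hr hχ₂ (hBK ht) hχ₂t hχ⟩
  · have := H.finite_homOn (ZMod p) K
    obtain ⟨χ₁, h₁, h0, hv⟩ := exists_ne_zero_forall_eq_zero_of_finrank_lt (hlt.trans_le (by lia))
    obtain ⟨s, hs, hχ₁s⟩ := exists_apply_eq_one h₁ h0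
    exact ⟨kerOn h₁ ⊓ kerOn hχ₂, inferInstance, inf_le_right,
      fun x hx => ⟨⟨hBK hx.1, hv x hx.1⟩, hx.2⟩, fun χ hχ =>
      H.exists_isCorestriction_kerOn_inf_kerOn h₁ hχ₂ hs (hBK ht) hχ₁s (hv t ht) hχ₂t hχ⟩

end IsLargeMelnikov

end Corestriction

/-! ### Characters continuous for the profinite topology -/

section ContHomOn

variable {G k : Type*} [Group G] [CommRing k] {B K N : Subgroup G} {f : G → k}

variable (k B) in
/-- The characters of `B` that are continuous for the topology induced by the profinite topology
of the ambient group, that is, that vanish on `B ⊓ K` for some finite-index subgroup `K`. -/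
def ContHomOn : Submodule k (G → k) where
  carrier := {f | f ∈ HomOn k B ∧ ∃ K : Subgroup G, K.FiniteIndex ∧ ∀ x ∈ B, x ∈ K → f x = 0}
  add_mem' := by
    rintro f g ⟨hf, K₁, _, h₁⟩ ⟨hg, K₂, _, h₂⟩
    exact ⟨add_mem hf hg, K₁ ⊓ K₂, inferInstance, fun x hx hx' => by
      rw [Pi.add_apply, h₁ x hx hx'.1, h₂ x hx hx'.2, add_zero]⟩
  zero_mem' := ⟨zero_mem _, ⊤, inferInstance, fun _ _ _ => rfl⟩
  smul_mem' := by
    rintro c f ⟨hf, K, hK, h⟩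
    exact ⟨Submodule.smul_mem _ c hf, K, hK, fun x hx hx' => by
      rw [Pi.smul_apply, h x hx hx', smul_zero]⟩

lemma contHomOn_le_homOn : ContHomOn k B ≤ HomOn k B := fun _ hf => hf.1

lemma contHomOn_finite [IsNoetherianRing k] (hB : B.FG) : Module.Finite k (ContHomOn k B) := by
  have := homOn_finite (k := k) hB
  exact Module.Finite.of_injective (Submodule.inclusion contHomOn_le_homOn)
    (Submodule.inclusion_injective _)

lemma exists_normal_of_mem_contHomOn (hf : f ∈ ContHomOn k B) :
    ∃ N : Subgroup G, N.Normal ∧ N.FiniteIndex ∧ ∀ x ∈ B, x ∈ N → f x = 0 := by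
  obtain ⟨-, K, _, hK⟩ := hf
  exact ⟨K.normalCore, inferInstance, inferInstance,
    fun x hx hx' => hK x hx (K.normalCore_le hx')⟩

lemma conjRep_mem_contHomOn {t : G} (ht : t ∈ Subgroup.normalizer (B : Set G))
    (hf : f ∈ ContHomOn k B) : conjRep k G t f ∈ ContHomOn k B := by
  obtain ⟨N, hN, hfin, hN0⟩ := exists_normal_of_mem_contHomOn hf
  refine ⟨conjRep_mem_homOn ht hf.1, N, hfin, fun x hx hx' => ?_⟩
  exact hN0 _ ((Subgroup.mem_normalizer_iff''.1 ht x).1 hx) (by simpa using hN.conj_mem x hx' t⁻¹)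

lemma exists_homOn_sup_forall_apply_eq [hN : N.Normal] (hf : f ∈ HomOn k B)
    (h0 : ∀ x ∈ B, x ∈ N → f x = 0) : ∃ g ∈ HomOn k (B ⊔ N), ∀ x ∈ B, g x = f x := by
  have hrep : ∀ x ∈ B ⊔ N, ∃ b ∈ B, b⁻¹ * x ∈ N := fun x hx => by
    obtain ⟨b, hb, n, hn, rfl⟩ := (Subgroup.mem_sup_of_normal_right).1 hx
    exact ⟨b, hb, by simpa using hn⟩
  choose! c hcB hcN using hrep
  have hwell : ∀ b ∈ B, ∀ x ∈ B ⊔ N, b⁻¹ * x ∈ N → f (c x) = f b := fun b hb x hx hn => by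
    have hmem : b⁻¹ * c x ∈ N := by
      simpa [mul_assoc] using mul_mem hn (inv_mem (hcN x hx))
    have hzero := h0 _ (mul_mem (inv_mem hb) (hcB x hx)) hmem
    rw [HomOn.map_mul hf (inv_mem hb) (hcB x hx), HomOn.map_inv hf hb] at hzero
    exact (neg_add_eq_zero.1 hzero).symm
  refine ⟨restrict (B ⊔ N) fun x => f (c x), restrict_mem_homOn fun x hx y hy => ?_,
    fun x hx => ?_⟩
  · rw [hwell _ (mul_mem (hcB x hx) (hcB y hy)) _ (mul_mem hx hy),
      HomOn.map_mul hf (hcB x hx) (hcB y hy)]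
    convert mul_mem (hN.conj_mem _ (hcN x hx) (c y)⁻¹) (hcN y hy) using 1
    group
  · have hx' : x ∈ B ⊔ N := Subgroup.mem_sup_left hx
    rw [restrict_of_mem hx']
    exact hwell x hx x hx' (by simp [one_mem])

end ContHomOn

section ModP

variable {G : Type*} [Group G] {p : ℕ} [hp : Fact p.Prime] {B K : Subgroup G} {χ : G → ZMod p}

lemma map_restrict_homOn_le_contHomOn [K.FiniteIndex] (hBK : B ≤ K) :
    (HomOn (ZMod p) K).map (restrict B) ≤ ContHomOn (ZMod p) B := by
  rintro _ ⟨f, hf, rfl⟩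
  exact ⟨restrict_mem_homOn_of_le hBK hf, kerOn hf, inferInstance,
    fun x hx hx' => (restrict_of_mem hx).trans hx'.2⟩

lemma exists_finiteIndex_forall_extends (hB : B.FG) [K.FiniteIndex] (hBK : B ≤ K) :
    ∃ L : Subgroup G, L.FiniteIndex ∧ B ≤ L ∧ L ≤ K ∧
      ∀ f ∈ ContHomOn (ZMod p) B, ∃ g ∈ HomOn (ZMod p) L, ∀ x ∈ B, g x = f x := by
  have := contHomOn_finite (k := ZMod p) hB
  have : Finite (ContHomOn (ZMod p) B) := Module.finite_of_finite (ZMod p)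
  choose N _ hNfin hN0 using fun f : ContHomOn (ZMod p) B => exists_normal_of_mem_contHomOn f.2
  have : (⨅ f, N f).FiniteIndex := Subgroup.finiteIndex_iInf hNfin
  let M := ((⨅ f, N f) ⊓ K).normalCore
  have hM : M ≤ (⨅ f, N f) ⊓ K := Subgroup.normalCore_le _
  refine ⟨B ⊔ M, Subgroup.finiteIndex_of_le (le_sup_right : M ≤ B ⊔ M), le_sup_left,
    sup_le hBK (hM.trans inf_le_right), fun f hf => exists_homOn_sup_forall_apply_eq hf.1 ?_⟩
  exact fun x hx hx' => hN0 ⟨f, hf⟩ x hx (iInf_le N ⟨f, hf⟩ (hM hx').1)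

lemma fg_kerOn (hB : B.FG) (hχ : χ ∈ HomOn (ZMod p) B) : (kerOn hχ).FG := by
  have : Group.FG B := (Group.fg_iff_subgroup_fg B).2 hB
  have : ((kerOn hχ).subgroupOf B).FiniteIndex := ⟨by
    by_cases h0 : χ = 0
    · have hle : B ≤ kerOn hχ := fun x hx => ⟨hx, congrFun h0 x⟩
      rw [Subgroup.subgroupOf_eq_top.2 hle, Subgroup.index_top]
      exact one_ne_zero
    · exact (relIndex_kerOn hχ h0).trans_ne hp.out.ne_zero⟩
  have e := Subgroup.subgroupOfEquivOfLe (kerOn_le hχ)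
  exact (Group.fg_iff_subgroup_fg _).1 (Group.fg_of_surjective (f := e.toMonoidHom) e.surjective)

lemma finrank_contHomOn_kerOn_add_prime_le (hB : B.FG) (hχ : χ ∈ ContHomOn (ZMod p) B)
    (h0 : χ ≠ 0) :
    finrank (ZMod p) (ContHomOn (ZMod p) (kerOn hχ.1)) + p ≤
      p * finrank (ZMod p) (ContHomOn (ZMod p) B) + 1 := by
  obtain ⟨t, ht, hχt⟩ := exists_apply_eq_one hχ.1 h0
  have := contHomOn_finite (k := ZMod p) hB
  have := contHomOn_finite (k := ZMod p) (fg_kerOn hB hχ.1)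
  refine finrank_add_prime_le hχ.1 ht hχt _ _ contHomOn_le_homOn
    (fun f => conjRep_mem_contHomOn (le_normalizer_kerOn hχ.1 ht)) ?_ hχ
  rintro z hz ⟨-, K, _, hK⟩
  obtain ⟨L, _, hL⟩ := hχ.2
  refine ⟨hz, K ⊓ L, inferInstance, fun x hx hx' => ?_⟩
  have hxker : x ∈ kerOn hχ.1 := ⟨hx, hL x hx hx'.2⟩
  exact (restrict_of_mem hxker).symm.trans (hK x hxker hx'.1)

section Corestriction

variable (hχ : χ ∈ HomOn (ZMod p) B) {t : G} (ht : t ∈ B) (hχt : χ t = 1)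

include ht hχt

lemma finrank_map_restrict_kerOn {Z : Submodule (ZMod p) (G → ZMod p)}
    (hZ : Z ≤ HomOn (ZMod p) B) (hZt : ∀ z ∈ Z, z t = 0) :
    finrank (ZMod p) (Z.map (restrict (kerOn hχ))) = finrank (ZMod p) Z := by
  have hinj : Function.Injective ((restrict (kerOn hχ)).domRestrict Z) := by
    rw [← LinearMap.ker_eq_bot, LinearMap.ker_eq_bot']
    rintro ⟨z, hz⟩ hz0
    have hle : B ≤ kerOn (hZ hz) := le_of_kerOn_le hχ ht hχt
      (fun y hy => ⟨hy.1, (restrict_of_mem hy).symm.trans (congrFun hz0 y)⟩) ⟨ht, hZt z hz⟩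
    exact Subtype.ext (HomOn.eq_zero (hZ hz) fun x hx => (hle hx).2)
  rw [← LinearMap.finrank_range_of_inj hinj, LinearMap.range_domRestrict]

lemma prime_mul_finrank_add_one_le (Y Z : Submodule (ZMod p) (G → ZMod p))
    [Module.Finite (ZMod p) Y] [Module.Finite (ZMod p) Z]
    (hY : Y ≤ HomOn (ZMod p) (kerOn hχ)) (hYt : ∀ f ∈ Y, conjRep (ZMod p) G t f ∈ Y)
    (hZ : Z ≤ HomOn (ZMod p) B) (hχZ : χ ∈ Z)
    (hYZ : ∀ z ∈ Z, ∃ f ∈ Y, IsCorestriction p t (kerOn hχ) f z) :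
    p * finrank (ZMod p) Z + 1 ≤ finrank (ZMod p) Y + p := by
  let Y₀ := Y ⊓ LinearMap.ker (LinearMap.proj (R := ZMod p) (φ := fun _ : G => ZMod p) (t ^ p))
  let Z₀ := Z ⊓ LinearMap.ker (LinearMap.proj (R := ZMod p) (φ := fun _ : G => ZMod p) t)
  obtain ⟨f, hf, hfχ⟩ := hYZ χ hχZ
  have hYdim : finrank (ZMod p) Y = finrank (ZMod p) Y₀ + 1 :=
    finrank_eq_finrank_inf_ker_add_one Y _ hf
      ((hfχ.apply_pow.trans hχt).trans_ne one_ne_zero)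
  have hZdim : finrank (ZMod p) Z = finrank (ZMod p) Z₀ + 1 :=
    finrank_eq_finrank_inf_ker_add_one Z _ hχZ (hχt.trans_ne one_ne_zero)
  have : Module.Finite (ZMod p) Y₀ := Submodule.finiteDimensional_of_le (inf_le_left : Y₀ ≤ Y)
  have hY₀t : ∀ f ∈ Y₀, conjRep (ZMod p) G t f ∈ Y₀ := fun f hf =>
    ⟨hYt f hf.1, (congrArg f (by group : t⁻¹ * t ^ p * t = t ^ p)).trans hf.2⟩
  let T := (conjRep (ZMod p) G t).restrict hY₀t
  have hT : T ^ p = 1 :=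
    conjRep_restrict_pow_eq_one (inf_le_left.trans hY) hY₀t (pow_prime_mem_kerOn hχ ht)
  have hrange : finrank (ZMod p) Z₀ ≤ finrank (ZMod p) (LinearMap.range ((T - 1) ^ (p - 1))) := by
    rw [← finrank_map_restrict_kerOn hχ ht hχt (inf_le_left.trans hZ) fun z hz => hz.2,
      ← Submodule.finrank_map_subtype_eq Y₀, sub_one_pow_sub_one_eq_geom_sum]
    refine Submodule.finrank_mono ?_
    rintro _ ⟨z, ⟨hz, hzt⟩, rfl⟩
    obtain ⟨f, hf, hfz⟩ := hYZ z hz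
    refine ⟨_, ⟨⟨f, hf, hfz.apply_pow.trans hzt⟩, rfl⟩, ?_⟩
    refine (coe_geom_sum_conjRep_restrict hY₀t p _).trans (HomOn.ext
      (conjTrace_mem_homOn (le_normalizer_kerOn hχ ht) (hY hf) p)
      (restrict_mem_homOn_of_le (kerOn_le hχ) (hZ hz)) fun x hx => ?_)
    rw [restrict_of_mem hx, hfz.conjTrace_eq x hx]
  have hjordan := mul_finrank_range_pow_le (T - 1) (n := p - 1)
    (by rw [Nat.sub_add_cancel hp.out.one_le, sub_one_pow_eq_zero hT])
  rw [Nat.sub_add_cancel hp.out.one_le] at hjordan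
  have := (Nat.mul_le_mul_left p hrange).trans hjordan
  rw [hZdim, hYdim, mul_add]
  lia

end Corestriction

theorem IsLargeMelnikov.prime_mul_finrank_contHomOn_add_one_le (H : IsLargeMelnikov G) (hB : B.FG)
    [K.FiniteIndex] (hBK : B ≤ K) (hlt : ∀ L : Subgroup G, L.FiniteIndex → B ≤ L → L ≤ K →
      finrank (ZMod p) (ContHomOn (ZMod p) B) < presRank L)
    (hχ : χ ∈ ContHomOn (ZMod p) B) (h0 : χ ≠ 0) :
    p * finrank (ZMod p) (ContHomOn (ZMod p) B) + 1 ≤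
      finrank (ZMod p) (ContHomOn (ZMod p) (kerOn hχ.1)) + p := by
  obtain ⟨t, ht, hχt⟩ := exists_apply_eq_one hχ.1 h0
  have := contHomOn_finite (k := ZMod p) hB
  have := contHomOn_finite (k := ZMod p) (fg_kerOn hB hχ.1)
  obtain ⟨L, hL, hBL, hLK, hext⟩ := exists_finiteIndex_forall_extends (p := p) hB hBK
  obtain ⟨χ₂, h₂, heq⟩ := hext χ hχ
  obtain ⟨M, _, -, hM, hcor⟩ := H.exists_forall_isCorestriction hBL
    ((Submodule.finrank_mono (map_restrict_homOn_le_contHomOn hBL)).trans_lt (hlt L hL hBL hLK))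
    h₂ ht ((heq t ht).trans hχt)
  have hkerM : kerOn hχ.1 ≤ M := fun x hx => hM ⟨hx.1, hBL hx.1, (heq x hx.1).trans hx.2⟩
  have hnorm := le_normalizer_kerOn hχ.1
  refine prime_mul_finrank_add_one_le hχ.1 ht hχt _ _ contHomOn_le_homOn
    (fun f => conjRep_mem_contHomOn (hnorm ht)) contHomOn_le_homOn hχ fun ψ hψ => ?_
  obtain ⟨ψ₂, hψ₂, hψeq⟩ := hext ψ hψ
  obtain ⟨f, hf⟩ := hcor ψ₂ hψ₂
  have hfker := map_restrict_homOn_le_contHomOn hkerM ⟨f, hf.mem_homOn, rfl⟩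
  refine ⟨_, hfker, hfker.1, fun x hx => ?_, ?_⟩
  · rw [← hψeq x hx.1, ← hf.conjTrace_eq x (hkerM hx), conjTrace_apply, conjTrace_apply]
    exact Finset.sum_congr rfl fun i _ => restrict_of_mem
      ((Subgroup.mem_normalizer_iff''.1 (hnorm (pow_mem ht i)) x).1 hx)
  · rw [restrict_of_mem (pow_prime_mem_kerOn hχ.1 ht), hf.apply_pow, hψeq t ht]

end ModP

/-! ### Two-generator subgroups -/

section IsOpenIn

variable {G : Type*} [Group G] {A B K L : Subgroup G}

/-- `B` is an open subgroup of `A` for the topology induced on `A` by the profinite topology of the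
ambient group. -/
def IsOpenIn (A B : Subgroup G) : Prop :=
  ∃ K : Subgroup G, K.FiniteIndex ∧ B = A ⊓ K

namespace IsOpenIn

lemma le (h : IsOpenIn A B) : B ≤ A := by
  obtain ⟨K, -, rfl⟩ := h
  exact inf_le_left

lemma relIndex_ne_zero (h : IsOpenIn A B) : B.relIndex A ≠ 0 := by
  obtain ⟨K, _, rfl⟩ := h
  rw [Subgroup.inf_relIndex_left]
  exact (Subgroup.isFiniteRelIndex_of_finiteIndex (H := K) (K := A)).relIndex_ne_zero

lemma relIndex_kerOn {p : ℕ} [Fact p.Prime] {χ : G → ZMod p} (h : IsOpenIn A B)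
    (hχ : χ ∈ HomOn (ZMod p) B) (h0 : χ ≠ 0) : (kerOn hχ).relIndex A = p * B.relIndex A := by
  rw [← Subgroup.relIndex_mul_relIndex _ _ _ (kerOn_le hχ) h.le, Melnikov.relIndex_kerOn hχ h0]

end IsOpenIn

lemma eq_inf_of_le (h : B = A ⊓ K) (hBL : B ≤ L) (hLK : L ≤ K) : B = A ⊓ L :=
  le_antisymm (le_inf (h.le.trans inf_le_left) hBL) (h ▸ inf_le_inf_left A hLK)

lemma IsLargeMelnikov.relIndex_add_two_le_presRank (H : IsLargeMelnikov G) [K.FiniteIndex] :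
    (A ⊓ K).relIndex A + 2 ≤ presRank K := by
  have hle : (A ⊓ K).relIndex A ≤ K.index := by
    rw [Subgroup.inf_relIndex_left, ← Subgroup.relIndex_top_right K]
    exact Subgroup.relIndex_le_of_le_right le_top
      (K.relIndex_top_right.trans_ne Subgroup.FiniteIndex.index_ne_zero)
  exact (Nat.add_le_add_right hle 2).trans (H.index_add_two_le_presRank K)

end IsOpenIn

section TwoGenerated

variable {G : Type*} [Group G] {φ : FreeGroup (Fin 2) →* G} {B : Subgroup G}

namespace IsOpenIn

lemma finiteIndex_comap (h : IsOpenIn φ.range B) : (B.comap φ).FiniteIndex :=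
  ⟨(Subgroup.index_comap B φ).trans_ne h.relIndex_ne_zero⟩

lemma fg (h : IsOpenIn φ.range B) : B.FG := by
  have := h.finiteIndex_comap
  have hfg : (B.comap φ).FG := (Group.fg_iff_subgroup_fg _).1 (Subgroup.fg_of_index_ne_zero _)
  rw [Subgroup.fg_iff_submonoid_fg] at hfg ⊢
  rw [← Subgroup.map_comap_eq_self h.le]
  exact hfg.map φ

lemma finrank_homOn_comap (k : Type*) [Field k] (h : IsOpenIn φ.range B) :
    finrank k (HomOn k (B.comap φ)) = B.relIndex φ.range + 1 := by
  have := h.finiteIndex_comap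
  have hschreier := finrank_homOn_add_index (k := k) (B.comap φ)
  rw [Fintype.card_fin, Subgroup.index_comap] at hschreier
  lia

lemma finrank_homOn_le (k : Type*) [Field k] (h : IsOpenIn φ.range B) :
    finrank k (HomOn k B) ≤ B.relIndex φ.range + 1 := by
  have := h.finiteIndex_comap
  have := homOn_finite_of_finiteIndex (k := k) (B.comap φ)
  rw [← finrank_homVanishing_comap φ h.le, ← h.finrank_homOn_comap k]
  exact Submodule.finrank_mono fun f hf => hf.1

variable {p : ℕ} [Fact p.Prime]

lemma finrank_contHomOn_le (h : IsOpenIn φ.range B) :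
    finrank (ZMod p) (ContHomOn (ZMod p) B) ≤ B.relIndex φ.range + 1 := by
  have := homOn_finite (k := ZMod p) h.fg
  exact (Submodule.finrank_mono contHomOn_le_homOn).trans (h.finrank_homOn_le _)

lemma kerOn {χ : G → ZMod p} (h : IsOpenIn φ.range B) (hχ : χ ∈ ContHomOn (ZMod p) B) :
    IsOpenIn φ.range (kerOn hχ.1) := by
  have hfg := h.fg
  obtain ⟨K, _, hB⟩ := h
  obtain ⟨L, _, hBL, hLK, hext⟩ :=
    exists_finiteIndex_forall_extends (p := p) hfg (hB.le.trans inf_le_right)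
  obtain ⟨g, hg, hgχ⟩ := hext χ hχ
  have hBL' := eq_inf_of_le hB hBL hLK
  refine ⟨Melnikov.kerOn hg, inferInstance, Subgroup.ext fun x => ⟨?_, ?_⟩⟩
  · rintro ⟨hx, hχx⟩
    exact ⟨(hBL'.le hx).1, hBL hx, (hgχ x hx).trans hχx⟩
  · rintro ⟨hxA, hxL, hgx⟩
    have hx : x ∈ B := hBL'.ge ⟨hxA, hxL⟩
    exact ⟨hx, (hgχ x hx).symm.trans hgx⟩

lemma finrank_contHomOn_kerOn_add_prime (H : IsLargeMelnikov G) {χ : G → ZMod p}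
    (h : IsOpenIn φ.range B) (hχ : χ ∈ ContHomOn (ZMod p) B) (h0 : χ ≠ 0) :
    finrank (ZMod p) (ContHomOn (ZMod p) (Melnikov.kerOn hχ.1)) + p =
      p * finrank (ZMod p) (ContHomOn (ZMod p) B) + 1 := by
  refine le_antisymm (finrank_contHomOn_kerOn_add_prime_le h.fg hχ h0) ?_
  have hle := h.finrank_contHomOn_le (p := p)
  have hfg := h.fg
  obtain ⟨K, _, hB⟩ := h
  refine H.prime_mul_finrank_contHomOn_add_one_le hfg (hB.le.trans inf_le_right)
    (fun L _ hBL hLK => ?_) hχ h0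
  have hL := H.relIndex_add_two_le_presRank (A := φ.range) (K := L)
  rw [← eq_inf_of_le hB hBL hLK] at hL
  lia

lemma homVanishing_comap_eq_homOn (h : IsOpenIn φ.range B)
    (hmax : finrank (ZMod p) (ContHomOn (ZMod p) B) = B.relIndex φ.range + 1) :
    HomVanishing (ZMod p) (B.comap φ) φ.ker = HomOn (ZMod p) (B.comap φ) := by
  have := h.finiteIndex_comap
  have := homOn_finite_of_finiteIndex (k := ZMod p) (B.comap φ)
  have := homOn_finite (k := ZMod p) h.fg
  refine Submodule.eq_of_le_of_finrank_le (fun f hf => hf.1) ?_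
  rw [finrank_homVanishing_comap φ h.le, h.finrank_homOn_comap (ZMod p), ← hmax]
  exact Submodule.finrank_mono contHomOn_le_homOn

lemma contHomOn_eq_homOn (h : IsOpenIn φ.range B)
    (hmax : finrank (ZMod p) (ContHomOn (ZMod p) B) = B.relIndex φ.range + 1) :
    ContHomOn (ZMod p) B = HomOn (ZMod p) B := by
  have := homOn_finite (k := ZMod p) h.fg
  exact Submodule.eq_of_le_of_finrank_le contHomOn_le_homOn (hmax ▸ h.finrank_homOn_le _)

-- Maximality is inherited by kernels of characters, so the kernel of `φ` is contained in every
-- subgroup of `p`-power index reached by iterating them; free groups are residually `p`.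
theorem injective_of_finrank_contHomOn_eq (H : IsLargeMelnikov G) (h : IsOpenIn φ.range B)
    (hmax : finrank (ZMod p) (ContHomOn (ZMod p) B) = B.relIndex φ.range + 1) :
    Function.Injective φ := by
  refine (injective_iff_map_eq_one φ).2 fun s hs => by_contra fun hs1 => ?_
  obtain ⟨P, _, _, θ, hP, hθ⟩ := exists_pGroup_quotient_ne_one p hs1
  refine hθ (le_ker_of_kerOn_descent hP θ φ.ker (fun C => ∃ B, IsOpenIn φ.range B ∧
    C = B.comap φ ∧ finrank (ZMod p) (ContHomOn (ZMod p) B) = B.relIndex φ.range + 1) ?_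
    ⟨B, h, rfl, hmax⟩ (φ.ker_le_comap B) hs)
  rintro _ ⟨B, h, rfl, hmax⟩ - f hf hf0
  have hf' := (h.homVanishing_comap_eq_homOn hmax).ge hf
  refine ⟨fun x hx => ⟨φ.ker_le_comap B hx, hf'.2 x hx⟩, ?_⟩
  obtain ⟨g, hg, rfl⟩ := exists_comp_eq_of_mem_homVanishing φ h.le hf'
  have hg0 : g ≠ 0 := fun hg0 => hf0 (by rw [hg0]; rfl)
  have hgc := (h.contHomOn_eq_homOn hmax).ge hg
  refine ⟨Melnikov.kerOn hg, h.kerOn hgc, rfl, ?_⟩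
  have hstep := h.finrank_contHomOn_kerOn_add_prime H hgc hg0
  rw [hmax, mul_add] at hstep
  rw [h.relIndex_kerOn hg hg0]
  omega

end IsOpenIn

end TwoGenerated

/-! ### Mod `p` characters that lift to the integers -/

section IntegralHomOn

variable {G : Type*} [Group G] {p : ℕ} {L : Subgroup G}

lemma intCast_mem_homOn (p : ℕ) {ψ : G → ℤ} (hψ : ψ ∈ HomOn ℤ L) :
    (fun x => (ψ x : ZMod p)) ∈ HomOn (ZMod p) L :=
  ⟨fun x hx => by simp only [HomOn.apply_of_notMem hψ hx, Int.cast_zero],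
    fun x hx y hy => by simp only [HomOn.map_mul hψ hx hy, Int.cast_add]⟩

variable (p L) in
/-- The mod `p` characters of `L` that are reductions of integral characters. -/
def IntegralHomOn : Submodule (ZMod p) (G → ZMod p) where
  carrier := {f | ∃ ψ ∈ HomOn ℤ L, (fun x => (ψ x : ZMod p)) = f}
  add_mem' := by
    rintro _ _ ⟨ψ₁, h₁, rfl⟩ ⟨ψ₂, h₂, rfl⟩
    exact ⟨ψ₁ + ψ₂, add_mem h₁ h₂, funext fun x => Int.cast_add _ _⟩
  zero_mem' := ⟨0, zero_mem _, funext fun _ => Int.cast_zero⟩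
  smul_mem' := by
    rintro c _ ⟨ψ, hψ, rfl⟩
    obtain ⟨a, rfl⟩ := ZMod.intCast_surjective c
    exact ⟨a • ψ, Submodule.smul_mem _ _ hψ, funext fun x => Int.cast_mul _ _⟩

lemma integralHomOn_le_homOn : IntegralHomOn p L ≤ HomOn (ZMod p) L := by
  rintro _ ⟨ψ, hψ, rfl⟩
  exact intCast_mem_homOn p hψ

lemma conjRep_mem_integralHomOn {t : G} (ht : t ∈ Subgroup.normalizer (L : Set G))
    {f : G → ZMod p} (hf : f ∈ IntegralHomOn p L) : conjRep (ZMod p) G t f ∈ IntegralHomOn p L := by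
  obtain ⟨ψ, hψ, rfl⟩ := hf
  exact ⟨conjRep ℤ G t ψ, conjRep_mem_homOn ht hψ, rfl⟩

lemma integralHomOn_top_freeGroup {ι : Type*} :
    IntegralHomOn p (⊤ : Subgroup (FreeGroup ι)) = HomOn (ZMod p) ⊤ := by
  refine le_antisymm integralHomOn_le_homOn fun f hf => ?_
  choose a ha using fun i => ZMod.intCast_surjective (f (FreeGroup.of i))
  let θ : FreeGroup ι →* Multiplicative ℤ := FreeGroup.lift fun i => Multiplicative.ofAdd (a i)
  have hθ : (fun g => (θ g).toAdd) ∈ HomOn ℤ (⊤ : Subgroup (FreeGroup ι)) :=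
    ⟨fun x hx => absurd trivial hx, fun x _ y _ => congrArg Multiplicative.toAdd (map_mul θ x y)⟩
  refine ⟨_, hθ, funext fun g => ?_⟩
  have hsub := sub_mem (intCast_mem_homOn p hθ) hf
  have hg : g ∈ kerOn hsub :=
    mem_of_forall_of_mem (kerOn hsub) (fun i => ⟨Subgroup.mem_top _, by simp [θ, ha]⟩) g
  exact sub_eq_zero.1 hg.2

lemma exists_mem_forall_apply_dvd {X : Type*} (Y : Submodule ℤ (X → ℤ)) (r : X) :
    ∃ c₀ ∈ Y, ∀ c ∈ Y, c₀ r ∣ c r := by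
  let I : Submodule ℤ ℤ := Y.map (LinearMap.proj r)
  obtain ⟨c₀, hc₀, heq⟩ := Submodule.IsPrincipal.generator_mem I
  refine ⟨c₀, hc₀, fun c hc => ?_⟩
  have heq : c₀ r = Submodule.IsPrincipal.generator I := heq
  rw [heq]
  exact (Submodule.IsPrincipal.mem_iff_generator_dvd I).1 ⟨c, hc, rfl⟩

namespace IsOneRelatorPresentation

variable {m : ℕ} {r : FreeGroup (Fin m)} {π : FreeGroup (Fin m) →* G}
  (h : IsOneRelatorPresentation L r π)

include h

lemma exists_comp_eq {k : Type*} [CommRing k] {c : FreeGroup (Fin m) → k} (hc : c ∈ HomOn k ⊤)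
    (hcr : c r = 0) : ∃ g ∈ HomOn k L, g ∘ π = c := by
  refine exists_comp_eq_of_mem_homVanishing π h.range_eq.ge ?_
  rw [h.comap_eq_top]
  refine ⟨hc, fun x hx => apply_eq_zero_of_mem_normalClosure h.ker_eq le_top hc (fun g => ?_) hx⟩
  rw [HomOn.map_conj hc trivial trivial, hcr]

lemma eq_of_comp_eq {k : Type*} [CommRing k] {f g : G → k} (hf : f ∈ HomOn k L)
    (hg : g ∈ HomOn k L) (heq : ∀ y, f (π y) = g (π y)) : f = g :=
  HomOn.ext hf hg fun x hx => by
    obtain ⟨y, rfl⟩ : x ∈ π.range := h.range_eq.ge hx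
    exact heq y

lemma apply_relator_eq_zero {k : Type*} [CommRing k] {f : G → k} (hf : f ∈ HomOn k L) :
    f (π r) = 0 := by
  rw [MonoidHom.mem_ker.1 (mem_of_eq_normalClosure h.ker_eq), HomOn.map_one hf]

lemma exists_forall_apply_eq_add_mul (p : ℕ) :
    ∃ c₀ ∈ HomOn (ZMod p) (⊤ : Subgroup (FreeGroup (Fin m))),
      (∀ c ∈ HomOn (ZMod p) (⊤ : Subgroup (FreeGroup (Fin m))), c₀ r ∣ c r) ∧
      ∀ f ∈ HomOn (ZMod p) L, ∃ g ∈ IntegralHomOn p L, ∃ a, ∀ y, f (π y) = g (π y) + a * c₀ y := by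
  obtain ⟨c₀, hc₀, hdvd⟩ := exists_mem_forall_apply_dvd (HomOn ℤ ⊤) r
  refine ⟨_, intCast_mem_homOn p hc₀, fun c hc => ?_, fun f hf => ?_⟩
  · obtain ⟨ψ, hψ, rfl⟩ := integralHomOn_top_freeGroup.ge hc
    exact map_dvd (Int.castRingHom (ZMod p)) (hdvd ψ hψ)
  have hfπ := (comp_mem_homVanishing π hf).1
  rw [h.comap_eq_top] at hfπ
  obtain ⟨c, hc, hcf⟩ := integralHomOn_top_freeGroup.ge hfπ
  obtain ⟨a, ha⟩ := hdvd c hc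
  obtain ⟨ψ, hψ, hψc⟩ := h.exists_comp_eq (sub_mem hc (Submodule.smul_mem _ a hc₀))
    (by rw [Pi.sub_apply, Pi.smul_apply, smul_eq_mul, ha, mul_comm, sub_self])
  refine ⟨_, ⟨ψ, hψ, rfl⟩, a, fun y => ?_⟩
  have hcy : (c y : ZMod p) = f (π y) := congrFun hcf y
  have hψy : ψ (π y) = c y - a * c₀ y := congrFun hψc y
  rw [hψy, ← hcy, Int.cast_sub, Int.cast_mul, sub_add_cancel]

variable [Fact p.Prime]

lemma homOn_le_integralHomOn {c : FreeGroup (Fin m) → ZMod p} (hc : c ∈ HomOn (ZMod p) ⊤)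
    (hcr : c r ≠ 0) : HomOn (ZMod p) L ≤ IntegralHomOn p L := by
  obtain ⟨c₀, -, hdvd, hsplit⟩ := h.exists_forall_apply_eq_add_mul p
  have hc₀r : c₀ r ≠ 0 := fun h0 => hcr (zero_dvd_iff.1 (h0 ▸ hdvd c hc))
  intro f hf
  obtain ⟨g, hg, a, hfg⟩ := hsplit f hf
  have hgL := integralHomOn_le_homOn hg
  have hfr := hfg r
  rw [h.apply_relator_eq_zero hf, h.apply_relator_eq_zero hgL, zero_add] at hfr
  have ha : a = 0 := (mul_eq_zero.1 hfr.symm).resolve_right hc₀r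
  rwa [h.eq_of_comp_eq hf hgL fun y => by rw [hfg, ha, zero_mul, add_zero]]

lemma exists_homOn_le_integralHomOn_sup_span (p : ℕ) [Fact p.Prime] :
    ∃ f₀ : G → ZMod p, HomOn (ZMod p) L ≤ IntegralHomOn p L ⊔ Submodule.span (ZMod p) {f₀} := by
  obtain ⟨c₀, hc₀, -, hsplit⟩ := h.exists_forall_apply_eq_add_mul p
  by_cases hc₀r : c₀ r = 0
  · obtain ⟨f₀, hf₀, hf₀π⟩ := h.exists_comp_eq hc₀ hc₀r
    refine ⟨f₀, fun f hf => ?_⟩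
    obtain ⟨g, hg, a, hfg⟩ := hsplit f hf
    rw [h.eq_of_comp_eq hf (add_mem (integralHomOn_le_homOn hg) (Submodule.smul_mem _ a hf₀))
      fun y => (hfg y).trans (by rw [← hf₀π]; rfl)]
    exact Submodule.add_mem_sup hg (Submodule.smul_mem _ _ (Submodule.mem_span_singleton_self f₀))
  · exact ⟨0, (h.homOn_le_integralHomOn hc₀ hc₀r).trans le_sup_left⟩

lemma finrank_homOn_le_finrank_integralHomOn_add_one [Module.Finite (ZMod p) (IntegralHomOn p L)] :
    finrank (ZMod p) (HomOn (ZMod p) L) ≤ finrank (ZMod p) (IntegralHomOn p L) + 1 := by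
  obtain ⟨f₀, hf₀⟩ := h.exists_homOn_le_integralHomOn_sup_span p
  have hspan := finrank_span_le_card (R := ZMod p) ({f₀} : Set (G → ZMod p))
  rw [Set.toFinset_card, Set.card_singleton] at hspan
  exact (Submodule.finrank_mono hf₀).trans
    ((Submodule.finrank_add_le_finrank_add_finrank _ _).trans (Nat.add_le_add_left hspan _))

end IsOneRelatorPresentation

end IntegralHomOn

section Lifting

variable {G : Type*} [Group G] {p : ℕ} [hp : Fact p.Prime] {K B : Subgroup G} {χ : G → ZMod p}

lemma exists_restrict_kerOn_ne_zero_forall_eq_zero [Module.Finite (ZMod p) (HomOn (ZMod p) K)]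
    (hlt : finrank (ZMod p) ((HomOn (ZMod p) K).map (restrict B)) + 2 ≤
      finrank (ZMod p) (HomOn (ZMod p) K)) :
    ∃ (χ₁ : G → ZMod p) (h₁ : χ₁ ∈ HomOn (ZMod p) K), ∃ χ₂ ∈ HomOn (ZMod p) K,
      χ₁ ≠ 0 ∧ restrict (kerOn h₁) χ₂ ≠ 0 ∧ (∀ x ∈ B, χ₁ x = 0) ∧ ∀ x ∈ B, χ₂ x = 0 := by
  obtain ⟨χ₁, h₁, h0, hv₁⟩ :=
    exists_ne_zero_forall_eq_zero_of_finrank_lt (B := B) (Nat.lt_of_succ_lt hlt)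
  have hsum := finrank_map_add_finrank_inf_ker (restrict B) (HomOn (ZMod p) K)
  have hspan : ¬ HomVanishing (ZMod p) K B ≤ Submodule.span (ZMod p) {χ₁} := fun hle => by
    have := Submodule.finrank_mono hle
    rw [← homOn_inf_ker_restrict, finrank_span_singleton h0] at this
    lia
  obtain ⟨χ₂, ⟨h₂, hv₂⟩, hχ₂⟩ := SetLike.not_le_iff_exists.1 hspan
  refine ⟨χ₁, h₁, χ₂, h₂, h0, fun hres => hχ₂ ?_, hv₁, hv₂⟩
  obtain ⟨a, rfl⟩ := exists_eq_smul_of_restrict_kerOn_eq_zero h₁ h₂ h0 hres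
  exact Submodule.smul_mem _ a (Submodule.mem_span_singleton_self χ₁)

namespace IsLargeMelnikov

variable (H : IsLargeMelnikov G) [K.FiniteIndex]

include H

-- The integral characters form a conjugation-invariant subspace of codimension at most one, and
-- `conjTrace = (T - 1) ^ (p - 1)` for the unipotent operator `T` of conjugation by `t`.
lemma conjTrace_mem_integralHomOn {t : G} (ht : t ∈ Subgroup.normalizer (K : Set G))
    (htp : t ^ p ∈ K) (hχ : χ ∈ HomOn (ZMod p) K) :
    conjTrace (ZMod p) p t χ ∈ IntegralHomOn p K := by
  obtain ⟨r, π, h⟩ := H.hasOneRelatorPresentation K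
  have := H.finite_homOn (ZMod p) K
  have : Module.Finite (ZMod p) (IntegralHomOn p K) :=
    Submodule.finiteDimensional_of_le integralHomOn_le_homOn
  let J := (IntegralHomOn p K).comap (HomOn (ZMod p) K).subtype
  have hJ : finrank (ZMod p) (HomOn (ZMod p) K) ≤ finrank (ZMod p) J + 1 := by
    rw [← Submodule.finrank_map_subtype_eq _ J, Submodule.map_comap_subtype,
      inf_eq_right.2 integralHomOn_le_homOn]
    exact h.finrank_homOn_le_finrank_integralHomOn_add_one
  have hV : ∀ f ∈ HomOn (ZMod p) K, conjRep (ZMod p) G t f ∈ HomOn (ZMod p) K :=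
    fun f => conjRep_mem_homOn ht
  let T := (conjRep (ZMod p) G t).restrict hV
  have hT : (T - 1) ^ p = 0 := sub_one_pow_eq_zero (conjRep_restrict_pow_eq_one le_rfl hV htp)
  have hJT : J ≤ J.comap (T - 1) := fun v hv =>
    sub_mem (H := J) (conjRep_mem_integralHomOn ht hv) hv
  have hmem := apply_mem_of_pow_eq_zero_of_finrank_le hT hJT hJ (((T - 1) ^ (p - 2)) ⟨χ, hχ⟩)
  have hp2 : p - 2 + 1 = p - 1 := by have := hp.out.two_le; lia
  rw [← Module.End.mul_apply, ← pow_succ', hp2, sub_one_pow_sub_one_eq_geom_sum] at hmem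
  rw [← coe_geom_sum_conjRep_restrict hV p ⟨χ, hχ⟩]
  exact hmem

lemma exists_int_homOn_forall_intCast_eq (hBK : B ≤ K)
    (hdim : finrank (ZMod p) ((HomOn (ZMod p) K).map (restrict B)) + 2 ≤ presRank K)
    (hχ : χ ∈ HomOn (ZMod p) K) : ∃ L : Subgroup G, L.FiniteIndex ∧ B ≤ L ∧
      ∃ ψ ∈ HomOn ℤ L, ∀ x ∈ B, (ψ x : ZMod p) = χ x := by
  have := H.finite_homOn (ZMod p) K
  by_cases hlt : finrank (ZMod p) (HomOn (ZMod p) K) < presRank K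
  · obtain ⟨r, π, h⟩ := H.hasOneRelatorPresentation K
    obtain ⟨c, hc, hcr⟩ := h.exists_apply_relator_ne_zero hlt
    obtain ⟨ψ, hψ, hψχ⟩ := h.homOn_le_integralHomOn hc hcr hχ
    exact ⟨K, ‹_›, hBK, ψ, hψ, fun x _ => congrFun hψχ x⟩
  obtain ⟨χ₁, h₁, χ₂, h₂, h0, hres, hv₁, hv₂⟩ :=
    exists_restrict_kerOn_ne_zero_forall_eq_zero (hdim.trans (not_lt.1 hlt))
  obtain ⟨s, hs, hχ₁s⟩ := exists_apply_eq_one h₁ h0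
  obtain ⟨t, ⟨ht, hχ₁t⟩, hχ₂t⟩ :=
    exists_apply_eq_one (restrict_mem_homOn_of_le (kerOn_le h₁) h₂) hres
  rw [restrict_of_mem (⟨ht, hχ₁t⟩ : t ∈ kerOn h₁)] at hχ₂t
  obtain ⟨f, hf⟩ := H.exists_isCorestriction_kerOn_inf_kerOn h₁ h₂ hs ht hχ₁s hχ₁t hχ₂t hχ
  have hnorm : t ∈ Subgroup.normalizer ((kerOn h₁ ⊓ kerOn h₂ : Subgroup G) : Set G) :=
    Subgroup.inf_normalizer_le_normalizer_inf
      ⟨le_normalizer_kerOn h₁ ht, le_normalizer_kerOn h₂ ht⟩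
  obtain ⟨ψ, hψ, hψf⟩ := H.conjTrace_mem_integralHomOn hnorm
    ⟨pow_prime_mem_kerOn h₁ ht, pow_prime_mem_kerOn h₂ ht⟩ hf.mem_homOn
  have hBL : B ≤ kerOn h₁ ⊓ kerOn h₂ := fun x hx => ⟨⟨hBK hx, hv₁ x hx⟩, hBK hx, hv₂ x hx⟩
  exact ⟨_, inferInstance, hBL, ψ, hψ, fun x hx =>
    (congrFun hψf x).trans (hf.conjTrace_eq x (hBL hx))⟩

end IsLargeMelnikov

end Lifting

/-! ### Characters that extend to a subgroup of finite index -/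

section ExtendableHomOn

variable {G : Type*} [Group G] {k : Type*} [CommRing k] {B K : Subgroup G}

variable (k B) in
/-- The characters of `B` that extend to a character of some finite index subgroup of the ambient
group containing `B`. -/
def ExtendableHomOn : Submodule k (G → k) where
  carrier := {f | f ∈ HomOn k B ∧ ∃ K : Subgroup G, K.FiniteIndex ∧ B ≤ K ∧
    ∃ g ∈ HomOn k K, ∀ x ∈ B, g x = f x}
  add_mem' := by
    rintro f f' ⟨hf, K, hK, hBK, g, hg, hgf⟩ ⟨hf', K', hK', hBK', g', hg', hgf'⟩
    refine ⟨add_mem hf hf', K ⊓ K', inferInstance, le_inf hBK hBK', restrict (K ⊓ K') (g + g'),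
      restrict_mem_homOn fun x hx y hy => ?_, fun x hx => ?_⟩
    · simp only [Pi.add_apply, HomOn.map_mul hg hx.1 hy.1, HomOn.map_mul hg' hx.2 hy.2,
        add_add_add_comm]
    · have hx' : x ∈ K ⊓ K' := ⟨hBK hx, hBK' hx⟩
      rw [restrict_of_mem hx', Pi.add_apply, Pi.add_apply, hgf x hx, hgf' x hx]
  zero_mem' := ⟨zero_mem _, ⊤, inferInstance, le_top, 0, zero_mem _, fun _ _ => rfl⟩
  smul_mem' := by
    rintro c f ⟨hf, K, hK, hBK, g, hg, hgf⟩
    exact ⟨Submodule.smul_mem _ _ hf, K, hK, hBK, c • g, Submodule.smul_mem _ _ hg,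
      fun x hx => by rw [Pi.smul_apply, Pi.smul_apply, hgf x hx]⟩

lemma extendableHomOn_le_homOn : ExtendableHomOn k B ≤ HomOn k B := fun _ hf => hf.1

lemma extendableHomOn_finite [IsNoetherianRing k] (hB : B.FG) :
    Module.Finite k (ExtendableHomOn k B) := by
  have := homOn_finite (k := k) hB
  exact Module.Finite.of_injective (Submodule.inclusion extendableHomOn_le_homOn)
    (Submodule.inclusion_injective _)

lemma restrict_mem_extendableHomOn [K.FiniteIndex] (hBK : B ≤ K) {f : G → k}
    (hf : f ∈ HomOn k K) : restrict B f ∈ ExtendableHomOn k B :=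
  ⟨restrict_mem_homOn_of_le hBK hf, K, ‹_›, hBK, f, hf, fun _ hx => (restrict_of_mem hx).symm⟩

end ExtendableHomOn

section Reduction

variable {G : Type*} [Group G] {p : ℕ} [hp : Fact p.Prime] {B K : Subgroup G} {ψ : G → ℤ}

lemma finrank_zmod_eq_finrank_int {M V : Type*} [AddCommGroup M] [Module.Free ℤ M]
    [Module.Finite ℤ M] [AddCommGroup V] [Module (ZMod p) V] (f : M →+ V)
    (hsurj : Function.Surjective f) (hker : ∀ x, f x = 0 → ∃ y, x = (p : ℤ) • y) :
    finrank (ZMod p) V = finrank ℤ M := by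
  let g : ModN M p →ₗ[ZMod p] V :=
    ModN.liftEquiv'.symm ⟨f, fun x => by rw [← Nat.cast_smul_eq_nsmul (ZMod p)]; simp⟩
  have hg (x : M) : g (ModN.mkQ p x) = f x := rfl
  have hmk (y : ModN M p) : ∃ x, ModN.mkQ p x = y := Submodule.mkQ_surjective _ y
  have hbij : Function.Bijective g := by
    refine ⟨(injective_iff_map_eq_zero _).2 fun y hy => ?_, fun v => ?_⟩
    · obtain ⟨x, rfl⟩ := hmk y
      obtain ⟨z, rfl⟩ := hker x hy
      exact (Submodule.Quotient.mk_eq_zero _).2 ⟨z, rfl⟩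
    · obtain ⟨x, rfl⟩ := hsurj v
      exact ⟨_, hg x⟩
  rw [← (LinearEquiv.ofBijective g hbij).finrank_eq,
    finrank_eq_card_basis (ModN.basis (Module.finBasis ℤ M)), Fintype.card_fin]

lemma intCast_mem_contHomOn (hψ : ψ ∈ ExtendableHomOn ℤ B) :
    (fun x => (ψ x : ZMod p)) ∈ ContHomOn (ZMod p) B := by
  obtain ⟨hψ, K, hK, -, g, hg, hgψ⟩ := hψ
  refine ⟨intCast_mem_homOn p hψ, kerOn (intCast_mem_homOn p hg), inferInstance, fun x hx hxK => ?_⟩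
  exact (congrArg Int.cast (hgψ x hx)).symm.trans hxK.2

omit hp in
lemma ediv_mem_homOn {d : ℤ} (hψ : ψ ∈ HomOn ℤ B) (hd : ∀ x ∈ B, d ∣ ψ x) :
    (fun x => ψ x / d) ∈ HomOn ℤ B :=
  ⟨fun x hx => by simp only [HomOn.apply_of_notMem hψ hx, Int.zero_ediv],
    fun x hx y hy => by
      simp only [HomOn.map_mul hψ hx hy]
      exact Int.add_ediv_of_dvd_left (hd x hx)⟩

lemma ediv_mem_extendableHomOn (hψ : ψ ∈ ExtendableHomOn ℤ B) (h0 : ∀ x ∈ B, (p : ℤ) ∣ ψ x) :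
    (fun x => ψ x / p) ∈ ExtendableHomOn ℤ B := by
  obtain ⟨hψ, K, hK, hBK, g, hg, hgψ⟩ := hψ
  have hker := intCast_mem_homOn p hg
  have hBker : B ≤ kerOn hker := fun x hx =>
    ⟨hBK hx, (ZMod.intCast_zmod_eq_zero_iff_dvd _ p).2 (by rw [hgψ x hx]; exact h0 x hx)⟩
  refine ⟨ediv_mem_homOn hψ h0, kerOn hker, inferInstance, hBker, fun x => _ / p,
    ediv_mem_homOn (restrict_mem_homOn_of_le (kerOn_le hker) hg) fun x hx => ?_,
    fun x hx => ?_⟩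
  · rw [restrict_of_mem hx]
    exact (ZMod.intCast_zmod_eq_zero_iff_dvd _ p).1 hx.2
  · simp only [restrict_of_mem (hBker hx), hgψ x hx]

lemma finrank_contHomOn_eq_finrank_extendableHomOn (hB : B.FG)
    (hlift : ∀ χ ∈ ContHomOn (ZMod p) B, ∃ L : Subgroup G, L.FiniteIndex ∧ B ≤ L ∧
      ∃ ψ ∈ HomOn ℤ L, ∀ x ∈ B, (ψ x : ZMod p) = χ x) :
    finrank (ZMod p) (ContHomOn (ZMod p) B) = finrank ℤ (ExtendableHomOn ℤ B) := by
  have := extendableHomOn_finite (k := ℤ) hB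
  have : Module.Free ℤ (ExtendableHomOn ℤ B) := Module.free_of_finite_type_torsion_free'
  let reduction : ExtendableHomOn ℤ B →+ ContHomOn (ZMod p) B :=
    { toFun := fun ψ => ⟨_, intCast_mem_contHomOn ψ.2⟩
      map_zero' := Subtype.ext (funext fun _ => Int.cast_zero)
      map_add' := fun _ _ => Subtype.ext (funext fun _ => Int.cast_add _ _) }
  refine finrank_zmod_eq_finrank_int reduction (fun χ => ?_) fun ψ hψ => ?_
  · obtain ⟨L, hL, hBL, ψ, hψ, hψχ⟩ := hlift χ χ.2
    refine ⟨⟨_, restrict_mem_extendableHomOn hBL hψ⟩, Subtype.ext ?_⟩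
    refine HomOn.ext (intCast_mem_homOn p (restrict_mem_homOn_of_le hBL hψ)) χ.2.1 fun x hx => ?_
    exact (congrArg Int.cast (restrict_of_mem hx)).trans (hψχ x hx)
  · have hdvd (x : G) : (p : ℤ) ∣ ψ.1 x :=
      (ZMod.intCast_zmod_eq_zero_iff_dvd _ p).1 (congrFun (congrArg Subtype.val hψ) x)
    exact ⟨⟨_, ediv_mem_extendableHomOn ψ.2 fun x _ => hdvd x⟩,
      Subtype.ext (funext fun x => (Int.mul_ediv_cancel' (hdvd x)).symm)⟩

end Reduction

section Torsion

variable {G : Type*} [Group G] {p : ℕ} [hp : Fact p.Prime] {B K : Subgroup G} {g : G}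

lemma IsOpenIn.finrank_contHomOn_eq_finrank_extendableHomOn {φ : FreeGroup (Fin 2) →* G}
    (h : IsOpenIn φ.range B) (H : IsLargeMelnikov G)
    (hle : finrank (ZMod p) (ContHomOn (ZMod p) B) ≤ B.relIndex φ.range) :
    finrank (ZMod p) (ContHomOn (ZMod p) B) = finrank ℤ (ExtendableHomOn ℤ B) := by
  have hFG := h.fg
  refine Melnikov.finrank_contHomOn_eq_finrank_extendableHomOn hFG fun χ hχ => ?_
  obtain ⟨K, hK, hBK⟩ := h
  obtain ⟨L, hL, hBL, hLK, hext⟩ :=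
    exists_finiteIndex_forall_extends (p := p) hFG (hBK.trans_le inf_le_right)
  obtain ⟨f, hf, hfχ⟩ := hext χ hχ
  have hindex := H.relIndex_add_two_le_presRank (A := φ.range) (K := L)
  rw [← eq_inf_of_le hBK hBL hLK] at hindex
  have := contHomOn_finite (k := ZMod p) hFG
  have hrank := Submodule.finrank_mono (map_restrict_homOn_le_contHomOn (p := p) hBL)
  obtain ⟨M, hM, hBM, ψ, hψ, hψf⟩ := H.exists_int_homOn_forall_intCast_eq hBL
    (by linarith) hf
  exact ⟨M, hM, hBM, ψ, hψ, fun x hx => (hψf x hx).trans (hfχ x hx)⟩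

lemma finrank_map_restrict_zpowers_le_one (hg : g ∈ K) :
    finrank (ZMod p) ((HomOn (ZMod p) K).map (restrict (Subgroup.zpowers g))) ≤ 1 := by
  let eval : (HomOn (ZMod p) K).map (restrict (Subgroup.zpowers g)) →ₗ[ZMod p] ZMod p :=
    (LinearMap.proj g).comp (Submodule.subtype _)
  have hinj : Function.Injective eval := by
    refine (injective_iff_map_eq_zero _).2 ?_
    rintro ⟨_, f, hf, rfl⟩ h0
    have hres := restrict_mem_homOn_of_le ((Subgroup.zpowers_le (H := K)).2 hg) hf
    have h0 : restrict (Subgroup.zpowers g) f g = 0 := h0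
    refine Subtype.ext (HomOn.eq_zero hres fun x hx => ?_)
    obtain ⟨i, rfl⟩ := Subgroup.mem_zpowers_iff.1 hx
    exact (HomOn.map_zpow hres (Subgroup.mem_zpowers g) i).trans (by rw [h0, mul_zero])
  exact (LinearMap.finrank_le_finrank_of_injective hinj).trans_eq (finrank_self _)

lemma exists_homOn_apply_ne_zero {N : Subgroup G} [N.Normal] [N.FiniteIndex]
    (hg : orderOf (g : G ⧸ N) = p) :
    ∃ K : Subgroup G, K.FiniteIndex ∧ g ∈ K ∧ ∃ χ ∈ HomOn (ZMod p) K, χ g ≠ 0 := by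
  let P := Subgroup.zpowers (g : G ⧸ N)
  let K := P.comap (QuotientGroup.mk' N)
  have hcard : Nat.card P = p := by rw [Nat.card_zpowers, hg]
  let e : P ≃* Multiplicative (ZMod p) := mulEquivOfPrimeCardEq hcard (Nat.card_zmod p)
  let θ : K →* Multiplicative (ZMod p) :=
    e.toMonoidHom.comp ((QuotientGroup.mk' N).subgroupComap P)
  have hNK : N ≤ K := (QuotientGroup.ker_mk' N).ge.trans (Subgroup.ker_le_comap _ _)
  have hgK : g ∈ K := Subgroup.mem_zpowers (g : G ⧸ N)
  refine ⟨K, Subgroup.finiteIndex_of_le hNK, hgK, ofMonoidHom θ, ofMonoidHom_mem θ, fun h0 => ?_⟩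
  rw [ofMonoidHom_apply θ hgK] at h0
  have hone := congrArg Subtype.val (e.map_eq_one_iff.1 (Multiplicative.toAdd.injective h0))
  exact hp.out.one_lt.ne ((orderOf_eq_one_iff.2 hone).symm.trans hg)

lemma exists_orderOf_pow_prime_of_residuallyFinite (hG : ResiduallyFinite G) (hg : g ≠ 1) :
    ∃ (N : Subgroup G) (_ : N.Normal) (_ : N.FiniteIndex) (j p : ℕ),
      0 < j ∧ p.Prime ∧ orderOf ((g ^ j : G) : G ⧸ N) = p := by
  obtain ⟨N, hN, hfin, hgN⟩ := hG g hg
  have hne : orderOf (g : G ⧸ N) ≠ 1 := fun h =>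
    hgN ((QuotientGroup.eq_one_iff g).1 (orderOf_eq_one_iff.1 h))
  have hpos : 0 < orderOf (g : G ⧸ N) := orderOf_pos _
  obtain ⟨p, hp, hdvd⟩ := Nat.exists_prime_and_dvd hne
  exact ⟨N, hN, hfin, orderOf (g : G ⧸ N) / p, p, Nat.div_pos (Nat.le_of_dvd hpos hdvd) hp.pos,
    hp, orderOf_pow_orderOf_div hpos.ne' hdvd⟩

namespace IsLargeMelnikov

variable (H : IsLargeMelnikov G) (hG : ResiduallyFinite G)

include H hG

lemma exists_int_homOn_apply_pow_ne_zero (hg : g ≠ 1) :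
    ∃ j : ℕ, 0 < j ∧ ∃ L : Subgroup G, L.FiniteIndex ∧ g ^ j ∈ L ∧
      ∃ ψ ∈ HomOn ℤ L, ψ (g ^ j) ≠ 0 := by
  obtain ⟨N, _, _, j, p, hj, hp, horder⟩ := exists_orderOf_pow_prime_of_residuallyFinite hG hg
  have : Fact p.Prime := ⟨hp⟩
  obtain ⟨K, _, hgK, χ, hχ, hχg⟩ := exists_homOn_apply_ne_zero horder
  have hrank := finrank_map_restrict_zpowers_le_one (p := p) hgK
  obtain ⟨L, hL, hgL, ψ, hψ, hψχ⟩ := H.exists_int_homOn_forall_intCast_eq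
    ((Subgroup.zpowers_le (H := K)).2 hgK) (by linarith [H.three_le_presRank K]) hχ
  have hmem := Subgroup.mem_zpowers (g ^ j)
  refine ⟨j, hj, L, hL, hgL hmem, ψ, hψ, fun h0 => hχg ?_⟩
  rw [← hψχ _ hmem, h0, Int.cast_zero]

lemma eq_one_of_pow_eq_one {k : ℕ} (hk : k ≠ 0) (hgk : g ^ k = 1) : g = 1 := by
  by_contra hg
  obtain ⟨j, -, L, -, hgL, ψ, hψ, h0⟩ := H.exists_int_homOn_apply_pow_ne_zero hG hg
  have hmul := HomOn.map_pow hψ hgL k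
  rw [← pow_mul, mul_comm, pow_mul, hgk, one_pow, HomOn.map_one hψ, zero_eq_mul] at hmul
  exact hmul.elim (by exact_mod_cast hk) h0

end IsLargeMelnikov

end Torsion

section RelIndex

variable {G : Type*} [Group G] {A B N : Subgroup G} [N.Normal]

lemma relIndex_inf_eq_card_map (hB : B ≤ A) :
    (A ⊓ N).relIndex B = Nat.card (B.map (QuotientGroup.mk' N)) := by
  rw [← Subgroup.relIndex_ker, QuotientGroup.ker_mk', ← Subgroup.inf_relIndex_right (H := A ⊓ N),
    ← Subgroup.inf_relIndex_right (H := N), inf_right_comm, inf_eq_right.2 hB, inf_comm]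

lemma exists_relIndex_inf_eq_prime_pow [N.FiniteIndex] {p v : ℕ} [Fact p.Prime]
    (hv : p ^ v ∣ (A ⊓ N).relIndex A) :
    ∃ K : Subgroup G, N ≤ K ∧ (A ⊓ N).relIndex (A ⊓ K) = p ^ v := by
  rw [relIndex_inf_eq_card_map le_rfl] at hv
  obtain ⟨Q, hQ⟩ := Sylow.exists_subgroup_card_pow_prime p hv
  let Q' := Q.map (A.map (QuotientGroup.mk' N)).subtype
  have hle : Q' ≤ A.map (QuotientGroup.mk' N) := Subgroup.map_subtype_le Q
  refine ⟨Q'.comap (QuotientGroup.mk' N),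
    (QuotientGroup.ker_mk' N).ge.trans (Subgroup.ker_le_comap _ _), ?_⟩
  have hmap : (A ⊓ Q'.comap (QuotientGroup.mk' N)).map (QuotientGroup.mk' N) = Q' := by
    refine le_antisymm (Subgroup.map_le_iff_le_comap.2 inf_le_right) fun z hz => ?_
    obtain ⟨x, hx, rfl⟩ := hle hz
    exact ⟨x, ⟨hx, hz⟩, rfl⟩
  rw [relIndex_inf_eq_card_map inf_le_left, hmap, ← hQ]
  exact Subgroup.card_map_of_injective (Subgroup.subtype_injective _)

end RelIndex

section RankLeOne

variable {G : Type*} [Group G] {B N : Subgroup G} {φ : FreeGroup (Fin 2) →* G}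
  [N.Normal] [N.FiniteIndex] (H : IsLargeMelnikov G)

include H

lemma IsOpenIn.finrank_contHomOn_inf_add_pow {p : ℕ} [hp : Fact p.Prime] {v : ℕ}
    (h : IsOpenIn φ.range B) (hle : φ.range ⊓ N ≤ B)
    (hrel : (φ.range ⊓ N).relIndex B = p ^ v) :
    finrank (ZMod p) (ContHomOn (ZMod p) (φ.range ⊓ N)) + p ^ v =
      p ^ v * finrank (ZMod p) (ContHomOn (ZMod p) B) + 1 := by
  induction v generalizing B with
  | zero =>
    rw [pow_zero, Subgroup.relIndex_eq_one] at hrel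
    rw [le_antisymm hle hrel, pow_zero, one_mul]
  | succ v ih =>
    have hcard := (relIndex_inf_eq_card_map h.le).symm.trans hrel
    have : Nontrivial (B.map (QuotientGroup.mk' N)) := Finite.one_lt_card_iff_nontrivial.1 <|
      hcard ▸ Nat.one_lt_pow v.succ_ne_zero hp.out.one_lt
    obtain ⟨χ, hχ, hχ0, hker⟩ :=
      exists_homOn_of_map_nontrivial (QuotientGroup.mk' N) B (IsPGroup.of_card hcard)
    rw [QuotientGroup.ker_mk'] at hker
    have hχc : χ ∈ ContHomOn (ZMod p) B :=
      ⟨hχ, N, inferInstance, fun x hx hxN => (hker ⟨hx, hxN⟩).2⟩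
    have hle' : φ.range ⊓ N ≤ Melnikov.kerOn hχ := (le_inf hle inf_le_right).trans hker
    have hrel' : (φ.range ⊓ N).relIndex (Melnikov.kerOn hχ) = p ^ v := by
      have hmul := Subgroup.relIndex_mul_relIndex _ _ _ hle' (kerOn_le hχ)
      rw [Melnikov.relIndex_kerOn hχ hχ0, hrel, pow_succ] at hmul
      exact Nat.eq_of_mul_eq_mul_right hp.out.pos hmul
    have hih := ih (h.kerOn hχc) hle' hrel'
    have hstep := h.finrank_contHomOn_kerOn_add_prime H hχc hχ0
    zify at hih hstep ⊢
    linear_combination hih + (p : ℤ) ^ v * hstep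

lemma finrank_contHomOn_inf_modEq_one {p v : ℕ} [Fact p.Prime]
    (hv : p ^ v ∣ (φ.range ⊓ N).relIndex φ.range) :
    finrank (ZMod p) (ContHomOn (ZMod p) (φ.range ⊓ N)) ≡ 1 [MOD p ^ v] := by
  obtain ⟨K, hNK, hrel⟩ := exists_relIndex_inf_eq_prime_pow hv
  have hopen : IsOpenIn φ.range (φ.range ⊓ K) := ⟨K, Subgroup.finiteIndex_of_le hNK, rfl⟩
  have heq := hopen.finrank_contHomOn_inf_add_pow H (inf_le_inf_left _ hNK) hrel
  refine Nat.modEq_iff_dvd.2 ⟨1 - finrank (ZMod p) (ContHomOn (ZMod p) (φ.range ⊓ K)), ?_⟩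
  zify at heq
  push_cast
  linear_combination -heq

-- The rank of the extendable integral characters equals the mod `p` ranks for all primes `p`, so
-- it is congruent to `1` modulo the index, which bounds it.
lemma finrank_extendableHomOn_le_one
    (hmax : ∀ B, IsOpenIn φ.range B → ∀ (p : ℕ) [Fact p.Prime],
      finrank (ZMod p) (ContHomOn (ZMod p) B) ≤ B.relIndex φ.range) :
    finrank ℤ (ExtendableHomOn ℤ (φ.range ⊓ N)) ≤ 1 := by
  have hopen : IsOpenIn φ.range (φ.range ⊓ N) := ⟨N, inferInstance, rfl⟩
  have hrank (p : ℕ) [Fact p.Prime] :=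
    hopen.finrank_contHomOn_eq_finrank_extendableHomOn (p := p) H (hmax _ hopen p)
  have hle := (hrank 2).ge.trans (hmax _ hopen 2)
  have hdvd : (φ.range ⊓ N).relIndex φ.range ∣
      ((1 : ℕ) - finrank ℤ (ExtendableHomOn ℤ (φ.range ⊓ N)) : ℤ).natAbs := by
    refine (Nat.dvd_iff_prime_pow_dvd_dvd _ _).2 fun p v hp hv => ?_
    have : Fact p.Prime := ⟨hp⟩
    have hmod := finrank_contHomOn_inf_modEq_one H hv
    rw [hrank p] at hmod
    exact Int.natCast_dvd.1 (Nat.modEq_iff_dvd.1 hmod)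
  by_contra! hlt
  have := Nat.le_of_dvd (by omega) hdvd
  omega

end RankLeOne

/-! ### Groups with a finite-index subgroup embedding in the integers -/

section VirtuallyCyclic

variable {A : Type*} [Group A]

lemma isFreeGroup_of_injective_int (f : A →* Multiplicative ℤ) (hf : Function.Injective f) :
    IsFreeGroup A := by
  have : IsFreeGroup (Multiplicative ℤ) :=
    IsFreeGroup.ofMulEquiv (FreeGroup.mulEquivIntOfUnique (α := Unit))
  exact IsFreeGroup.ofMulEquiv (MonoidHom.ofInjective hf).symm

variable (hA : ∀ (x : A) (k : ℕ), k ≠ 0 → x ^ k = 1 → x = 1) {N : Subgroup A} [hN : N.Normal]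
  [hfin : N.FiniteIndex] {θ : N →* Multiplicative ℤ} (hθ : Function.Injective θ)

include hA hθ

-- Any two elements of `N` have a common power, so an element of `A` centralizes a nontrivial power
-- of each element of `N`, and hence that element.
lemma le_center_of_injective_int : N ≤ Subgroup.center A := by
  refine fun y hy => Subgroup.mem_center_iff.2 fun x => ?_
  rcases eq_or_ne x 1 with rfl | hx
  · rw [one_mul, mul_one]
  let u : N := ⟨x ^ N.index, N.pow_index_mem x⟩
  let y' : N := ⟨y, hy⟩
  let z : N := ⟨x * y * x⁻¹, hN.conj_mem y hy x⟩
  have hu : (θ u).toAdd ≠ 0 := fun h0 => hx <| hA x _ hfin.index_ne_zero <|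
    congrArg Subtype.val ((injective_iff_map_eq_one θ).1 hθ u (Multiplicative.toAdd.injective h0))
  have hyu : y' ^ (θ u).toAdd = u ^ (θ y').toAdd := hθ <| Multiplicative.toAdd.injective <| by
    simp only [map_zpow, toAdd_zpow, smul_eq_mul, mul_comm]
  have hcomm : Commute x ((u : A) ^ (θ y').toAdd) :=
    ((Commute.refl x).pow_right N.index).zpow_right _
  have hzy : z ^ (θ u).toAdd = y' ^ (θ u).toAdd := Subtype.ext <| by
    change (x * y * x⁻¹) ^ (θ u).toAdd = y ^ (θ u).toAdd
    have hyu' : y ^ (θ u).toAdd = (u : A) ^ (θ y').toAdd := congrArg Subtype.val hyu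
    rw [conj_zpow, hyu', hcomm.eq, mul_inv_cancel_right]
  have hθzy := congrArg (fun w => (θ w).toAdd) hzy
  simp only [map_zpow, toAdd_zpow, smul_eq_mul] at hθzy
  have hz : z = y' := hθ (Multiplicative.toAdd.injective (mul_left_cancel₀ hu hθzy))
  exact mul_inv_eq_iff_eq_mul.1 (congrArg Subtype.val hz)

-- The transfer to a central subgroup is a power map, hence injective.
lemma isFreeGroup_of_finiteIndex_injective_int : IsFreeGroup A := by
  have hcenter := le_center_of_injective_int hA hθ
  have htransfer (x : A) := MonoidHom.transfer_eq_pow θ x fun k g hg => by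
    rw [← mul_right_inj, ← (hcenter hg).comm, mul_inv_cancel_right]
  refine isFreeGroup_of_injective_int (MonoidHom.transfer θ)
    ((injective_iff_map_eq_one _).2 fun x hx => hA x _ hfin.index_ne_zero ?_)
  rw [htransfer] at hx
  exact congrArg Subtype.val ((injective_iff_map_eq_one θ).1 hθ _ hx)

end VirtuallyCyclic

/-! ### The dichotomy for two-generator subgroups -/

section Main

lemma apply_mul_apply_comm_of_finrank_le_one {X k : Type*} [CommRing k] [IsDomain k]
    {M : Submodule k (X → k)} [Module.Finite k M] (hM : finrank k M ≤ 1) {f g : X → k}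
    (hf : f ∈ M) (hg : g ∈ M) (x y : X) : f x * g y = f y * g x := by
  have hdep : ¬ LinearIndependent k ![(⟨f, hf⟩ : M), ⟨g, hg⟩] := fun h => by
    have := h.fintype_card_le_finrank
    rw [Fintype.card_fin] at this
    lia
  simp only [LinearIndependent.pair_iff, not_forall] at hdep
  obtain ⟨a, b, hab, hne⟩ := hdep
  have heval (z : X) : a * f z + b * g z = 0 := congrFun (congrArg Subtype.val hab) z
  have ha : a * (f x * g y - f y * g x) = 0 := by
    linear_combination g y * heval x - g x * heval y
  have hb : b * (f x * g y - f y * g x) = 0 := by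
    linear_combination f x * heval y - f y * heval x
  by_contra hdet
  exact hne ⟨(mul_eq_zero.1 ha).resolve_right (sub_ne_zero.2 hdet),
    (mul_eq_zero.1 hb).resolve_right (sub_ne_zero.2 hdet)⟩

variable {G : Type*} [Group G] {φ : FreeGroup (Fin 2) →* G} (H : IsLargeMelnikov G)
  (hG : ResiduallyFinite G)

include H hG

lemma eq_one_of_apply_eq_zero
    (hmax : ∀ B, IsOpenIn φ.range B → ∀ (p : ℕ) [Fact p.Prime],
      finrank (ZMod p) (ContHomOn (ZMod p) B) ≤ B.relIndex φ.range)
    {L : Subgroup G} [L.FiniteIndex] {ψ : G → ℤ} (hψ : ψ ∈ HomOn ℤ L) {g : G}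
    (hg : g ∈ φ.range ⊓ L) (hψg : ψ g ≠ 0) {x : G} (hx : x ∈ φ.range ⊓ L) (hψx : ψ x = 0) :
    x = 1 := by
  by_contra hx1
  obtain ⟨j, -, L', _, hxL', ψ', hψ', hψ'x⟩ := H.exists_int_homOn_apply_pow_ne_zero hG hx1
  let N := (L ⊓ L').normalCore
  have hN : N ≤ L ⊓ L' := Subgroup.normalCore_le _
  have hNindex : (N.index : ℤ) ≠ 0 := by exact_mod_cast Subgroup.FiniteIndex.index_ne_zero
  have hBL : φ.range ⊓ N ≤ L := inf_le_right.trans (hN.trans inf_le_left)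
  have hBL' : φ.range ⊓ N ≤ L' := inf_le_right.trans (hN.trans inf_le_right)
  have hopen : IsOpenIn φ.range (φ.range ⊓ N) := ⟨N, inferInstance, rfl⟩
  have := extendableHomOn_finite (k := ℤ) hopen.fg
  have hdet := apply_mul_apply_comm_of_finrank_le_one
    (finrank_extendableHomOn_le_one H (N := N) hmax)
    (restrict_mem_extendableHomOn hBL hψ) (restrict_mem_extendableHomOn hBL' hψ')
    (g ^ N.index) ((x ^ j) ^ N.index)
  have hgB : g ^ N.index ∈ φ.range ⊓ N := ⟨pow_mem hg.1 _, N.pow_index_mem g⟩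
  have hxB : (x ^ j) ^ N.index ∈ φ.range ⊓ N :=
    ⟨pow_mem (pow_mem hx.1 _) _, N.pow_index_mem _⟩
  rw [restrict_of_mem hgB, restrict_of_mem hxB, restrict_of_mem hxB, HomOn.map_pow hψ hg.2,
    HomOn.map_pow hψ' hxL', HomOn.map_pow hψ (pow_mem hx.2 _), HomOn.map_pow hψ hx.2, hψx,
    mul_zero, mul_zero, zero_mul] at hdet
  exact mul_ne_zero (mul_ne_zero hNindex hψg) (mul_ne_zero hNindex hψ'x) hdet

lemma isFreeGroup_range_of_finrank_contHomOn_le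
    (hmax : ∀ B, IsOpenIn φ.range B → ∀ (p : ℕ) [Fact p.Prime],
      finrank (ZMod p) (ContHomOn (ZMod p) B) ≤ B.relIndex φ.range) : IsFreeGroup φ.range := by
  rcases subsingleton_or_nontrivial φ.range with hsub | hnontriv
  · exact isFreeGroup_of_injective_int 1 (Function.injective_of_subsingleton _)
  obtain ⟨⟨g, hgA⟩, hg⟩ := exists_ne (1 : φ.range)
  obtain ⟨j, -, L, _, hgL, ψ, hψ, hψg⟩ :=
    H.exists_int_homOn_apply_pow_ne_zero hG fun h => hg (Subtype.ext h)
  let N := L.normalCore.subgroupOf φ.range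
  let θ : N →* Multiplicative ℤ := (HomOn.toMonoidHom hψ).comp <|
    (Subgroup.inclusion L.normalCore_le).comp (φ.range.subtype.subgroupComap L.normalCore)
  have hθ : Function.Injective θ := (injective_iff_map_eq_one θ).2 fun x hx =>
    Subtype.ext <| Subtype.ext <| eq_one_of_apply_eq_zero H hG hmax hψ ⟨pow_mem hgA j, hgL⟩ hψg
      ⟨x.1.2, L.normalCore_le x.2⟩ hx
  refine isFreeGroup_of_finiteIndex_injective_int (fun x k hk hxk => ?_) hθ
  exact Subtype.ext (H.eq_one_of_pow_eq_one hG hk (congrArg Subtype.val hxk))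

theorem isFreeGroup_range_of_isLargeMelnikov (φ : FreeGroup (Fin 2) →* G) :
    IsFreeGroup φ.range := by
  by_cases hmax : ∀ B, IsOpenIn φ.range B → ∀ (p : ℕ) [Fact p.Prime],
      finrank (ZMod p) (ContHomOn (ZMod p) B) ≤ B.relIndex φ.range
  · exact isFreeGroup_range_of_finrank_contHomOn_le H hG hmax
  · push Not at hmax
    obtain ⟨B, hB, p, hp, hlt⟩ := hmax
    have hinj := hB.injective_of_finrank_contHomOn_eq H
      (le_antisymm (hB.finrank_contHomOn_le (p := p)) hlt)
    exact IsFreeGroup.ofMulEquiv (MonoidHom.ofInjective hinj)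

end Main

/-! ### One-relator groups with at least three generators -/

section Hypotheses

variable {G : Type*} [Group G] {m n : ℕ}

/-- The retraction of the free group of rank `m + 1` onto that of rank `m` killing the last
generator. -/
noncomputable def killLast (m : ℕ) : FreeGroup (Fin (m + 1)) →* FreeGroup (Fin m) :=
  FreeGroup.lift (Fin.snoc FreeGroup.of 1)

lemma killLast_castSucc (i : Fin m) :
    killLast m (FreeGroup.of i.castSucc) = FreeGroup.of i := by
  rw [killLast, FreeGroup.lift_apply_of, Fin.snoc_castSucc]

lemma killLast_last : killLast m (FreeGroup.of (Fin.last m)) = 1 := by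
  rw [killLast, FreeGroup.lift_apply_of, Fin.snoc_last]

lemma killLast_surjective : Function.Surjective (killLast m) := by
  have h : (killLast m).comp (FreeGroup.map Fin.castSucc) = MonoidHom.id _ := by
    ext i
    rw [MonoidHom.comp_apply, FreeGroup.map.of, killLast_castSucc, MonoidHom.id_apply]
  exact fun x => ⟨_, DFunLike.congr_fun h x⟩

lemma ker_killLast : (killLast m).ker = Subgroup.normalClosure {FreeGroup.of (Fin.last m)} := by
  refine le_antisymm (fun x hx => ?_)
    (Subgroup.normalClosure_le_normal (Set.singleton_subset_iff.2 killLast_last))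
  let q := QuotientGroup.mk' (Subgroup.normalClosure {FreeGroup.of (Fin.last m)})
  have hlast : q (FreeGroup.of (Fin.last m)) = 1 :=
    (QuotientGroup.eq_one_iff _).2 (Subgroup.subset_normalClosure rfl)
  have hq : (q.comp (FreeGroup.map Fin.castSucc)).comp (killLast m) = q := by
    refine FreeGroup.ext_hom _ _ fun i => ?_
    induction i using Fin.lastCases with
    | last => rw [MonoidHom.comp_apply, killLast_last, map_one, hlast]
    | cast i => rw [MonoidHom.comp_apply, killLast_castSucc, MonoidHom.comp_apply, FreeGroup.map.of]
  have hqx := DFunLike.congr_fun hq x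
  rw [MonoidHom.comp_apply, MonoidHom.mem_ker.1 hx, map_one] at hqx
  exact (QuotientGroup.eq_one_iff x).1 hqx.symm

-- A trivial relator is replaced by a redundant generator.
lemma exists_hasOneRelatorPresentation_range {r : FreeGroup (Fin m)} {π : FreeGroup (Fin m) →* G}
    (hπ : π.ker = Subgroup.normalClosure {r}) :
    ∃ m' ≥ m, HasOneRelatorPresentation π.range m' := by
  by_cases hr : r = 1
  · have hbot : π.ker = ⊥ := by rw [hπ, hr, Subgroup.normalClosure_eq_bot_iff]
    refine ⟨m + 1, m.le_succ, FreeGroup.of (Fin.last m), π.comp (killLast m), ?_, ?_,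
      FreeGroup.of_ne_one _⟩
    · rw [MonoidHom.range_comp, MonoidHom.range_eq_top.2 killLast_surjective,
        ← MonoidHom.range_eq_map]
    · rw [← MonoidHom.comap_ker, hbot, MonoidHom.comap_bot, ker_killLast]
  · exact ⟨m, le_rfl, r, π, rfl, hπ, hr⟩

lemma exists_hasOneRelatorPresentation {K : Subgroup G} (hK : IsOneRelatorGroup K) :
    ∃ m, HasOneRelatorPresentation K m := by
  obtain ⟨m, r, ⟨e⟩⟩ := hK
  let π := K.subtype.comp (e.symm.toMonoidHom.comp (PresentedGroup.mk {r}))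
  have hrange : π.range = K := by
    rw [MonoidHom.range_comp, MonoidHom.range_eq_top.2
      (e.symm.surjective.comp (PresentedGroup.mk_surjective _)), ← MonoidHom.range_eq_map,
      Subgroup.range_subtype]
  have hker : π.ker = Subgroup.normalClosure {r} := by
    ext x
    change ((e.symm (PresentedGroup.mk {r} x) : K) : G) = 1 ↔ _
    rw [OneMemClass.coe_eq_one, MulEquiv.map_eq_one_iff, PresentedGroup.mk_eq_one_iff]
  obtain ⟨m', -, h⟩ := exists_hasOneRelatorPresentation_range hker
  exact ⟨m', hrange ▸ h⟩

lemma index_add_two_le (hn : 3 ≤ n) (h : HasOneRelatorPresentation (⊤ : Subgroup G) n)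
    {K : Subgroup G} [hK : K.FiniteIndex] (hm : HasOneRelatorPresentation K m) :
    K.index + 2 ≤ m := by
  obtain ⟨r, π, h⟩ := h
  have hindex : (K.comap π).index = K.index :=
    Subgroup.index_comap_of_surjective K (MonoidHom.range_eq_top.1 h.range_eq)
  have heuler := finrank_invHom_comap (k := ℚ) h le_top hm
  have hle := finrank_invHom_le_index (k := ℚ) (B := K.comap π) h.ker_eq
  rw [hindex] at heuler hle
  have := Nat.mul_le_mul_right K.index hn
  lia

theorem isLargeMelnikov_quotient_normalClosure {n : ℕ} (hn : 3 ≤ n) (w : FreeGroup (Fin n))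
    (hmel : ∀ H : Subgroup (FreeGroup (Fin n) ⧸ Subgroup.normalClosure {w}),
      H.FiniteIndex → IsOneRelatorGroup H) :
    IsLargeMelnikov (FreeGroup (Fin n) ⧸ Subgroup.normalClosure {w}) := by
  obtain ⟨n', hn', h⟩ := exists_hasOneRelatorPresentation_range
    (QuotientGroup.ker_mk' (Subgroup.normalClosure {w}))
  rw [MonoidHom.range_eq_top.2 (QuotientGroup.mk'_surjective _)] at h
  exact ⟨fun K hK => exists_hasOneRelatorPresentation (hmel K hK),
    fun _ _ _ => index_add_two_le (hn.trans hn') h⟩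

end Hypotheses

end Melnikov

/-- A residually finite one-relator group on `n ≥ 3` generators all of whose finite-index
subgroups are one-relator groups is `2`-free. -/
theorem stmt4 (n : ℕ) (hn : 3 ≤ n) (w : FreeGroup (Fin n))
    (hres : ResiduallyFinite (FreeGroup (Fin n) ⧸ Subgroup.normalClosure {w}))
    (hmel : ∀ H : Subgroup (FreeGroup (Fin n) ⧸ Subgroup.normalClosure {w}),
      H.FiniteIndex → IsOneRelatorGroup H) :
    ∀ a b : FreeGroup (Fin n) ⧸ Subgroup.normalClosure {w},
      IsFreeGroup (Subgroup.closure {a, b}) := by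
  intro a b
  have H := Melnikov.isLargeMelnikov_quotient_normalClosure hn w hmel
  have hclosure : (FreeGroup.lift ![a, b]).range = Subgroup.closure {a, b} := by
    rw [FreeGroup.range_lift_eq_closure, Matrix.range_cons_cons_empty]
  exact hclosure ▸ Melnikov.isFreeGroup_range_of_isLargeMelnikov H hres (FreeGroup.lift ![a, b])
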